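/- arXiv:1304.7216 — 6 statements merged into one kernel-verified Lean document; each statement's English description precedes it below -/
import Mathlib

section
/- Let G be an infinite, connected, locally finite, quasi-transitive simple graph. Then there exists a real number μ with 1 ≤ μ < ∞ such that for every vertex v of G, σ_n(v)^{1/n} → μ as n → ∞. -/
open Filter

/-- The number of `n`-step self-avoiding walks in `G` starting at `v`:
walks of length `n` from `v` (to an arbitrary endpoint) all of whose vertices are distinct. -/
noncomputable def sawCount {V : Type*} (G : SimpleGraph V) (v : V) (n : ℕ) : ℕ :=
  Nat.card {p : Σ w : V, G.Walk v w // p.2.IsPath ∧ p.2.length = n}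

def sawSet {V : Type*} (G : SimpleGraph V) (v : V) (n : ℕ) : Set (List V) :=
  {l | l.length = n + 1 ∧ l.head? = some v ∧ l.IsChain G.Adj ∧ l.Nodup}

theorem exists_walk_of_list {V : Type*} (G : SimpleGraph V) (l : List V) :
    ∀ v, (v :: l).IsChain G.Adj → ∃ w, ∃ p : G.Walk v w, p.support = v :: l := by
  induction l with
  | nil => intro v _; exact ⟨v, .nil, rfl⟩
  | cons a l ih =>
    intro v h
    rw [List.isChain_cons_cons] at h
    obtain ⟨w, p, hp⟩ := ih a h.2
    exact ⟨w, .cons h.1 p, by simp [hp]⟩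

theorem sawCount_eq {V : Type*} (G : SimpleGraph V) (v : V) (n : ℕ) :
    sawCount G v n = (sawSet G v n).ncard := by
  unfold sawCount
  rw [← Nat.card_coe_set_eq]
  refine Nat.card_eq_of_bijective
    (fun p => ⟨p.1.2.support, ?_, ?_, ?_, ?_⟩) ⟨?_, ?_⟩
  · simp [p.2.2]
  · rw [← SimpleGraph.Walk.cons_tail_support]; rfl
  · exact p.1.2.isChain_adj_support
  · exact p.2.1.support_nodup
  · rintro ⟨⟨w, p⟩, hp⟩ ⟨⟨w', p'⟩, hp'⟩ h
    have : w = w' := by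
      have h1 := List.getLast?_eq_some_getLast p.support_ne_nil
      have h2 := List.getLast?_eq_some_getLast p'.support_ne_nil
      rw [p.getLast_support] at h1
      rw [p'.getLast_support] at h2
      have h3 : p.support = p'.support := congrArg Subtype.val h
      rw [h3, h2] at h1
      simpa using h1.symm
    subst this
    have := SimpleGraph.Walk.ext_support (congrArg Subtype.val h)
    subst this
    rfl
  · rintro ⟨l, h1, h2, h3, h4⟩
    cases l with
    | nil => simp at h1
    | cons a l =>
      simp only [List.head?_cons, Option.some.injEq] at h2
      subst h2
      obtain ⟨w, p, hp⟩ := exists_walk_of_list G l a h3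
      refine ⟨⟨⟨w, p⟩, ?_, ?_⟩, ?_⟩
      · rw [SimpleGraph.Walk.isPath_def, hp]; exact h4
      · have := p.length_support
        rw [hp, h1] at this
        simpa using this.symm
      · exact Subtype.ext hp

theorem sawSet_finite {V : Type*} (G : SimpleGraph V)
    (hlf : ∀ v : V, (G.neighborSet v).Finite) (n : ℕ) : ∀ v, (sawSet G v n).Finite := by
  induction n with
  | zero =>
    intro v
    refine (Set.finite_singleton [v]).subset ?_
    rintro l ⟨h1, h2, h3, h4⟩
    obtain ⟨a, rfl⟩ := List.length_eq_one_iff.1 (by simpa using h1)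
    simpa using h2
  | succ n ih =>
    intro v
    refine (((hlf v).biUnion (fun w _ => ih w)).image (fun l => v :: l)).subset ?_
    rintro l ⟨h1, h2, h3, h4⟩
    match l, h1, h2, h3, h4 with
    | a :: b :: l, h1, h2, h3, h4 =>
      simp only [List.head?_cons, Option.some.injEq] at h2
      subst h2
      rw [List.isChain_cons_cons] at h3
      refine ⟨b :: l, Set.mem_biUnion (x := b) h3.1 ⟨?_, rfl, h3.2, h4.of_cons⟩, rfl⟩
      simpa using h1

theorem sawSet_take {V : Type*} {G : SimpleGraph V} {v : V} {n m : ℕ} (h : m ≤ n) {l : List V}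
    (hl : l ∈ sawSet G v n) : l.take (m+1) ∈ sawSet G v m := by
  obtain ⟨h1, h2, h3, h4⟩ := hl
  refine ⟨by simp; omega, by rw [List.head?_take]; simpa using h2, h3.take _, h4.sublist (List.take_sublist _ _)⟩

theorem sawSet_drop {V : Type*} {G : SimpleGraph V} {v w : V} {n m : ℕ} (h : m ≤ n) {l : List V}
    (hl : l ∈ sawSet G v n) (hw : l[m]? = some w) : l.drop m ∈ sawSet G w (n - m) := by
  obtain ⟨h1, h2, h3, h4⟩ := hl
  refine ⟨by simp; omega, by rw [List.head?_drop]; exact hw, h3.drop _, h4.sublist (List.drop_sublist _ _)⟩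

theorem list_eq_of_take_drop {V : Type*} {l l' : List V} {m : ℕ}
    (h : l.take (m+1) = l'.take (m+1)) (h' : l.drop m = l'.drop m) : l = l' := by
  rw [← List.take_append_drop m l, ← List.take_append_drop m l', h']
  congr 1
  have := congrArg (List.take m) h
  simp only [List.take_take] at this
  simpa using this

theorem saw_submul {V : Type*} (G : SimpleGraph V)
    (hlf : ∀ v : V, (G.neighborSet v).Finite) (v : V) (m n B : ℕ)
    (hB : ∀ u, sawCount G u n ≤ B) : sawCount G v (m + n) ≤ sawCount G v m * B := by
  classical
  simp only [sawCount_eq] at *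
  have f1 := sawSet_finite G hlf (m+n) v
  have f2 := sawSet_finite G hlf m v
  rw [Set.ncard_eq_toFinset_card _ f1, Set.ncard_eq_toFinset_card _ f2, mul_comm]
  refine (Finset.card_le_mul_card_image (f := List.take (m+1)) _ B ?_).trans
    (Nat.mul_le_mul_left _ (Finset.card_le_card ?_))
  · intro a ha
    obtain ⟨l0, hl0, rfl⟩ := Finset.mem_image.1 ha
    rw [Set.Finite.mem_toFinset] at hl0
    have hm : m < l0.length := by have := hl0.1; omega
    have f3 := sawSet_finite G hlf n l0[m]
    refine le_trans ?_ (hB l0[m])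
    rw [Set.ncard_eq_toFinset_card _ f3]
    refine Finset.card_le_card_of_injOn (List.drop m) ?_ ?_
    · intro l hl
      simp only [Finset.coe_filter, Set.Finite.mem_toFinset, Set.mem_ofPred_eq] at hl
      have key := sawSet_drop (w := l0[m]) (Nat.le_add_right m n) hl.1 (by
        have := congrArg (fun l => l[m]?) hl.2
        simp only [List.getElem?_take] at this
        simpa [hm] using this)
      simpa using key
    · intro l hl l' hl' h
      simp only [Finset.coe_filter, Set.Finite.mem_toFinset, Set.mem_ofPred_eq] at hl hl'
      exact list_eq_of_take_drop (hl.2.trans hl'.2.symm) h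
  · intro a ha
    obtain ⟨l0, hl0, rfl⟩ := Finset.mem_image.1 ha
    rw [Set.Finite.mem_toFinset] at *
    exact sawSet_take (Nat.le_add_right m n) hl0

theorem saw_invariant {V : Type*} (G : SimpleGraph V)
    (hlf : ∀ v : V, (G.neighborSet v).Finite) (γ : G ≃g G) (v : V) (n : ℕ) :
    sawCount G v n ≤ sawCount G (γ v) n := by
  simp only [sawCount_eq]
  refine Set.ncard_le_ncard_of_injOn (List.map γ) ?_ ?_ (sawSet_finite G hlf n _)
  · rintro l ⟨h1, h2, h3, h4⟩
    refine ⟨by simpa using h1, by simp [h2], ?_, h4.map γ.injective⟩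
    rw [List.isChain_map]
    exact h3.imp (fun a b h => γ.map_adj_iff.2 h)
  · intro a _ b _ h
    exact (List.map_injective_iff.2 γ.injective) h

theorem saw_adj {V : Type*} (G : SimpleGraph V)
    (hlf : ∀ v : V, (G.neighborSet v).Finite) (u v : V) (huv : G.Adj u v) (n : ℕ) :
    sawCount G u n ≤ sawCount G v (n+1) +
      ∑ k ∈ Finset.range (n+1), sawCount G v k * sawCount G v (n-k) := by
  classical
  simp only [sawCount_eq]
  have f := sawSet_finite G hlf
  have hsub : sawSet G u n ⊆ {l | l ∈ sawSet G u n ∧ v ∉ l} ∪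
      ⋃ k ∈ Finset.range (n+1), {l | l ∈ sawSet G u n ∧ l[k]? = some v} := by
    intro l hl
    by_cases hv : v ∈ l
    · right
      obtain ⟨k, hk⟩ := List.mem_iff_getElem?.1 hv
      have : k < l.length := by
        by_contra hc
        simp [List.getElem?_eq_none (not_lt.1 hc)] at hk
      have h1 := hl.1
      exact Set.mem_biUnion (x := k) (by simp; omega) ⟨hl, hk⟩
    · exact Or.inl ⟨hl, hv⟩
  have fin : ({l | l ∈ sawSet G u n ∧ v ∉ l} ∪
      ⋃ k ∈ Finset.range (n+1), {l | l ∈ sawSet G u n ∧ l[k]? = some v}).Finite := by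
    refine (f n u).subset ?_
    intro l hl
    simp only [Set.mem_union, Set.mem_iUnion, Set.mem_ofPred_eq] at hl
    rcases hl with hl | ⟨_, _, hl⟩
    · exact hl.1
    · exact hl.1
  refine (Set.ncard_le_ncard hsub fin).trans ((Set.ncard_union_le _ _).trans (add_le_add ?_ ?_))
  · refine Set.ncard_le_ncard_of_injOn (List.cons v) ?_ ?_ (f _ _)
    · rintro l ⟨⟨h1, h2, h3, h4⟩, h5⟩
      refine ⟨by simp [h1], rfl, ?_, List.nodup_cons.2 ⟨h5, h4⟩⟩
      cases l with
      | nil => simp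
      | cons a l =>
        simp only [List.head?_cons, Option.some.injEq] at h2
        subst h2
        exact List.isChain_cons_cons.2 ⟨huv.symm, h3⟩
    · intro a _ b _ h
      simpa using h
  · refine (Finset.set_ncard_biUnion_le _ _).trans (Finset.sum_le_sum fun k hk => ?_)
    rw [← Set.ncard_prod]
    have hkn : k ≤ n := by simp at hk; omega
    refine Set.ncard_le_ncard_of_injOn (fun l => ((l.take (k+1)).reverse, l.drop k)) ?_ ?_
      ((f _ _).prod (f _ _))
    · rintro l ⟨hl, hv⟩
      refine ⟨?_, sawSet_drop hkn hl hv⟩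
      obtain ⟨h1, h2, h3, h4⟩ := sawSet_take hkn hl
      refine ⟨by simpa using h1, ?_, ?_, List.nodup_reverse.2 h4⟩
      · rw [List.head?_reverse, List.getLast?_eq_getElem?, h1]
        simpa using hv
      · rw [List.isChain_reverse]
        exact h3.imp (fun a b h => h.symm)
    · intro a _ b _ h
      simp only [Prod.mk.injEq, List.reverse_inj] at h
      exact list_eq_of_take_drop h.1 h.2

theorem saw_pos {V : Type*} (G : SimpleGraph V) [Infinite V]
    (hconn : G.Connected)
    (hlf : ∀ v : V, (G.neighborSet v).Finite) (v : V) (n : ℕ) : 1 ≤ sawCount G v n := by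
  classical
  rw [sawCount_eq]
  by_contra hc
  have hemp : sawSet G v n = ∅ := by
    rw [← Set.ncard_eq_zero (sawSet_finite G hlf n v)]; omega
  have hfin : (⋃ k ∈ Finset.range n, (fun l : List V => l.getLast?) '' sawSet G v k).Finite :=
    (Finset.finite_toSet _).biUnion fun k _ => (sawSet_finite G hlf k v).image _
  refine Set.infinite_univ (α := V) ((hfin.preimage (Option.some_injective V).injOn).subset ?_)
  intro w _
  obtain ⟨p, hp⟩ := (hconn v w).exists_isPath
  have hmem : p.support ∈ sawSet G v p.length := by
    refine ⟨p.length_support, ?_, p.isChain_adj_support, hp.support_nodup⟩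
    rw [← SimpleGraph.Walk.cons_tail_support]; rfl
  have hlt : p.length < n := by
    by_contra h
    have := sawSet_take (not_lt.1 h) hmem
    rw [hemp] at this
    exact this
  refine Set.mem_biUnion (x := p.length) (by simpa using hlt) ⟨_, hmem, ?_⟩
  show p.support.getLast? = some w
  rw [List.getLast?_eq_some_getLast p.support_ne_nil, p.getLast_support]

theorem growth_lemma {V : Type*} (f : V → ℕ → ℝ) (h0 : ∀ v n, 0 ≤ f v n)
    (hsub : ∀ v m n B, (∀ u, f u n ≤ B) → f v (m + n) ≤ f v m * B)
    (W : Finset V) (hW : ∀ v, ∃ w ∈ W, ∀ n, f v n = f w n) (R : ℝ) (hR : 0 < R)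
    (h : ∀ w ∈ W, ∃ m, 1 ≤ m ∧ f w m ≤ R ^ m) :
    ∃ C : ℝ, 0 < C ∧ ∀ n v, f v n ≤ C * R ^ n := by
  choose! m hm1 hm2 using h
  set N := W.sup m with hN
  have hnn : ∀ w n, 0 ≤ f w n / R ^ n := fun w n => div_nonneg (h0 w n) (by positivity)
  set C : ℝ := ∑ w ∈ W, ∑ n ∈ Finset.range N, f w n / R ^ n + 1 with hC
  have hCpos : 0 < C :=
    add_pos_of_nonneg_of_pos (Finset.sum_nonneg fun w _ => Finset.sum_nonneg fun n _ => hnn w n) one_pos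
  refine ⟨C, hCpos, ?_⟩
  intro n
  induction n using Nat.strong_induction_on with
  | _ n ih =>
  intro v
  obtain ⟨w, hw, hvw⟩ := hW v
  rw [hvw]
  by_cases hn : n < N
  · have h1 : f w n / R ^ n ≤ ∑ n ∈ Finset.range N, f w n / R ^ n :=
      Finset.single_le_sum (f := fun n => f w n / R ^ n) (fun n _ => hnn w n) (Finset.mem_range.2 hn)
    have h2 : ∑ n ∈ Finset.range N, f w n / R ^ n ≤ ∑ w ∈ W, ∑ n ∈ Finset.range N, f w n / R ^ n :=
      Finset.single_le_sum (f := fun w => ∑ n ∈ Finset.range N, f w n / R ^ n)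
        (fun w _ => Finset.sum_nonneg fun n _ => hnn w n) hw
    rw [← div_le_iff₀ (by positivity)]
    linarith
  · have hmN : m w ≤ N := Finset.le_sup (f := m) hw
    have h1 := hm1 w hw
    have h2 := ih (n - m w) (by omega)
    have h3 := hsub w (m w) (n - m w) _ h2
    rw [Nat.add_sub_cancel' (by omega)] at h3
    refine h3.trans ?_
    calc f w (m w) * (C * R ^ (n - m w)) ≤ R ^ (m w) * (C * R ^ (n - m w)) := by
          gcongr; exact hm2 w hw
      _ = C * (R ^ (m w) * R ^ (n - m w)) := by ring
      _ = C * R ^ n := by rw [← pow_add, Nat.add_sub_cancel' (by omega)]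

/-- Moving a lower bound to a neighbour. -/
theorem step_lemma {V : Type*} (f : V → ℕ → ℝ) (h0 : ∀ v n, 0 ≤ f v n)
    (hsub : ∀ v m n B, (∀ u, f u n ≤ B) → f v (m + n) ≤ f v m * B)
    (u v : V) (hadj : ∀ n, f u n ≤ f v (n + 1) + ∑ k ∈ Finset.range (n + 1), f v k * f v (n - k))
    (μ : ℝ) (hμ : 0 < μ)
    (hup : ∀ R, μ < R → ∃ C : ℝ, 0 < C ∧ ∀ n v, f v n ≤ C * R ^ n)
    (hu : ∀ q : ℝ, 0 < q → q < 1 → ∃ c : ℝ, 0 < c ∧ ∀ n, c * (μ * q) ^ n ≤ f u n) :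
    ∀ q : ℝ, 0 < q → q < 1 → ∃ c : ℝ, 0 < c ∧ ∀ n, c * (μ * q) ^ n ≤ f v n := by
  intro q hq0 hq1
  obtain ⟨p, hp0, hp1, hpq⟩ : ∃ p : ℝ, 0 < p ∧ p < 1 ∧ p ^ 4 = q := by
    refine ⟨√(√q), by positivity, ?_, ?_⟩
    · rw [Real.sqrt_lt' one_pos, Real.sqrt_lt' (by norm_num)]; simpa using hq1
    · have : √(√q) ^ 4 = (√(√q) ^ 2) ^ 2 := by ring
      rw [this, Real.sq_sqrt (by positivity), Real.sq_sqrt hq0.le]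
  obtain ⟨C, hC, hup⟩ := hup (μ / p) (by rw [lt_div_iff₀ hp0]; nlinarith)
  obtain ⟨c, hc, hlo⟩ := hu p hp0 hp1
  set R := μ / p with hR
  have hR0 : 0 < R := by positivity
  have hsub2 : ∀ m j, f v (m + j) ≤ f v m * (C * R ^ j) := fun m j => hsub v m j _ (hup j)
  set K := C * R + C ^ 2 with hK
  have hKpos : 0 < K := by positivity
  -- main inequality
  have hmain : ∀ m, f u (2 * m) ≤ (2 * m + 2) * K * R ^ m * f v m := by
    intro m
    have hfm := h0 v m
    have h1 : f v (2 * m + 1) ≤ K * R ^ m * f v m := by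
      have := hsub2 m (m + 1)
      rw [show m + (m + 1) = 2 * m + 1 by ring] at this
      refine this.trans ?_
      have e : K * R ^ m * f v m = f v m * (C * R ^ (m + 1)) + C ^ 2 * R ^ m * f v m := by
        rw [hK]; ring
      rw [e]
      have : 0 ≤ C ^ 2 * R ^ m * f v m := by positivity
      linarith
    have h2' : ∀ j, j ≤ m → f v (m + j) * f v (m - j) ≤ K * R ^ m * f v m := by
      intro j hj
      calc f v (m + j) * f v (m - j) ≤ (f v m * (C * R ^ j)) * (C * R ^ (m - j)) :=
            mul_le_mul (hsub2 m j) (hup _ _) (h0 _ _) (by positivity)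
        _ = C ^ 2 * (R ^ j * R ^ (m - j)) * f v m := by ring
        _ = C ^ 2 * R ^ m * f v m := by rw [← pow_add, Nat.add_sub_cancel' hj]
        _ ≤ K * R ^ m * f v m := by
            gcongr
            rw [hK]
            have : 0 < C * R := by positivity
            linarith
    have h2 : ∀ k ∈ Finset.range (2 * m + 1), f v k * f v (2 * m - k) ≤ K * R ^ m * f v m := by
      intro k hk
      rw [Finset.mem_range] at hk
      rcases le_total m k with hmk | hmk
      · have := h2' (k - m) (by omega)
        rwa [show m + (k - m) = k by omega, show m - (k - m) = 2 * m - k by omega] at this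
      · have := h2' (m - k) (by omega)
        rwa [show m + (m - k) = 2 * m - k by omega, show m - (m - k) = k by omega, mul_comm] at this
    have h3 := Finset.sum_le_sum h2
    rw [Finset.sum_const, Finset.card_range, nsmul_eq_mul] at h3
    push_cast at h3
    have := hadj (2 * m)
    linarith
  -- (2m+2) p^m bounded
  obtain ⟨D, hD⟩ : ∃ D : ℝ, ∀ m : ℕ, (2 * m + 2) * p ^ m ≤ D := by
    have t1 := tendsto_self_mul_const_pow_of_lt_one hp0.le hp1
    have t2 := tendsto_pow_atTop_nhds_zero_of_lt_one hp0.le hp1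
    obtain ⟨D, hD⟩ := ((t1.const_mul 2).add (t2.const_mul 2)).bddAbove_range
    refine ⟨D, fun m => ?_⟩
    have := hD ⟨m, rfl⟩
    dsimp only at this
    linarith
  have hDpos : 0 < D := by
    have := hD 0
    norm_num at this
    linarith
  refine ⟨c / (D * K), by positivity, fun m => ?_⟩
  have h1 := (hlo (2 * m)).trans (hmain m)
  have h2 := mul_le_mul_of_nonneg_right h1 (pow_nonneg hp0.le m)
  have e1 : (μ * p) ^ (2 * m) * p ^ m = (μ * q) ^ m * R ^ m := by
    rw [pow_mul, ← mul_pow, ← mul_pow, hR, ← hpq]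
    congr 1
    field_simp
  have h3 : c * (μ * q) ^ m * R ^ m ≤ (D * K * f v m) * R ^ m := by
    calc c * (μ * q) ^ m * R ^ m = c * (μ * p) ^ (2 * m) * p ^ m := by rw [mul_assoc, ← e1]; ring
      _ ≤ _ := h2
      _ = ((2 * m + 2) * p ^ m) * (K * f v m * R ^ m) := by ring
      _ ≤ D * (K * f v m * R ^ m) := by
          have := h0 v m
          exact mul_le_mul_of_nonneg_right (hD m) (by positivity)
      _ = _ := by ring
  have h4 := le_of_mul_le_mul_right h3 (by positivity)
  rw [div_mul_eq_mul_div, div_le_iff₀ (by positivity)]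
  linarith

theorem const_mul_pow_root_tendsto (c r : ℝ) (hc : 0 < c) (hr : 0 < r) :
    Tendsto (fun n : ℕ => (c * r ^ n) ^ ((1 : ℝ) / n)) atTop (nhds r) := by
  have h1 : Tendsto (fun n : ℕ => c ^ ((1 : ℝ) / n) * r) atTop (nhds r) := by
    have := (Real.continuous_const_rpow hc.ne').continuousAt.tendsto.comp
      (tendsto_one_div_atTop_nhds_zero_nat (𝕜 := ℝ))
    simp only [Function.comp_def, Real.rpow_zero] at this
    simpa using this.mul_const r
  refine h1.congr' ?_
  filter_upwards [eventually_gt_atTop 0] with n hn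
  rw [Real.mul_rpow hc.le (by positivity), one_div, Real.pow_rpow_inv_natCast hr.le (by omega)]

theorem limit_lemma (g : ℕ → ℝ) (h0 : ∀ n, 0 ≤ g n) (μ : ℝ) (hμ : 0 < μ)
    (hup : ∀ R, μ < R → ∃ C : ℝ, 0 < C ∧ ∀ n, g n ≤ C * R ^ n)
    (hlo : ∀ q : ℝ, 0 < q → q < 1 → ∃ c : ℝ, 0 < c ∧ ∀ n, c * (μ * q) ^ n ≤ g n) :
    Tendsto (fun n : ℕ => g n ^ ((1 : ℝ) / n)) atTop (nhds μ) := by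
  rw [tendsto_order]
  constructor
  · intro a ha
    obtain ⟨b, hb1, hb2⟩ := exists_between (max_lt ha hμ)
    have hb0 : 0 < b := (le_max_right _ _).trans_lt hb1
    obtain ⟨c, hc, h⟩ := hlo (b / μ) (by positivity) (by rwa [div_lt_one hμ])
    rw [mul_div_cancel₀ _ hμ.ne'] at h
    filter_upwards [(const_mul_pow_root_tendsto c b hc hb0).eventually_const_lt
      ((le_max_left _ _).trans_lt hb1)] with n hn
    exact hn.trans_le (Real.rpow_le_rpow (by positivity) (h n) (by positivity))
  · intro a ha
    obtain ⟨b, hb1, hb2⟩ := exists_between ha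
    obtain ⟨C, hC, h⟩ := hup b hb1
    filter_upwards [(const_mul_pow_root_tendsto C b hC (hμ.trans hb1)).eventually_lt_const hb2]
      with n hn
    exact (Real.rpow_le_rpow (h0 n) (h n) (by positivity)).trans_lt hn

/-- Hammersley's theorem: an infinite, connected, locally finite, quasi-transitive simple
graph has a connective constant `μ ∈ [1, ∞)`, i.e. `σ_n(v)^{1/n} → μ` for every vertex `v`. -/
theorem connective_constant_exists {V : Type*} (G : SimpleGraph V) [Infinite V]
    (hconn : G.Connected)
    (hlf : ∀ v : V, (G.neighborSet v).Finite)
    (hqt : ∃ W : Finset V, ∀ v : V, ∃ w ∈ W, ∃ γ : G ≃g G, γ v = w) :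
    ∃ μ : ℝ, 1 ≤ μ ∧ ∀ v : V,
      Tendsto (fun n : ℕ => (sawCount G v n : ℝ) ^ ((1 : ℝ) / n)) atTop (nhds μ) := by
  obtain ⟨W, hW⟩ := hqt
  set f : V → ℕ → ℝ := fun v n => (sawCount G v n : ℝ) with hf
  have h0 : ∀ v n, 0 ≤ f v n := fun v n => Nat.cast_nonneg _
  have h1 : ∀ v n, 1 ≤ f v n := fun v n => by
    have := saw_pos G hconn hlf v n
    simp only [hf]
    exact_mod_cast this
  have hsub : ∀ v m n B, (∀ u, f u n ≤ B) → f v (m + n) ≤ f v m * B := by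
    intro v m n B hB
    have hB0 : 0 ≤ B := (h0 v n).trans (hB v)
    have h := saw_submul G hlf v m n ⌊B⌋₊ (fun u => Nat.le_floor (hB u))
    have h' : f v (m + n) ≤ f v m * (⌊B⌋₊ : ℝ) := by
      simp only [hf]
      exact_mod_cast h
    exact h'.trans (mul_le_mul_of_nonneg_left (Nat.floor_le hB0) (h0 _ _))
  have hW' : ∀ v, ∃ w ∈ W, ∀ n, f v n = f w n := by
    intro v
    obtain ⟨w, hw, γ, hγ⟩ := hW v
    refine ⟨w, hw, fun n => ?_⟩
    have a := saw_invariant G hlf γ v n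
    have b := saw_invariant G hlf γ.symm w n
    rw [hγ] at a
    rw [← hγ, RelIso.symm_apply_apply, hγ] at b
    simp only [hf]
    exact_mod_cast le_antisymm a b
  have hadj : ∀ u v, G.Adj u v → ∀ n,
      f u n ≤ f v (n + 1) + ∑ k ∈ Finset.range (n + 1), f v k * f v (n - k) := by
    intro u v huv n
    simp only [hf]
    exact_mod_cast saw_adj G hlf u v huv n
  set S : Set ℝ := {R | 0 < R ∧ ∃ C : ℝ, 0 < C ∧ ∀ n v, f v n ≤ C * R ^ n} with hS
  obtain ⟨v0⟩ := hconn.nonempty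
  have hSne : S.Nonempty := by
    have hpos : ∀ w ∈ W, f w 1 ≤ 1 + ∑ w ∈ W, f w 1 := fun w hw => by
      have := Finset.single_le_sum (f := fun w => f w 1) (fun w _ => h0 w 1) hw
      linarith
    have hR : 0 < 1 + ∑ w ∈ W, f w 1 :=
      add_pos_of_pos_of_nonneg one_pos (Finset.sum_nonneg fun w _ => h0 w 1)
    exact ⟨_, hR, growth_lemma f h0 hsub W hW' _ hR
      (fun w hw => ⟨1, le_rfl, by simpa using hpos w hw⟩)⟩
  have hS1 : ∀ R ∈ S, 1 ≤ R := by
    rintro R ⟨hR, C, hC, h⟩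
    by_contra hlt
    have t := (tendsto_pow_atTop_nhds_zero_of_lt_one hR.le (not_le.1 hlt)).const_mul C
    rw [mul_zero] at t
    obtain ⟨n, hn⟩ := (t.eventually_lt_const one_pos).exists
    have := (h1 v0 n).trans (h n v0)
    linarith
  have hbdd : BddBelow S := ⟨1, hS1⟩
  set μ := sInf S with hμdef
  have hμ1 : 1 ≤ μ := le_csInf hSne hS1
  have hμ0 : 0 < μ := by linarith
  have hup : ∀ R, μ < R → ∃ C : ℝ, 0 < C ∧ ∀ n v, f v n ≤ C * R ^ n := by
    intro R hR
    obtain ⟨R', ⟨hR'0, C, hC, h⟩, hR'⟩ := exists_lt_of_csInf_lt hSne hR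
    exact ⟨C, hC, fun n v => (h n v).trans (by gcongr)⟩
  have hA : ∃ w ∈ W, ∀ m, 1 ≤ m → μ ^ m ≤ f w m := by
    by_contra hcon
    push Not at hcon
    have hev : ∀ᶠ R in nhdsWithin μ (Set.Iio μ), ∀ w ∈ W, ∃ m, 1 ≤ m ∧ f w m ≤ R ^ m := by
      rw [Filter.eventually_all_finset]
      intro w hw
      obtain ⟨m, hm, hlt⟩ := hcon w hw
      have hcont : Tendsto (fun R : ℝ => R ^ m) (nhdsWithin μ (Set.Iio μ)) (nhds (μ ^ m)) :=
        ((continuous_pow m).tendsto μ).mono_left nhdsWithin_le_nhds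
      filter_upwards [hcont.eventually_const_lt hlt] with R hR
      exact ⟨m, hm, hR.le⟩
    have hpos : ∀ᶠ R in nhdsWithin μ (Set.Iio μ), 0 < R :=
      nhdsWithin_le_nhds (eventually_gt_nhds hμ0)
    obtain ⟨R, ⟨hR1, hR2⟩, hR3⟩ := ((hev.and hpos).and self_mem_nhdsWithin).exists
    have : R ∈ S := ⟨hR2, growth_lemma f h0 hsub W hW' R hR2 hR1⟩
    exact absurd (csInf_le hbdd this) (not_le.2 hR3)
  obtain ⟨A, -, hA⟩ := hA
  have hPA : ∀ q : ℝ, 0 < q → q < 1 → ∃ c : ℝ, 0 < c ∧ ∀ n, c * (μ * q) ^ n ≤ f A n := by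
    intro q hq0 hq1
    refine ⟨1, one_pos, fun n => ?_⟩
    rw [one_mul]
    rcases Nat.eq_zero_or_pos n with rfl | hn
    · simpa using h1 A 0
    · refine le_trans ?_ (hA n hn)
      gcongr
      nlinarith
  have hP : ∀ v, ∀ q : ℝ, 0 < q → q < 1 → ∃ c : ℝ, 0 < c ∧ ∀ n, c * (μ * q) ^ n ≤ f v n := by
    intro v
    clear hA
    obtain ⟨p⟩ := hconn.preconnected A v
    induction p with
    | nil => exact hPA
    | cons h p ih =>
      exact ih (step_lemma f h0 hsub _ _ (hadj _ _ h) μ hμ0 hup hPA)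
  refine ⟨μ, hμ1, fun v => ?_⟩
  exact limit_lemma (f v) (h0 v) μ hμ0
    (fun R hR => (hup R hR).imp fun C hC => ⟨hC.1, fun n => hC.2 n v⟩) (hP v)
end

section
/- Let G be an infinite, connected, quasi-transitive, cubic simple graph, and let F(G) be its Fisher transformation. If σ_n(v)^{1/n} → μ as n → ∞ for some vertex v of G, and σ'_n(d)^{1/n} → μ' as n → ∞ for some vertex d of F(G) (where σ' counts SAWs in F(G)), then 1/μ = (1/μ')² + (1/μ')³. -/
open Filter

/-- The Fisher transformation of a (cubic) graph `G`: the vertices are the darts of `G`;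
two distinct darts are adjacent iff they share the same first vertex, or each is the
reversal of the other. -/
def fisher {V : Type*} (G : SimpleGraph V) : SimpleGraph G.Dart :=
  SimpleGraph.fromRel (fun d d' => d.toProd.1 = d'.toProd.1 ∨ d' = d.symm)

open SimpleGraph Finset

section count
variable {V : Type*} (G : SimpleGraph V) [G.LocallyFinite]

open Classical in
noncomputable def cc : ℕ → Set V → V → ℕ
  | 0, A, v => if v ∈ A then 0 else 1
  | n+1, A, v => if v ∈ A then 0 else ∑ w ∈ G.neighborFinset v, cc n (insert v A) w

open Classical in
noncomputable def PP (z : ℝ) : ℕ → Set V → V → ℝ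
  | 0, _, _ => 0
  | n+1, A, v => if v ∈ A then 0 else 1 + z * ∑ w ∈ G.neighborFinset v, PP z n (insert v A) w

lemma PP_nonneg (z : ℝ) (hz : 0 ≤ z) (n : ℕ) : ∀ (A : Set V) (v : V), 0 ≤ PP G z n A v := by
  induction n with
  | zero => intro A v; simp [PP]
  | succ n ih =>
    intro A v
    rw [PP]
    split_ifs
    · exact le_rfl
    · have := Finset.sum_nonneg (s := G.neighborFinset v) (fun w _ => ih (insert v A) w)
      positivity

lemma PP_mem (z : ℝ) (n : ℕ) (A : Set V) (v : V) (h : v ∈ A) : PP G z n A v = 0 := by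
  cases n <;> simp [PP, h]

lemma PP_succ_le (z : ℝ) (hz : 0 ≤ z) (n : ℕ) :
    ∀ (A : Set V) (v : V), PP G z n A v ≤ PP G z (n+1) A v := by
  induction n with
  | zero => intro A v; exact PP_nonneg G z hz 1 A v
  | succ n ih =>
    intro A v
    rw [PP, PP]
    split_ifs
    · exact le_rfl
    · gcongr with w hw
      exact ih _ _

lemma PP_eq (z : ℝ) (n : ℕ) :
    ∀ (A : Set V) (v : V), PP G z n A v = ∑ k ∈ range n, (cc G k A v : ℝ) * z ^ k := by
  induction n with
  | zero => intro A v; simp [PP]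
  | succ n ih =>
    intro A v
    rw [PP, Finset.sum_range_succ']
    split_ifs with h
    · simp [cc, h]
    · simp only [cc, h, if_false, ih]
      push_cast
      rw [Finset.sum_comm, Finset.mul_sum, add_comm]
      congr 1
      · apply Finset.sum_congr rfl
        intro k _
        rw [← Finset.sum_mul]; ring
      · simp

abbrev XX (A : Set V) (v : V) (n : ℕ) :=
  {p : Σ w : V, G.Walk v w // p.2.IsPath ∧ p.2.length = n ∧ ∀ x ∈ p.2.support, x ∉ A}

lemma XX_card (n : ℕ) : ∀ (A : Set V) (v : V),
    Finite (XX G A v n) ∧ Nat.card (XX G A v n) = cc G n A v := by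
  induction n with
  | zero =>
    intro A v
    by_cases h : v ∈ A
    · have : IsEmpty (XX G A v 0) := ⟨fun p => p.2.2.2 v (Walk.start_mem_support _) h⟩
      exact ⟨inferInstance, by simp [cc, h]⟩
    · have : Unique (XX G A v 0) :=
        { default := ⟨⟨v, Walk.nil⟩, by simp [h]⟩
          uniq := by
            rintro ⟨⟨w, p⟩, h1, h2, h3⟩
            cases p with
            | nil => rfl
            | cons a q => simp at h2 }
      exact ⟨inferInstance, by simp [cc, h]⟩
  | succ n ih =>
    intro A v
    by_cases h : v ∈ A
    · have : IsEmpty (XX G A v (n+1)) := ⟨fun p => p.2.2.2 v (Walk.start_mem_support _) h⟩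
      exact ⟨inferInstance, by simp [cc, h]⟩
    · let f : (Σ w : G.neighborFinset v, XX G (insert v A) w.1 n) → XX G A v (n+1) :=
        fun t => ⟨⟨t.2.1.1, Walk.cons ((G.mem_neighborFinset v t.1.1).1 t.1.2) t.2.1.2⟩, by
          obtain ⟨⟨w, hw⟩, ⟨⟨y, p⟩, h1, h2, h3⟩⟩ := t
          simp only at h1 h2 h3 ⊢
          refine ⟨?_, by simp [h2], ?_⟩
          · rw [Walk.cons_isPath_iff]
            exact ⟨h1, fun hv => h3 v hv (Set.mem_insert _ _)⟩
          · intro x hx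
            rw [Walk.support_cons, List.mem_cons] at hx
            rcases hx with rfl | hx
            · exact h
            · exact fun hA => h3 x hx (Set.mem_insert_of_mem _ hA)⟩
      have hf : Function.Bijective f := by
        constructor
        · rintro ⟨⟨w, hw⟩, ⟨⟨y, p⟩, h1⟩⟩ ⟨⟨w', hw'⟩, ⟨⟨y', p'⟩, h1'⟩⟩ he
          simp only [f, Subtype.mk.injEq, Sigma.mk.injEq] at he
          obtain ⟨rfl, he⟩ := he
          have he := eq_of_heq he
          rw [Walk.cons.injEq] at he
          obtain ⟨rfl, he⟩ := he
          have he := eq_of_heq he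
          subst he
          rfl
        · rintro ⟨⟨y, p⟩, h1, h2, h3⟩
          cases p with
          | nil => simp at h2
          | @cons _ w _ a q =>
            simp only at h1 h2 h3
            rw [Walk.cons_isPath_iff] at h1
            refine ⟨⟨⟨w, by simpa using a⟩, ⟨⟨y, q⟩, h1.1, by simpa using h2, ?_⟩⟩, rfl⟩
            intro x hx hxA
            rcases hxA with rfl | hxA
            · exact h1.2 hx
            · exact h3 x (by simp [hx]) hxA
      have e := Equiv.ofBijective f hf
      have hfin : ∀ w : G.neighborFinset v, Finite (XX G (insert v A) w.1 n) := fun w => (ih _ _).1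
      refine ⟨Finite.of_equiv _ e, ?_⟩
      rw [← Nat.card_congr e, Nat.card_sigma, cc, if_neg h]
      rw [← Finset.sum_coe_sort (G.neighborFinset v) (fun w => cc G n (insert v A) w)]
      exact Finset.sum_congr rfl (fun w _ => (ih _ _).2)

abbrev YY {V : Type*} (G : SimpleGraph V) (v : V) (n : ℕ) := {p : Σ w : V, G.Walk v w // p.2.IsPath ∧ p.2.length = n}

def YYe (v : V) (n : ℕ) : YY G v n ≃ XX G ∅ v n :=
  Equiv.subtypeEquivRight (by simp)

lemma YY_fin (v : V) (n : ℕ) : Finite (YY G v n) :=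
  have := (XX_card G n ∅ v).1
  Finite.of_equiv _ (YYe G v n).symm

lemma saw_eq (v : V) (n : ℕ) : sawCount G v n = cc G n ∅ v := by
  rw [← (XX_card G n ∅ v).2]
  exact Nat.card_congr (YYe G v n)

/-- Summability of the SAW generating function. -/
def SS {V : Type*} (G : SimpleGraph V) (v : V) (x : ℝ) : Prop := Summable (fun n => (sawCount G v n : ℝ) * x ^ n)

lemma SS_iff (v : V) (x : ℝ) (hx : 0 ≤ x) : SS G v x ↔ ∃ C, ∀ N, PP G x N ∅ v ≤ C := by
  constructor
  · intro h
    refine ⟨∑' n, (sawCount G v n : ℝ) * x ^ n, fun N => ?_⟩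
    rw [PP_eq]
    simp only [← saw_eq]
    exact h.sum_le_tsum (range N) (fun i _ => by positivity)
  · rintro ⟨C, hC⟩
    refine summable_of_sum_range_le (c := C) (fun n => by positivity) (fun N => ?_)
    have := hC N
    rw [PP_eq] at this
    simpa only [← saw_eq] using this

open Classical in
lemma saw_adj_le (u v : V) (h : G.Adj v u) (n : ℕ) :
    sawCount G u n ≤ sawCount G v (n+1) +
      ∑ k ∈ range (n+1), sawCount G v k * sawCount G v (n-k) := by
  let T := YY G v (n+1) ⊕ (Σ k : Fin (n+1), YY G v k.1 × YY G v (n - k.1))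
  let g : T → Σ w : V, G.Walk u w := Sum.elim
    (fun q => if hq : q.1.2.snd = u then ⟨q.1.1, q.1.2.tail.copy hq rfl⟩ else ⟨u, Walk.nil⟩)
    (fun q => if hq : q.2.1.1.1 = u then
      ⟨q.2.2.1.1, (q.2.1.1.2.copy rfl hq).reverse.append q.2.2.1.2⟩ else ⟨u, Walk.nil⟩)
  have key : ∀ p : YY G u n, ∃ t : T, g t = p.1 := by
    rintro ⟨⟨w, p⟩, h1, h2⟩
    simp only at h1 h2
    by_cases hv : v ∈ p.support
    · have hl : (p.takeUntil v hv).length + (p.dropUntil v hv).length = n := by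
        rw [← h2, ← Walk.length_append, Walk.take_spec]
      refine ⟨Sum.inr ⟨⟨(p.takeUntil v hv).length, by omega⟩,
        ⟨⟨u, (p.takeUntil v hv).reverse⟩, ?_, ?_⟩, ⟨⟨w, p.dropUntil v hv⟩, ?_, ?_⟩⟩, ?_⟩
      · exact (h1.takeUntil hv).reverse
      · simp
      · exact h1.dropUntil hv
      · simp only; omega
      · simp [g]
    · refine ⟨Sum.inl ⟨⟨w, Walk.cons h p⟩, ?_, ?_⟩, ?_⟩
      · rw [Walk.cons_isPath_iff]; exact ⟨h1, hv⟩
      · simp [h2]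
      · simp only [g, Sum.elim_inl, Walk.snd_cons, dite_true]
        congr 1
        apply Walk.ext_support
        refine (Walk.support_copy _ _ _).trans ?_
        rw [Walk.support_tail_of_not_nil _ (by simp)]
        simp
  choose f hf using key
  have hinj : Function.Injective f := by
    intro p q hpq
    apply Subtype.ext
    rw [← hf p, ← hf q, hpq]
  have := YY_fin G v
  have hT := Nat.card_le_card_of_injective f hinj
  refine hT.trans (le_of_eq ?_)
  rw [Nat.card_sum, Nat.card_sigma]
  simp only [Nat.card_prod]
  rw [Finset.sum_range]
  rfl

lemma SS_adj (u v : V) (h : G.Adj v u) (x : ℝ) (hx : 0 < x) (hv : SS G v x) : SS G u x := by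
  unfold SS at *
  have h1 : Summable (fun n => (sawCount G v (n+1) : ℝ) * x ^ n) := by
    have := ((summable_nat_add_iff 1).2 hv).mul_left x⁻¹
    refine this.congr (fun n => ?_)
    rw [pow_succ]; field_simp
  have h2 := (summable_norm_sum_mul_antidiagonal_of_summable_norm hv.norm hv.norm).of_norm
  refine Summable.of_nonneg_of_le (fun n => by positivity) (fun n => ?_) (h1.add h2)
  have := saw_adj_le G u v h n
  have h3 : (sawCount G u n : ℝ) ≤ sawCount G v (n+1) +
      ∑ k ∈ range (n+1), (sawCount G v k : ℝ) * sawCount G v (n-k) := by exact_mod_cast this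
  rw [Finset.Nat.sum_antidiagonal_eq_sum_range_succ_mk]
  calc _ ≤ (sawCount G v (n+1) +
      ∑ k ∈ range (n+1), (sawCount G v k : ℝ) * sawCount G v (n-k)) * x ^ n := by gcongr
    _ = _ := by
      rw [add_mul, Finset.sum_mul]
      congr 1
      apply Finset.sum_congr rfl
      intro k hk
      have : x ^ n = x ^ k * x ^ (n-k) := by
        rw [← pow_add]; congr 1; have := Finset.mem_range.1 hk; omega
      simp only
      rw [this]; ring

lemma SS_all (hc : G.Connected) (u v : V) (x : ℝ) (hx : 0 < x) (hv : SS G v x) : SS G u x := by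
  obtain ⟨p⟩ := hc.preconnected v u
  induction p with
  | nil => exact hv
  | cons h q ih => exact ih (SS_adj G _ _ h x hx hv)

lemma not_SS_one [Infinite V] (hc : G.Connected) (v : V) : ¬ SS G v 1 := by
  classical
  intro h
  unfold SS at h
  simp only [one_pow, mul_one] at h
  have h0 := h.tendsto_atTop_zero
  have h1 : ∀ᶠ n in atTop, (sawCount G v n : ℝ) < 1 := h0.eventually_lt_const one_pos
  obtain ⟨N, hN⟩ := eventually_atTop.1 h1
  have := YY_fin G v
  let T := Σ k : Fin N, YY G v k.1
  let g : T → V := fun t => t.2.1.1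
  have hs : Function.Surjective g := by
    intro w
    obtain ⟨p, hp⟩ := hc.exists_isPath v w
    by_cases hl : p.length < N
    · exact ⟨⟨⟨p.length, hl⟩, ⟨⟨w, p⟩, hp, rfl⟩⟩, rfl⟩
    · exfalso
      have h2 := hN p.length (by omega)
      have h3 : sawCount G v p.length = 0 := by
        have : sawCount G v p.length < 1 := by exact_mod_cast h2
        omega
      have h4 : Nat.card (YY G v p.length) = 0 := h3
      rw [Nat.card_eq_zero] at h4
      rcases h4 with h4 | h4
      · exact h4.false ⟨⟨w, p⟩, hp, rfl⟩
      · exact h4.not_finite (this _)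
  have : Finite V := Finite.of_surjective g hs
  exact not_finite V

end count

section fish
variable {V : Type*} (G : SimpleGraph V)

structure Tri {V : Type*} (G : SimpleGraph V) (d d1 d2 : G.Dart) : Prop where
  f1 : d1.fst = d.fst
  f2 : d2.fst = d.fst
  n1 : d1 ≠ d
  n2 : d2 ≠ d
  n12 : d1 ≠ d2
  all : ∀ e : G.Dart, e.fst = d.fst → e = d ∨ e = d1 ∨ e = d2

lemma Tri.rot1 {d d1 d2 : G.Dart} (h : Tri G d d1 d2) : Tri G d1 d d2 :=
  ⟨h.f1.symm, h.f2.trans h.f1.symm, h.n1.symm, h.n12.symm, h.n2.symm, fun e he => by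
    have := h.all e (he.trans h.f1); tauto⟩

lemma Tri.swap {d d1 d2 : G.Dart} (h : Tri G d d1 d2) : Tri G d d2 d1 :=
  ⟨h.f2, h.f1, h.n2, h.n1, h.n12.symm, fun e he => by
    have := h.all e he; tauto⟩

lemma exists_tri (hcubic : ∀ v : V, (G.neighborSet v).ncard = 3) (d : G.Dart) :
    ∃ d1 d2, Tri G d d1 d2 := by
  obtain ⟨x, y, z, hxy, hxz, hyz, hs⟩ := Set.ncard_eq_three.1 (hcubic d.fst)
  have hx : G.Adj d.fst x := by rw [← mem_neighborSet, hs]; simp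
  have hy : G.Adj d.fst y := by rw [← mem_neighborSet, hs]; simp
  have hz : G.Adj d.fst z := by rw [← mem_neighborSet, hs]; simp
  have hall : ∀ e : G.Dart, e.fst = d.fst → e.snd = x ∨ e.snd = y ∨ e.snd = z := by
    intro e he
    have : e.snd ∈ G.neighborSet d.fst := by rw [← he]; exact e.adj
    rw [hs] at this
    simpa using this
  have hext : ∀ e e' : G.Dart, e.fst = e'.fst → e.snd = e'.snd → e = e' := by
    intro e e' h1 h2
    exact SimpleGraph.Dart.ext _ _ (Prod.ext h1 h2)
  let dx : G.Dart := ⟨(d.fst, x), hx⟩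
  let dy : G.Dart := ⟨(d.fst, y), hy⟩
  let dz : G.Dart := ⟨(d.fst, z), hz⟩
  have nxy : dx ≠ dy := fun h => hxy (congrArg (fun e : G.Dart => e.snd) h)
  have nxz : dx ≠ dz := fun h => hxz (congrArg (fun e : G.Dart => e.snd) h)
  have nyz : dy ≠ dz := fun h => hyz (congrArg (fun e : G.Dart => e.snd) h)
  have hT : Tri G dx dy dz := ⟨rfl, rfl, nxy.symm, nxz.symm, nyz, fun e he => by
    rcases hall e he with h | h | h
    · exact Or.inl (hext _ _ he h)
    · exact Or.inr (Or.inl (hext _ _ he h))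
    · exact Or.inr (Or.inr (hext _ _ he h))⟩
  rcases hT.all d rfl with h | h | h
  · exact ⟨_, _, h ▸ hT⟩
  · exact ⟨_, _, h ▸ hT.rot1⟩
  · exact ⟨_, _, h ▸ hT.swap.rot1⟩

lemma fisher_adj_iff {d d1 d2 : G.Dart} (h : Tri G d d1 d2) (e : G.Dart) :
    (fisher G).Adj d e ↔ e = d.symm ∨ e = d1 ∨ e = d2 := by
  have hs : d.symm ≠ d := SimpleGraph.Dart.symm_ne d
  simp only [fisher, SimpleGraph.fromRel_adj]
  constructor
  · rintro ⟨hne, (h1 | h1) | (h1 | h1)⟩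
    · have := h.all e h1.symm; tauto
    · tauto
    · have := h.all e h1; tauto
    · left; rw [h1]; simp
  · rintro (rfl | rfl | rfl)
    · exact ⟨hs.symm, Or.inl (Or.inr rfl)⟩
    · exact ⟨h.n1.symm, Or.inl (Or.inl h.f1.symm)⟩
    · exact ⟨h.n2.symm, Or.inl (Or.inl h.f2.symm)⟩

lemma sym_ne {d d1 : G.Dart} (h : d1.fst = d.fst) : d.symm ≠ d1 := by
  intro h1
  rw [← h1] at h
  exact d.adj.ne h.symm

variable [G.LocallyFinite] [(fisher G).LocallyFinite]

lemma sumF {d d1 d2 : G.Dart} (h : Tri G d d1 d2) (f : G.Dart → ℝ) :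
    ∑ e ∈ (fisher G).neighborFinset d, f e = f d.symm + f d1 + f d2 := by
  classical
  have : (fisher G).neighborFinset d = {d.symm, d1, d2} := by
    ext e; simp [fisher_adj_iff G h]
  rw [this, Finset.sum_insert, Finset.sum_insert, Finset.sum_singleton, add_assoc]
  · simpa using h.n12
  · simpa using ⟨sym_ne G h.f1, sym_ne G h.f2⟩

lemma sumG {d d1 d2 : G.Dart} (h : Tri G d d1 d2) (f : V → ℝ) :
    ∑ e ∈ G.neighborFinset d.fst, f e = f d.snd + f d1.snd + f d2.snd := by
  classical
  have hne : ∀ e e' : G.Dart, e.fst = e'.fst → e ≠ e' → e.snd ≠ e'.snd := fun e e' h1 h2 h3 =>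
    h2 (SimpleGraph.Dart.ext _ _ (Prod.ext h1 h3))
  have : G.neighborFinset d.fst = {d.snd, d1.snd, d2.snd} := by
    ext w
    simp only [mem_neighborFinset, Finset.mem_insert, Finset.mem_singleton]
    constructor
    · intro hw
      rcases h.all ⟨(d.fst, w), hw⟩ rfl with h | h | h
      · left; rw [← h]
      · right; left; rw [← h]
      · right; right; rw [← h]
    · rintro (rfl | rfl | rfl)
      · exact d.adj
      · rw [← h.f1]; exact d1.adj
      · rw [← h.f2]; exact d2.adj
  rw [this, Finset.sum_insert, Finset.sum_insert, Finset.sum_singleton, add_assoc]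
  · simpa using hne _ _ (h.f1.trans h.f2.symm) h.n12
  · simpa using ⟨hne _ _ h.f1.symm h.n1.symm, hne _ _ h.f2.symm h.n2.symm⟩

variable (z : ℝ) (hz : 0 ≤ z)

lemma F_succ {d d1 d2 : G.Dart} (h : Tri G d d1 d2) (N : ℕ) (B : Set G.Dart) (hd : d ∉ B) :
    PP (fisher G) z (N+1) B d = 1 + z * (PP (fisher G) z N (insert d B) d.symm +
      PP (fisher G) z N (insert d B) d1 + PP (fisher G) z N (insert d B) d2) := by
  rw [PP, if_neg hd, sumF G h]

include hz in
lemma F_ub {d d1 d2 : G.Dart} (h : Tri G d d1 d2) (N : ℕ) (B : Set G.Dart) :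
    PP (fisher G) z N B d ≤ 1 + z * (PP (fisher G) z N (insert d B) d.symm +
      PP (fisher G) z N (insert d B) d1 + PP (fisher G) z N (insert d B) d2) := by
  by_cases hd : d ∈ B
  · rw [PP_mem _ _ _ _ _ hd]
    have := PP_nonneg (fisher G) z hz N (insert d B)
    have h1 := this d.symm
    have h2 := this d1
    have h3 := this d2
    positivity
  · rw [← F_succ G z h N B hd]
    exact PP_succ_le _ z hz _ _ _

lemma G_succ {d d1 d2 : G.Dart} (h : Tri G d d1 d2) (x : ℝ) (N : ℕ) (A : Set V) (hd : d.fst ∉ A) :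
    PP G x (N+1) A d.fst = 1 + x * (PP G x N (insert d.fst A) d.snd +
      PP G x N (insert d.fst A) d1.snd + PP G x N (insert d.fst A) d2.snd) := by
  rw [PP, if_neg hd, sumG G h]

include hz in
/-- lower bound for a pass through a triangle -/
lemma pass {d d1 d2 : G.Dart} (h : Tri G d d1 d2) (N : ℕ) (A : Set V) (B : Set G.Dart)
    (hB : ∀ e ∈ B, e.fst ∈ A) (hd : d.fst ∉ A) :
    z * (PP (fisher G) z N (insert d1 (insert d B)) d1.symm +
      z * PP (fisher G) z N (insert d2 (insert d1 (insert d B))) d2.symm) ≤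
    PP (fisher G) z (N+2) (insert d B) d1 := by
  have nd : ∀ e : G.Dart, e.fst = d.fst → e ∉ B := fun e he hh => hd (he ▸ hB e hh)
  have h1 : d1 ∉ insert d B := by
    rintro (h' | h')
    · exact h.n1 h'
    · exact nd _ h.f1 h'
  have h2 : d2 ∉ insert d1 (insert d B) := by
    rintro (h' | h' | h')
    · exact h.n12 h'.symm
    · exact h.n2 h'
    · exact nd _ h.f2 h'
  rw [F_succ G z h.rot1 _ _ h1, F_succ G z h.rot1.swap.rot1 _ _ h2]
  have P0 := PP_nonneg (fisher G) z hz
  have a1 := P0 N (insert d2 (insert d1 (insert d B))) d1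
  have a2 := P0 N (insert d2 (insert d1 (insert d B))) d
  have a3 := P0 (N+1) (insert d1 (insert d B)) d
  have a4 := PP_succ_le (fisher G) z hz N (insert d1 (insert d B)) d1.symm
  have e1 : z * PP (fisher G) z N (insert d2 (insert d1 (insert d B))) d2.symm ≤ 
    1 + z * (PP (fisher G) z N (insert d2 (insert d1 (insert d B))) d2.symm + 
      PP (fisher G) z N (insert d2 (insert d1 (insert d B))) d1 + 
      PP (fisher G) z N (insert d2 (insert d1 (insert d B))) d) := by
    nlinarith [mul_nonneg hz a1, mul_nonneg hz a2]
  have e2 : ∀ a b : ℝ, a ≤ b → z * a ≤ 1 + z * b := fun a b hab => by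
    nlinarith [mul_le_mul_of_nonneg_left hab hz]
  apply e2
  linarith

include hz in
lemma lower (hcubic : ∀ v : V, (G.neighborSet v).ncard = 3) (N : ℕ) :
    ∀ (A : Set V) (B : Set G.Dart) (d : G.Dart), (∀ e ∈ B, e.fst ∈ A) → d.snd ∈ A →
      PP G (z^2+z^3) N A d.fst ≤ PP (fisher G) z (3*N) B d := by
  induction N with
  | zero => intro A B d _ _; simp [PP]
  | succ N ih =>
    intro A B d hB hs
    by_cases hd : d.fst ∈ A
    · rw [PP_mem _ _ _ _ _ hd]; exact PP_nonneg _ z hz _ _ _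
    obtain ⟨d1, d2, h⟩ := exists_tri G hcubic d
    have hdB : d ∉ B := fun hh => hd (hB d hh)
    rw [G_succ G h _ _ _ hd, PP_mem _ _ _ _ d.snd (Set.mem_insert_of_mem _ hs),
      show 3*(N+1) = (3*N+2)+1 by ring, F_succ G z h _ _ hdB]
    have p1 := pass G z hz h (3*N) A B hB hd
    have p2 := pass G z hz h.swap (3*N) A B hB hd
    have hb : ∀ e e' : G.Dart, e.fst = d.fst → e'.fst = d.fst → 
        ∀ f ∈ insert e (insert e' (insert d B)), f.fst ∈ insert d.fst A := by
      rintro e e' he he' f (rfl | rfl | rfl | hf)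
      · exact Or.inl he
      · exact Or.inl he'
      · exact Or.inl rfl
      · exact Or.inr (hB f hf)
    have hb' : ∀ e : G.Dart, e.fst = d.fst → 
        ∀ f ∈ (insert e (insert d B)), f.fst ∈ insert d.fst A := by
      rintro e he f (rfl | rfl | hf)
      · exact Or.inl he
      · exact Or.inl rfl
      · exact Or.inr (hB f hf)
    have i1 := ih (insert d.fst A) _ d1.symm (hb' d1 h.f1) (Or.inl h.f1)
    have i2 := ih (insert d.fst A) _ d2.symm (hb' d2 h.f2) (Or.inl h.f2)
    have i3 := ih (insert d.fst A) _ d2.symm (hb d2 d1 h.f2 h.f1) (Or.inl h.f2)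
    have i4 := ih (insert d.fst A) _ d1.symm (hb d1 d2 h.f1 h.f2) (Or.inl h.f1)
    have a0 := PP_nonneg (fisher G) z hz (3*N+2) (insert d B) d.symm
    change PP G (z^2+z^3) N (insert d.fst A) d1.snd ≤ _ at i1 i4
    change PP G (z^2+z^3) N (insert d.fst A) d2.snd ≤ _ at i2 i3
    set q1 := PP G (z^2+z^3) N (insert d.fst A) d1.snd
    set q2 := PP G (z^2+z^3) N (insert d.fst A) d2.snd
    have r1 : z * (q1 + z * q2) ≤ PP (fisher G) z (3*N+2) (insert d B) d1 :=
      le_trans (by gcongr) p1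
    have r2 : z * (q2 + z * q1) ≤ PP (fisher G) z (3*N+2) (insert d B) d2 :=
      le_trans (by gcongr) p2
    calc _ = 1 + z * (0 + z * (q1 + z * q2) + z * (q2 + z * q1)) := by ring
      _ ≤ _ := by gcongr

include hz in
lemma upper (hz1 : z ≤ 1) (hcubic : ∀ v : V, (G.neighborSet v).ncard = 3) (N : ℕ) :
    ∀ (A : Set V) (B : Set G.Dart) (d : G.Dart),
      (∀ w ∈ A, ∃ e1 ∈ B, ∃ e2 ∈ B, e1 ≠ e2 ∧ e1.fst = w ∧ e2.fst = w) → d.symm ∈ B → d.fst ∉ A →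
      PP (fisher G) z N B d ≤ 9 * PP G (z^2+z^3) N A d.fst := by
  have hx : 0 ≤ z^2+z^3 := by positivity
  induction N with
  | zero => intro A B d _ _ _; simp [PP]
  | succ N ih =>
    intro A B d hA hs hd
    by_cases hdB : d ∈ B
    · rw [PP_mem _ _ _ _ _ hdB]
      have := PP_nonneg G _ hx (N+1) A d.fst
      positivity
    obtain ⟨d1, d2, h⟩ := exists_tri G hcubic d
    have key : ∀ (e : G.Dart) (B' : Set G.Dart), B ⊆ B' → d ∈ B' → e ∈ B' → e ≠ d → e.fst = d.fst →
        PP (fisher G) z N B' e.symm ≤ 1 + 9 * PP G (z^2+z^3) N (insert d.fst A) e.snd := by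
      intro e B' hBB hdB' heB hed hef
      by_cases heA : e.snd ∈ A
      · rw [PP_mem G _ _ _ e.snd (Or.inr heA)]
        by_cases hm : e.symm ∈ B'
        · rw [PP_mem _ _ _ _ _ hm]; norm_num
        obtain ⟨f1, hf1, f2, hf2, hff, g1, g2⟩ := hA _ heA
        obtain ⟨k1, k2, hk⟩ := exists_tri G hcubic e.symm
        have m : k1 ∈ B' ∧ k2 ∈ B' := by
          have u1 := hk.all f1 g1
          have u2 := hk.all f2 g2
          have v1 := hBB hf1
          have v2 := hBB hf2
          rcases u1 with rfl | rfl | rfl <;> rcases u2 with rfl | rfl | rfl <;> tauto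
        have := F_ub G z hz hk N B'
        rw [PP_mem _ _ _ _ _ (Set.mem_insert_of_mem _ m.1),
          PP_mem _ _ _ _ _ (Set.mem_insert_of_mem _ m.2),
          SimpleGraph.Dart.symm_symm, PP_mem _ _ _ _ _ (Set.mem_insert_of_mem _ heB)] at this
        linarith
      · have := ih (insert d.fst A) B' e.symm ?_ (by simpa using heB) ?_
        · change _ ≤ 9 * PP G (z^2+z^3) N (insert d.fst A) e.snd at this
          linarith
        · rintro w (rfl | hw)
          · exact ⟨d, hdB', e, heB, hed.symm, rfl, hef⟩
          · obtain ⟨f1, hf1, f2, hf2, hff⟩ := hA w hw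
            exact ⟨f1, hBB hf1, f2, hBB hf2, hff⟩
        · rintro (h' | h')
          · change e.snd = d.fst at h'
            exact e.adj.ne (hef.trans h'.symm)
          · exact heA h'
    set q1 := PP G (z^2+z^3) N (insert d.fst A) d1.snd with hq1
    set q2 := PP G (z^2+z^3) N (insert d.fst A) d2.snd with hq2
    have q0 : 0 ≤ PP G (z^2+z^3) N (insert d.fst A) d.snd := PP_nonneg G _ hx _ _ _
    have half : ∀ e e' : G.Dart, Tri G d e e' →
        PP (fisher G) z N (insert d B) e ≤ 
          1 + z * (1 + 9 * PP G (z^2+z^3) N (insert d.fst A) e.snd + 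
            (1 + z * (1 + 9 * PP G (z^2+z^3) N (insert d.fst A) e'.snd))) := by
      intro e e' ht
      have s1 := F_ub G z hz ht.rot1 N (insert d B)
      have s2 := F_ub G z hz ht.rot1.swap.rot1 N (insert e (insert d B))
      rw [PP_mem _ _ _ _ d (by simp)] at s1
      rw [PP_mem _ _ _ _ d (by simp), PP_mem _ _ _ _ e (by simp)] at s2
      have k1 := key e (insert e (insert d B)) (by intro; simp; tauto) (by simp) (by simp) ht.n1 ht.f1
      have k2 := key e' (insert e' (insert e (insert d B))) (by intro; simp; tauto) (by simp) (by simp) ht.n2 ht.f2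
      refine s1.trans ?_
      rw [add_zero]
      gcongr
      refine s2.trans ?_
      rw [add_zero, add_zero]
      gcongr
    have t1 := half d1 d2 h
    have t2 := half d2 d1 h.swap
    rw [← hq1, ← hq2] at t1 t2
    rw [F_succ G z h _ _ hdB, G_succ G h _ _ _ hd, PP_mem _ _ _ _ d.symm (Or.inr hs), ← hq1, ← hq2]
    calc _ ≤ 1 + z * (0 + (1 + z * (1 + 9 * q1 + (1 + z * (1 + 9 * q2)))) + 
          (1 + z * (1 + 9 * q2 + (1 + z * (1 + 9 * q1))))) := by gcongr
      _ = 1 + 2 * z + 4 * z^2 + 2 * z^3 + 9 * (z^2+z^3) * (q1 + q2) := by ring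
      _ ≤ 9 + 9 * (z^2+z^3) * (q1 + q2) := by
        have : z^2 ≤ 1 := pow_le_one₀ hz hz1
        have : z^3 ≤ 1 := pow_le_one₀ hz hz1
        linarith
      _ ≤ _ := by nlinarith [mul_nonneg hx q0]

end fish

section main
variable {V : Type*} (G : SimpleGraph V) [G.LocallyFinite] [(fisher G).LocallyFinite]

lemma SS_of_F (hcubic : ∀ v : V, (G.neighborSet v).ncard = 3) (d : G.Dart) (z : ℝ) (hz : 0 < z)
    (h : SS (fisher G) d z) : SS G d.fst (z^2+z^3) := by
  have hx : 0 ≤ z^2+z^3 := by positivity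
  obtain ⟨C, hC⟩ := (SS_iff _ _ _ hz.le).1 h
  rw [SS_iff _ _ _ hx]
  obtain ⟨d1, d2, ht⟩ := exists_tri G hcubic d
  have P0 := PP_nonneg (fisher G) z hz.le
  have base : ∀ (e : G.Dart) (B : Set G.Dart) (N : ℕ), e.fst = d.fst → (∀ f ∈ B, f.fst = d.fst) →
      PP G (z^2+z^3) N {d.fst} e.snd ≤ PP (fisher G) z (3*N) B e.symm := by
    intro e B N he hB
    exact lower G z hz.le hcubic N {d.fst} B e.symm hB he
  have two : ∀ (e e' : G.Dart) (N : ℕ), Tri G d e e' →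
      z ^ 2 * PP G (z^2+z^3) N {d.fst} e.snd ≤ C := by
    intro e e' N ht
    have s1 := hC (3*N+2)
    rw [F_succ G z ht _ _ (by simp), F_succ G z ht.rot1 _ _ (by simpa using ht.n1)] at s1
    have b := base e (insert e (insert d ∅)) N ht.f1 (by simp [ht.f1])
    have a1 := P0 (3*N+1) (insert d ∅) d.symm
    have a2 := P0 (3*N+1) (insert d ∅) e'
    have a3 := P0 (3*N) (insert e (insert d ∅)) d
    have a4 := P0 (3*N) (insert e (insert d ∅)) e'
    refine le_trans ?_ s1
    calc _ = 0 + z * (0 + (0 + z * (PP G (z^2+z^3) N {d.fst} e.snd + 0 + 0)) + 0) := by ring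
      _ ≤ _ := by gcongr <;> norm_num
  have one : ∀ N, z * PP G (z^2+z^3) N {d.fst} d.snd ≤ C := by
    intro N
    have s1 := hC (3*N+1)
    rw [F_succ G z ht _ _ (by simp)] at s1
    have b := base d (insert d ∅) N rfl (by simp)
    have a1 := P0 (3*N) (insert d ∅) d1
    have a2 := P0 (3*N) (insert d ∅) d2
    refine le_trans ?_ s1
    calc _ = 0 + z * (PP G (z^2+z^3) N {d.fst} d.snd + 0 + 0) := by ring
      _ ≤ _ := by gcongr; norm_num
  refine ⟨1 + (z^2+z^3) * (C/z + C/z^2 + C/z^2), fun N => ?_⟩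
  refine (PP_succ_le G _ hx N _ _).trans ?_
  rw [G_succ G ht _ _ _ (by simp)]
  simp only [insert_empty_eq]
  have o1 : PP G (z^2+z^3) N {d.fst} d.snd ≤ C/z := by
    rw [le_div_iff₀ hz]; linarith [one N]
  have o2 : PP G (z^2+z^3) N {d.fst} d1.snd ≤ C/z^2 := by
    rw [le_div_iff₀ (by positivity)]; linarith [two d1 d2 N ht]
  have o3 : PP G (z^2+z^3) N {d.fst} d2.snd ≤ C/z^2 := by
    rw [le_div_iff₀ (by positivity)]; linarith [two d2 d1 N ht.swap]
  gcongr

lemma F_of_SS (hcubic : ∀ v : V, (G.neighborSet v).ncard = 3) (d : G.Dart) (z : ℝ) (hz : 0 < z)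
    (hz1 : z ≤ 1) (h : ∀ v, SS G v (z^2+z^3)) : SS (fisher G) d z := by
  have hx : 0 ≤ z^2+z^3 := by positivity
  have h' := fun v => (SS_iff G v _ hx).1 (h v)
  choose C hC using h'
  rw [SS_iff _ _ _ hz.le]
  obtain ⟨d1, d2, ht⟩ := exists_tri G hcubic d
  have P0 := PP_nonneg (fisher G) z hz.le
  have base : ∀ (e : G.Dart) (B : Set G.Dart) (N : ℕ), e ∈ B →
      PP (fisher G) z N B e.symm ≤ 9 * C e.snd := by
    intro e B N he
    have := upper G z hz.le hz1 hcubic N ∅ B e.symm (by simp) (by simpa using he) (by simp)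
    have h2 := hC e.snd N
    change _ ≤ 9 * PP G (z^2+z^3) N ∅ e.snd at this
    linarith
  have half : ∀ (e e' : G.Dart) (N : ℕ), Tri G d e e' →
      PP (fisher G) z N (insert d ∅) e ≤ 1 + z * (9 * C e.snd + 0 +
        (1 + z * (9 * C e'.snd + 0 + 0))) := by
    intro e e' N ht
    refine (F_ub G z hz.le ht.rot1 N _).trans ?_
    have s2 := F_ub G z hz.le ht.rot1.swap.rot1 N (insert e (insert d ∅))
    rw [PP_mem _ _ _ _ d (by simp), PP_mem _ _ _ _ e (by simp)] at s2
    rw [PP_mem _ _ _ _ d (by simp)]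
    have b1 := base e (insert e (insert d ∅)) N (by simp)
    have b2 := base e' (insert e' (insert e (insert d ∅))) N (by simp)
    gcongr
    refine s2.trans ?_
    gcongr
  refine ⟨1 + z * (9 * C d.snd + (1 + z * (9 * C d1.snd + 0 + (1 + z * (9 * C d2.snd + 0 + 0)))) +
    (1 + z * (9 * C d2.snd + 0 + (1 + z * (9 * C d1.snd + 0 + 0))))),
    fun N => (F_ub G z hz.le ht N ∅).trans ?_⟩
  have b := base d (insert d ∅) N (by simp)
  exact add_le_add le_rfl (mul_le_mul_of_nonneg_left
    (add_le_add (add_le_add b (half d1 d2 N ht)) (half d2 d1 N ht.swap)) hz.le)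

end main

lemma root1 (a : ℕ → ℕ) (μ x : ℝ) (hx : 0 < x)
    (h : Tendsto (fun n : ℕ => (a n : ℝ) ^ ((1 : ℝ) / n)) atTop (nhds μ)) (hl : x * μ < 1) :
    Summable (fun n => (a n : ℝ) * x ^ n) := by
  obtain ⟨r, hr, hr1⟩ := exists_between (max_lt hl one_pos)
  have hr0 : 0 < r := lt_of_le_of_lt (le_max_right _ _) hr
  have hr2 : x * μ < r := lt_of_le_of_lt (le_max_left _ _) hr
  have ev := (h.const_mul x).eventually_lt_const hr2
  refine Summable.of_norm_bounded_eventually_nat (summable_geometric_of_lt_one hr0.le hr1) ?_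
  filter_upwards [ev, eventually_ge_atTop 1] with n hn h1
  rw [Real.norm_of_nonneg (by positivity)]
  have e : (a n : ℝ) = ((a n : ℝ) ^ ((1 : ℝ) / n)) ^ n := by
    rw [one_div, Real.rpow_inv_natCast_pow (by positivity) (by omega)]
  rw [e, ← mul_pow]
  gcongr
  linarith

lemma root2 (a : ℕ → ℕ) (μ x : ℝ) (hx : 0 < x)
    (h : Tendsto (fun n : ℕ => (a n : ℝ) ^ ((1 : ℝ) / n)) atTop (nhds μ))
    (hs : Summable (fun n => (a n : ℝ) * x ^ n)) : x * μ ≤ 1 := by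
  by_contra! hl
  have ev := (h.const_mul x).eventually_const_lt hl
  have ev2 := hs.tendsto_atTop_zero.eventually_lt_const one_pos
  obtain ⟨n, hn, hn2, h1⟩ := (ev.and (ev2.and (eventually_ge_atTop 1))).exists
  have e : (a n : ℝ) = ((a n : ℝ) ^ ((1 : ℝ) / n)) ^ n := by
    rw [one_div, Real.rpow_inv_natCast_pow (by positivity) (by omega)]
  rw [e, ← mul_pow, mul_comm] at hn2
  exact absurd (one_le_pow₀ hn.le (n := n)) (not_le.2 hn2)

/-- The Fisher transformation of an infinite, connected, quasi-transitive, cubic graph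
satisfies `1/μ = (1/μ')² + (1/μ')³` where `μ, μ'` are the connective constants of `G`, `F(G)`. -/
theorem fisher_connective_constant {V : Type*} (G : SimpleGraph V) [Infinite V]
    (hconn : G.Connected)
    (hqt : ∃ W : Finset V, ∀ v : V, ∃ w ∈ W, ∃ γ : G ≃g G, γ v = w)
    (hcubic : ∀ v : V, (G.neighborSet v).ncard = 3)
    (v : V) (d : G.Dart) (μ μ' : ℝ)
    (hμ : Tendsto (fun n : ℕ => (sawCount G v n : ℝ) ^ ((1 : ℝ) / n)) atTop (nhds μ))
    (hμ' : Tendsto (fun n : ℕ => (sawCount (fisher G) d n : ℝ) ^ ((1 : ℝ) / n)) atTop (nhds μ')) :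
    1 / μ = (1 / μ') ^ 2 + (1 / μ') ^ 3 := by
  classical
  haveI : G.LocallyFinite := fun v =>
    (Set.finite_of_ncard_ne_zero (by rw [hcubic v]; norm_num) : (G.neighborSet v).Finite).fintype
  haveI : (fisher G).LocallyFinite := fun d => by
    have : ((fisher G).neighborSet d).Finite := by
      obtain ⟨d1, d2, h⟩ := exists_tri G hcubic d
      refine Set.Finite.subset (Set.toFinite {d.symm, d1, d2}) (fun e he => ?_)
      exact (fisher_adj_iff G h e).1 he
    exact this.fintype
  have fwd : ∀ z : ℝ, 0 < z → SS (fisher G) d z → SS G v (z^2+z^3) := fun z hz h =>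
    SS_all G hconn v d.fst _ (by positivity) (SS_of_F G hcubic d z hz h)
  have bwd : ∀ z : ℝ, 0 < z → z ≤ 1 → SS G v (z^2+z^3) → SS (fisher G) d z := fun z hz hz1 h =>
    F_of_SS G hcubic d z hz hz1 (fun u => SS_all G hconn u v _ (by positivity) h)
  have n1 := not_SS_one G hconn v
  have m1 : 1 ≤ μ := by
    by_contra! hh
    exact n1 (root1 _ μ 1 one_pos hμ (by linarith))
  have m2 : 1 ≤ μ' := by
    by_contra! hh
    have h1 : SS (fisher G) d 1 := root1 _ μ' 1 one_pos hμ' (by linarith)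
    have h2 := root2 _ μ _ (by norm_num) hμ (fwd 1 one_pos h1)
    linarith
  have p1 : 0 < μ := by linarith
  have p2 : 0 < μ' := by linarith
  have q2 : 0 < 1 / μ' := by positivity
  have hcont : Continuous (fun z : ℝ => z^2+z^3) := by fun_prop
  apply le_antisymm
  · by_contra! hh
    have l1 : 1 / μ ≤ 1 := by rw [div_le_one p1]; exact m1
    have l2 : 1 / μ' < 1 := by
      by_contra! h1
      have := one_le_pow₀ h1 (n := 2)
      have := one_le_pow₀ h1 (n := 3)
      linarith
    have ev : ∀ᶠ z in nhdsWithin (1 / μ') (Set.Ioi (1 / μ')), z^2+z^3 < 1 / μ :=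
      (hcont.tendsto (1/μ')).eventually_lt_const hh |>.filter_mono nhdsWithin_le_nhds
    have ev2 : ∀ᶠ z in nhdsWithin (1 / μ') (Set.Ioi (1 / μ')), z ∈ Set.Ioo (1/μ') 1 :=
      Ioo_mem_nhdsGT l2
    obtain ⟨z, hz1, hz2, hz3⟩ := (ev.and ev2).exists
    have hz0 : 0 < z := q2.trans hz2
    have h1 : SS G v (z^2+z^3) := root1 _ μ _ (by positivity) hμ (by rwa [lt_div_iff₀ p1] at hz1)
    have h2 := root2 _ μ' z hz0 hμ' (bwd z hz0 hz3.le h1)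
    rw [div_lt_iff₀ p2] at hz2
    linarith
  · by_contra! hh
    have ev : ∀ᶠ z in nhdsWithin (1 / μ') (Set.Iio (1 / μ')), 1 / μ < z^2+z^3 :=
      (hcont.tendsto (1/μ')).eventually_const_lt hh |>.filter_mono nhdsWithin_le_nhds
    have ev2 : ∀ᶠ z in nhdsWithin (1 / μ') (Set.Iio (1 / μ')), z ∈ Set.Ioo 0 (1/μ') :=
      Ioo_mem_nhdsLT q2
    obtain ⟨z, hz1, hz2, hz3⟩ := (ev.and ev2).exists
    have h1 : SS (fisher G) d z := root1 _ μ' z hz2 hμ' (by rwa [lt_div_iff₀ p2] at hz3)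
    have h2 := root2 _ μ _ (by positivity) hμ (fwd z hz2 h1)
    rw [div_lt_iff₀ p1] at hz1
    linarith
end

section
/- Let φ = (1+√5)/2 be the golden mean. Let (μ_k)_{k≥0} be a sequence of real numbers such that μ_k ≥ 1 for all k, μ_0 ≤ 2, and 1/μ_k = (1/μ_{k+1})² + (1/μ_{k+1})³ for all k ≥ 0. Then the sequence (μ_k) is monotone and converges to φ, and for all k ≥ 1, −(4/7)^k ≤ 1/μ_k − 1/φ ≤ ((7−√5)/2)^{−k}. -/
open Filter

/-- The analytic content of the iterated Fisher transformation: if `μ_k ≥ 1`, `μ_0 ≤ 2`,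
and `1/μ_k = (1/μ_{k+1})² + (1/μ_{k+1})³` for all `k`, then `(μ_k)` is monotone, converges
to the golden mean `φ = (1+√5)/2`, and `−(4/7)^k ≤ 1/μ_k − 1/φ ≤ ((7−√5)/2)^{−k}` for `k ≥ 1`. -/
theorem fisher_iteration_golden_mean (μ : ℕ → ℝ)
    (h1 : ∀ k, 1 ≤ μ k) (h0 : μ 0 ≤ 2)
    (hrec : ∀ k, 1 / μ k = (1 / μ (k + 1)) ^ 2 + (1 / μ (k + 1)) ^ 3) :
    (Monotone μ ∨ Antitone μ) ∧
    Tendsto μ atTop (nhds ((1 + Real.sqrt 5) / 2)) ∧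
    ∀ k : ℕ, 1 ≤ k →
      -((4 / 7 : ℝ)) ^ k ≤ 1 / μ k - 1 / ((1 + Real.sqrt 5) / 2) ∧
      1 / μ k - 1 / ((1 + Real.sqrt 5) / 2) ≤ ((7 - Real.sqrt 5) / 2) ^ (-(k : ℤ)) := by
  obtain ⟨c, hc⟩ : ∃ c : ℝ, c = (Real.sqrt 5 - 1) / 2 := ⟨_, rfl⟩
  have h5 : Real.sqrt 5 ^ 2 = 5 := Real.sq_sqrt (by norm_num)
  have h5a : 2 < Real.sqrt 5 := by
    rw [Real.lt_sqrt (by norm_num)]; norm_num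
  have h5b : Real.sqrt 5 < 3 := by
    rw [Real.sqrt_lt' (by norm_num)]; norm_num
  have hcc : c ^ 2 = 1 - c := by rw [hc]; nlinarith
  have hc0 : 1 / 2 < c := by rw [hc]; linarith
  have hc1 : c < 1 := by rw [hc]; linarith
  have hφ : 1 / ((1 + Real.sqrt 5) / 2) = c := by
    rw [hc, div_eq_iff (by linarith)]; nlinarith
  have hφ' : (1 + Real.sqrt 5) / 2 = c⁻¹ := by
    rw [← hφ]; simp
  have hK : (7 - Real.sqrt 5) / 2 = 3 - c := by rw [hc]; ring
  rw [hφ, hK, hφ']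
  obtain ⟨x, hx⟩ : ∃ x : ℕ → ℝ, ∀ k, x k = 1 / μ k := ⟨_, fun _ => rfl⟩
  simp only [← hx] at hrec ⊢
  have hx0 : ∀ k, 0 < x k := fun k => by
    rw [hx]; have := h1 k; positivity
  have hx1 : ∀ k, x k ≤ 1 := fun k => by
    rw [hx, div_le_one (by linarith [h1 k])]; exact h1 k
  have hμ : ∀ k, μ k = (x k)⁻¹ := fun k => by rw [hx]; simp
  have hhalf : ∀ k, 1 / 2 ≤ x k := by
    intro k
    induction k with
    | zero =>
      rw [hx]
      exact one_div_le_one_div_of_le (by linarith [h1 0]) h0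
    | succ k ih =>
      by_contra! h
      have := hrec k
      have h0 := hx0 (k + 1)
      nlinarith [mul_pos h0 h0, mul_pos (mul_pos h0 h0) h0]
  have hD : ∀ k, x k - c = (x (k+1) - c) * (x (k+1) ^ 2 + x (k+1) * (1 + c) + 1) := by
    intro k
    rw [hrec k]
    linear_combination (x (k+1)) * hcc
  have hD7 : ∀ k, 7 / 4 ≤ x k ^ 2 + x k * (1 + c) + 1 := by
    intro k
    nlinarith [hhalf k]
  have hup : ∀ k, c ≤ x k → c ≤ x (k+1) := by
    intro k h
    by_contra! h'
    nlinarith [hD k, hD7 (k+1)]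
  have hdn : ∀ k, x k ≤ c → x (k+1) ≤ c := by
    intro k h
    by_contra! h'
    nlinarith [hD k, hD7 (k+1)]
  have hstep : ∀ k, x k - x (k+1) = x (k+1) * ((x (k+1) - c) * (x (k+1) + c + 1)) := by
    intro k
    rw [hrec k]
    linear_combination (x (k+1)) * hcc
  have habs : ∀ k, |x k - c| ≤ (4 / 7 : ℝ) ^ k := by
    intro k
    induction k with
    | zero =>
      rw [abs_le]
      constructor <;> simp <;> linarith [hx0 0, hx1 0]
    | succ k ih =>
      rw [hD k, abs_mul, abs_of_pos (by linarith [hD7 (k+1)] :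
        0 < x (k+1) ^ 2 + x (k+1) * (1 + c) + 1)] at ih
      rw [pow_succ]
      nlinarith [mul_le_mul_of_nonneg_left (hD7 (k+1)) (abs_nonneg (x (k+1) - c))]
  refine ⟨?_, ?_, ?_⟩
  · rcases le_total c (x 0) with h | h
    · left
      have hall : ∀ k, c ≤ x k := fun k => by
        induction k with
        | zero => exact h
        | succ k ih => exact hup k ih
      apply monotone_nat_of_le_succ
      intro k
      rw [hμ, hμ]
      apply inv_anti₀ (hx0 _)
      have : 0 ≤ x (k+1) * ((x (k+1) - c) * (x (k+1) + c + 1)) :=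
        mul_nonneg (hx0 _).le (mul_nonneg (by linarith [hall (k+1)]) (by linarith [hx0 (k+1)]))
      linarith [hstep k]
    · right
      have hall : ∀ k, x k ≤ c := fun k => by
        induction k with
        | zero => exact h
        | succ k ih => exact hdn k ih
      apply antitone_nat_of_succ_le
      intro k
      rw [hμ, hμ]
      apply inv_anti₀ (hx0 _)
      have : 0 ≤ x (k+1) * ((c - x (k+1)) * (x (k+1) + c + 1)) :=
        mul_nonneg (hx0 _).le (mul_nonneg (by linarith [hall (k+1)]) (by linarith [hx0 (k+1)]))
      linarith [hstep k]
  · have ht : Tendsto x atTop (nhds c) := by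
      rw [tendsto_iff_norm_sub_tendsto_zero]
      exact squeeze_zero (fun _ => norm_nonneg _) habs
        (tendsto_pow_atTop_nhds_zero_of_lt_one (by norm_num) (by norm_num))
    rw [funext hμ]
    exact ht.inv₀ (by linarith)
  · intro k _
    refine ⟨(abs_le.1 (habs k)).1, ?_⟩
    rw [zpow_neg, zpow_natCast, ← inv_pow]
    have hi : 0 < (3 - c)⁻¹ := inv_pos.2 (by linarith)
    clear habs
    induction k with
    | zero => simp; linarith [hx1 0]
    | succ k ih =>
      rcases le_total (x (k+1)) c with h | h
      · exact le_trans (by linarith) (pow_pos hi _).le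
      · have ih' : x k - c ≤ (3 - c)⁻¹ ^ k := by
          rcases Nat.eq_zero_or_pos k with rfl | hk
          · simp; linarith [hx1 0]
          · exact ih hk
        rw [pow_succ, ← div_eq_mul_inv, le_div_iff₀ (by linarith)]
        refine le_trans ?_ ih'
        rw [hD k]
        apply mul_le_mul_of_nonneg_left _ (by linarith)
        nlinarith
end

section
/- Let G be an infinite, connected, locally finite, bipartite simple graph with vertex 2-coloring c (every edge joins a black vertex and a white vertex), such that every black vertex has degree exactly 3 and the group of color-preserving automorphisms of G acts with finitely many orbits on the vertices. Let G̃ be the simple graph whose vertex set is the disjoint union of the set of white vertices of G and the set of darts of G whose first vertex is black, where two distinct darts are adjacent if and only if they have the same (black) first vertex, and a dart (b,w) is adjacent to a white vertex w' if and only if w' = w. If σ_n(v)^{1/n} → μ as n → ∞ for some vertex v of G, and σ̃_n(x)^{1/n} → μ̃ as n → ∞ for some vertex x of G̃ (where σ̃ counts SAWs in G̃), then 1/μ² = (1/μ̃)³ + (1/μ̃)⁴. -/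
open Filter

/-- The graph obtained from a bipartite graph `G` (with coloring `c`, black = `true`)
by applying the Fisher transformation at each black vertex.  Its vertices are the white
vertices of `G` together with the darts of `G` whose first vertex is black; two distinct
darts are adjacent iff they have the same first vertex, and a dart `(b, w)` is adjacent to
a white vertex `w'` iff `w' = w`. -/
def fisherBlack {V : Type*} (G : SimpleGraph V) (c : V → Bool) :
    SimpleGraph ({v : V // c v = false} ⊕ {d : G.Dart // c d.toProd.1 = true}) :=
  SimpleGraph.fromRel (fun x y =>
    match x, y with
    | Sum.inr d, Sum.inr d' => d.1.toProd.1 = d'.1.toProd.1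
    | Sum.inr d, Sum.inl w => d.1.toProd.2 = w.1
    | _, _ => False)


/-- weighted path sum -/
noncomputable def pw {V : Type*} (G : SimpleGraph V) (z : ENNReal) (n : ℕ∞) (u : V) (X : Set V) :
    ENNReal :=
  open Classical in
  ∑' p : (Σ w : V, G.Walk u w),
    if p.2.IsPath ∧ (∀ y ∈ p.2.support, y ∉ X) ∧ (p.2.length : ℕ∞) < n then z ^ p.2.length else 0

theorem pw_mem {V : Type*} (G : SimpleGraph V) (z : ENNReal) (n : ℕ∞) (u : V) (X : Set V)
    (h : u ∈ X) : pw G z n u X = 0 := by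
  unfold pw
  simp only [ENNReal.tsum_eq_zero]
  intro p
  rw [if_neg]
  rintro ⟨-, h2, -⟩
  exact h2 u p.2.start_mem_support h

theorem pw_zero {V : Type*} (G : SimpleGraph V) (z : ENNReal) (u : V) (X : Set V) :
    pw G z 0 u X = 0 := by
  simp [pw]

theorem pw_mono {V : Type*} (G : SimpleGraph V) (z : ENNReal) {n m : ℕ∞} (hnm : n ≤ m) (u : V)
    (X : Set V) : pw G z n u X ≤ pw G z m u X := by
  unfold pw
  refine ENNReal.tsum_le_tsum fun p => ?_
  split_ifs with h1 h2
  · exact le_rfl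
  · exact absurd ⟨h1.1, h1.2.1, h1.2.2.trans_le hnm⟩ h2
  · exact zero_le
  · exact le_rfl

/-- decomposition of walks by first step -/
def walkEquiv {V : Type*} (G : SimpleGraph V) (u : V) :
    (Unit ⊕ (Σ b : G.neighborSet u, Σ w : V, G.Walk b.1 w)) ≃ (Σ w : V, G.Walk u w) where
  toFun := fun s => match s with
    | Sum.inl _ => ⟨u, .nil⟩
    | Sum.inr ⟨b, w, p⟩ => ⟨w, .cons b.2 p⟩
  invFun := fun s => match s with
    | ⟨_, .nil⟩ => Sum.inl ()
    | ⟨w, .cons h p⟩ => Sum.inr ⟨⟨_, h⟩, w, p⟩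
  left_inv := by rintro (_ | ⟨b, w, p⟩) <;> rfl
  right_inv := by rintro ⟨w, (_ | ⟨h, p⟩)⟩ <;> rfl

theorem pw_succ {V : Type*} (G : SimpleGraph V) (z : ENNReal) (n : ℕ∞) (u : V) (X : Set V)
    (hu : u ∉ X) :
    pw G z (n + 1) u X = 1 + z * ∑' b : G.neighborSet u, pw G z n b (insert u X) := by
  classical
  unfold pw
  rw [← (walkEquiv G u).tsum_eq, Summable.tsum_sum ENNReal.summable ENNReal.summable]
  congr 1
  · simp [walkEquiv, hu]
  · rw [ENNReal.tsum_sigma', ← ENNReal.tsum_mul_left]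
    refine tsum_congr fun b => ?_
    rw [← ENNReal.tsum_mul_left]
    refine tsum_congr fun p => ?_
    obtain ⟨w, p⟩ := p
    have hb : G.Adj u b.1 := b.2
    have key : ((SimpleGraph.Walk.cons hb p).IsPath ∧
        (∀ y ∈ (SimpleGraph.Walk.cons hb p).support, y ∉ X) ∧
        ((SimpleGraph.Walk.cons hb p).length : ℕ∞) < n + 1) ↔
        (p.IsPath ∧ (∀ y ∈ p.support, y ∉ insert u X) ∧ (p.length : ℕ∞) < n) := by
      rw [SimpleGraph.Walk.cons_isPath_iff, SimpleGraph.Walk.support_cons,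
        SimpleGraph.Walk.length_cons]
      have h1 : ((p.length + 1 : ℕ) : ℕ∞) < n + 1 ↔ (p.length : ℕ∞) < n := by
        induction n using ENat.recTopCoe with
        | top => simp
        | coe n => norm_cast; omega
      rw [h1]
      simp only [List.mem_cons, Set.mem_insert_iff, not_or, forall_eq_or_imp]
      constructor
      · rintro ⟨⟨a, b⟩, ⟨c, d⟩, e⟩
        exact ⟨a, fun y hy => ⟨fun h => b (h ▸ hy), d y hy⟩, e⟩
      · rintro ⟨a, b, e⟩
        exact ⟨⟨a, fun h => (b u h).1 rfl⟩, ⟨hu, fun y hy => (b y hy).2⟩, e⟩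
    change (if ((SimpleGraph.Walk.cons hb p).IsPath ∧
        (∀ y ∈ (SimpleGraph.Walk.cons hb p).support, y ∉ X) ∧
        ((SimpleGraph.Walk.cons hb p).length : ℕ∞) < n + 1) then
        z ^ (SimpleGraph.Walk.cons hb p).length else 0) = _
    rw [if_congr key rfl rfl, mul_ite, mul_zero, SimpleGraph.Walk.length_cons, pow_succ']
    congr

theorem pw_succ_le {V : Type*} (G : SimpleGraph V) (z : ENNReal) (n : ℕ∞) (u : V) (X : Set V) :
    pw G z n u X ≤ 1 + z * ∑' b : G.neighborSet u, pw G z n b (insert u X) := by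
  by_cases hu : u ∈ X
  · rw [pw_mem _ _ _ _ _ hu]; exact zero_le
  · rw [← pw_succ _ _ _ _ _ hu]
    exact pw_mono _ _ le_self_add _ _

theorem pw_top {V : Type*} (G : SimpleGraph V) (z : ENNReal) (u : V) (X : Set V)
    (hu : u ∉ X) :
    pw G z ⊤ u X = 1 + z * ∑' b : G.neighborSet u, pw G z ⊤ b (insert u X) := by
  rw [← pw_succ _ _ _ _ _ hu, top_add]

theorem pw_top_le {V : Type*} (G : SimpleGraph V) (z : ENNReal) (u : V) (X : Set V) (K : ENNReal)
    (h : ∀ n : ℕ, pw G z n u X ≤ K) : pw G z ⊤ u X ≤ K := by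
  classical
  unfold pw
  rw [ENNReal.tsum_eq_iSup_sum]
  refine iSup_le fun s => ?_
  refine le_trans ?_ (h (s.sup (fun p => p.2.length) + 1))
  unfold pw
  refine le_trans (Finset.sum_le_sum ?_) (ENNReal.sum_le_tsum s)
  intro p hp
  have : (p.2.length : ℕ∞) < ((s.sup (fun p => p.2.length) + 1 : ℕ) : ℕ∞) := by
    rw [Nat.cast_lt]
    exact Nat.lt_succ_of_le (Finset.le_sup (f := fun p : (Σ w : V, G.Walk u w) => p.2.length) hp)
  simp only [this, ENat.natCast_lt_top, and_true]
  exact le_rfl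

theorem pw_lt_top {V : Type*} (G : SimpleGraph V) (hlf : ∀ v : V, (G.neighborSet v).Finite)
    (z : ENNReal) (hz : z ≠ ⊤) (n : ℕ) : ∀ (u : V) (X : Set V), pw G z n u X ≠ ⊤ := by
  induction n with
  | zero => intro u X; simp [pw_zero]
  | succ n ih =>
    intro u X
    by_cases hu : u ∈ X
    · simp [pw_mem _ _ _ _ _ hu]
    · rw [Nat.cast_succ, pw_succ _ _ _ _ _ hu]
      have := (hlf u).fintype
      rw [tsum_fintype]
      refine ENNReal.add_ne_top.2 ⟨by simp, ENNReal.mul_ne_top hz ?_⟩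
      exact ENNReal.sum_ne_top.2 fun b _ => ih _ _

theorem saw_finite {V : Type*} (G : SimpleGraph V) (hlf : ∀ v : V, (G.neighborSet v).Finite)
    (u : V) (n : ℕ) : {p : (Σ w : V, G.Walk u w) | p.2.IsPath ∧ p.2.length = n}.Finite := by
  classical
  rw [← Set.encard_lt_top_iff]
  have h := pw_lt_top G hlf 1 (by simp) (n + 1) u ∅
  have h2 : (({p : (Σ w : V, G.Walk u w) | p.2.IsPath ∧ p.2.length = n}.encard : ℕ∞) : ENNReal)
      ≤ pw G 1 ((n + 1 : ℕ) : ℕ∞) u ∅ := by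
    have := ENNReal.tsum_set_const {p : (Σ w : V, G.Walk u w) | p.2.IsPath ∧ p.2.length = n} 1
    rw [mul_one] at this
    rw [← this, tsum_subtype _ (fun _ => (1 : ENNReal))]
    unfold pw
    refine ENNReal.tsum_le_tsum fun p => ?_
    rw [Set.indicator_apply]
    split_ifs with h1 h2
    · simp
    · refine absurd ⟨h1.1, by simp, ?_⟩ h2
      have := h1.2
      norm_cast
      omega
    · exact zero_le
    · exact le_rfl
  have h3 := h2.trans_lt (lt_top_iff_ne_top.2 h)
  by_contra hc
  rw [not_lt, top_le_iff] at hc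
  rw [hc] at h3
  simp at h3

theorem pw_eq_saw {V : Type*} (G : SimpleGraph V) (hlf : ∀ v : V, (G.neighborSet v).Finite)
    (z : ENNReal) (u : V) : pw G z ⊤ u ∅ = ∑' n : ℕ, (sawCount G u n : ENNReal) * z ^ n := by
  classical
  have h1 : ∀ n, (sawCount G u n : ENNReal) * z ^ n =
      ∑' p : (Σ w : V, G.Walk u w), if p.2.IsPath ∧ p.2.length = n then z ^ n else 0 := by
    intro n
    have := ENNReal.tsum_set_const {p : (Σ w : V, G.Walk u w) | p.2.IsPath ∧ p.2.length = n} (z ^ n)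
    rw [tsum_subtype _ (fun _ => z ^ n)] at this
    have h2 : ((sawCount G u n : ℕ) : ENNReal) =
      (({p : (Σ w : V, G.Walk u w) | p.2.IsPath ∧ p.2.length = n}.encard : ℕ∞) : ENNReal) := by
      rw [← (saw_finite G hlf u n).cast_ncard_eq]
      rfl
    rw [h2, ← this]
    refine tsum_congr fun p => ?_
    rw [Set.indicator_apply]
    rfl
  simp_rw [h1]
  rw [ENNReal.tsum_comm]
  unfold pw
  refine tsum_congr fun p => ?_
  rw [tsum_eq_single p.2.length]
  · simp
  · intro n hn
    rw [if_neg]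
    exact fun h => hn h.2.symm

theorem pw_top_subtype {V : Type*} (G : SimpleGraph V) (z : ENNReal) (u : V) :
    pw G z ⊤ u ∅ = ∑' p : {p : (Σ w : V, G.Walk u w) // p.2.IsPath}, z ^ p.1.2.length := by
  classical
  have := tsum_subtype {p : (Σ w : V, G.Walk u w) | p.2.IsPath} (fun p => z ^ p.2.length)
  refine Eq.trans ?_ this.symm
  unfold pw
  refine tsum_congr fun p => ?_
  rw [Set.indicator_apply]
  simp

theorem pw_step {V : Type*} (G : SimpleGraph V) (z : ENNReal) (hz : z ≠ 0) (hz' : z ≠ ⊤) (u v : V)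
    (h : G.Adj u v) (hu : pw G z ⊤ u ∅ ≠ ⊤) : pw G z ⊤ v ∅ ≠ ⊤ := by
  classical
  rw [pw_top_subtype] at hu ⊢
  let P := fun u : V => {p : (Σ w : V, G.Walk u w) // p.2.IsPath}
  let F : P v → P u ⊕ (P u × P u) := fun p =>
    if hp : u ∈ p.1.2.support then
      Sum.inr (⟨⟨_, (p.1.2.takeUntil u hp).reverse⟩, (p.2.takeUntil hp).reverse⟩,
        ⟨⟨_, p.1.2.dropUntil u hp⟩, p.2.dropUntil hp⟩)
    else Sum.inl ⟨⟨_, .cons h p.1.2⟩, p.2.cons hp⟩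
  let B : P u ⊕ (P u × P u) → (Σ a b : V, G.Walk a b) := fun s => match s with
    | Sum.inl p => ⟨u, p.1⟩
    | Sum.inr (q, r) => ⟨q.1.1, r.1.1, q.1.2.reverse.append r.1.2⟩
  have hF : Function.Injective F := by
    intro p q hpq
    by_cases hp : u ∈ p.1.2.support <;> by_cases hq : u ∈ q.1.2.support
    · have := congrArg B hpq
      simp only [F, dif_pos hp, dif_pos hq, B, SimpleGraph.Walk.reverse_reverse,
        SimpleGraph.Walk.take_spec] at this
      have h2 := eq_of_heq (Sigma.mk.inj this).2
      exact Subtype.ext h2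
    · simp [F, dif_pos hp, dif_neg hq] at hpq
    · simp [F, dif_pos hq, dif_neg hp] at hpq
    · simp only [F, dif_neg hp, dif_neg hq, Sum.inl.injEq] at hpq
      replace hpq := congrArg Subtype.val hpq
      obtain ⟨⟨a, p⟩, hp'⟩ := p
      obtain ⟨⟨b, q⟩, hq'⟩ := q
      simp only [Sigma.mk.injEq] at hpq
      obtain ⟨rfl, h2⟩ := hpq
      simp only [heq_eq_eq, SimpleGraph.Walk.cons.injEq, true_and] at h2
      subst h2
      rfl
  let g : P u ⊕ (P u × P u) → ENNReal := fun s => match s with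
    | Sum.inl p => z⁻¹ * z ^ p.1.2.length
    | Sum.inr (q, r) => z ^ q.1.2.length * z ^ r.1.2.length
  have hg : ∀ p : P v, g (F p) = z ^ p.1.2.length := by
    intro p
    by_cases hp : u ∈ p.1.2.support
    · simp only [F, dif_pos hp, g, SimpleGraph.Walk.length_reverse]
      rw [← pow_add, ← SimpleGraph.Walk.length_append, SimpleGraph.Walk.take_spec]
    · simp only [F, dif_neg hp, g, SimpleGraph.Walk.length_cons]
      rw [pow_succ', ← mul_assoc, ENNReal.inv_mul_cancel hz hz', one_mul]
  have h1 := ENNReal.tsum_comp_le_tsum_of_injective hF g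
  simp_rw [hg] at h1
  refine ne_top_of_le_ne_top ?_ h1
  rw [Summable.tsum_sum ENNReal.summable ENNReal.summable, ENNReal.tsum_prod']
  refine ENNReal.add_ne_top.2 ⟨?_, ?_⟩
  · simp only [g]
    rw [ENNReal.tsum_mul_left]
    exact ENNReal.mul_ne_top (ENNReal.inv_ne_top.2 hz) hu
  · simp only [g]
    simp_rw [ENNReal.tsum_mul_left]
    rw [ENNReal.tsum_mul_right]
    exact ENNReal.mul_ne_top hu hu

theorem pw_reach {V : Type*} (G : SimpleGraph V) (z : ENNReal) (hz : z ≠ 0) (hz' : z ≠ ⊤) (u v : V)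
    (h : G.Reachable u v) (hu : pw G z ⊤ u ∅ ≠ ⊤) : pw G z ⊤ v ∅ ≠ ⊤ := by
  obtain ⟨p⟩ := h
  induction p with
  | nil => exact hu
  | cons h p ih => exact ih (pw_step G z hz hz' _ _ h hu)

theorem tsum_three {α : Type*} (S : Set α) (a b d : α) (hab : a ≠ b) (had : a ≠ d) (hbd : b ≠ d)
    (hS : S = {a, b, d}) (f : α → ENNReal) : ∑' y : S, f y = f a + (f b + f d) := by
  classical
  have h : S = ((({a, b, d} : Finset α) : Set α)) := by simp [hS]
  rw [tsum_congr_set_coe f h]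
  rw [Finset.tsum_subtype' {a, b, d} f]
  rw [Finset.sum_insert (by simp [hab, had]), Finset.sum_pair hbd]

/-- the dart vertex of the Fisher graph -/
def mkd {V : Type*} (G : SimpleGraph V) (c : V → Bool) (b w : V) (h : G.Adj b w)
    (hb : c b = true) : {v : V // c v = false} ⊕ {d : G.Dart // c d.toProd.1 = true} :=
  Sum.inr ⟨⟨(b, w), h⟩, hb⟩

theorem mkd_ne {V : Type*} (G : SimpleGraph V) (c : V → Bool) (b w p : V) (h : G.Adj b w)
    (h' : G.Adj b p) (hb : c b = true) (hwp : w ≠ p) : mkd G c b w h hb ≠ mkd G c b p h' hb := by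
  intro he
  simp only [mkd, Sum.inr.injEq, Subtype.mk.injEq, SimpleGraph.Dart.mk.injEq, Prod.mk.injEq] at he
  exact hwp he.2

theorem nb_dart {V : Type*} (G : SimpleGraph V) (c : V → Bool)
    (b w p q : V) (hb : c b = true) (hw : c w = false)
    (aw : G.Adj b w) (ap : G.Adj b p) (aq : G.Adj b q) (hN : G.neighborSet b = {w, p, q})
    (hwp : w ≠ p) (hwq : w ≠ q) :
    (fisherBlack G c).neighborSet (mkd G c b w aw hb) =
      {Sum.inl ⟨w, hw⟩, mkd G c b p ap hb, mkd G c b q aq hb} := by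
  ext y
  rw [SimpleGraph.mem_neighborSet]
  rcases y with ⟨y, hy⟩ | ⟨⟨⟨y1, y2⟩, hy⟩, hy'⟩
  · simp only [fisherBlack, mkd, SimpleGraph.fromRel_adj, ne_eq, reduceCtorEq, not_false_eq_true,
      true_and, or_false, Set.mem_insert_iff, Sum.inl.injEq, Subtype.mk.injEq,
      Set.mem_singleton_iff]
    exact eq_comm
  · simp only [fisherBlack, mkd, SimpleGraph.fromRel_adj, ne_eq, Sum.inr.injEq, Subtype.mk.injEq,
      SimpleGraph.Dart.mk.injEq, Prod.mk.injEq, Set.mem_insert_iff, reduceCtorEq, false_or,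
      Set.mem_singleton_iff]
    constructor
    · rintro ⟨h1, h2⟩
      have h3 : y1 = b := by rcases h2 with h | h <;> simp [h]
      subst h3
      have h4 : y2 ∈ G.neighborSet y1 := hy
      rw [hN] at h4
      rcases h4 with h | h | h
      · exact absurd ⟨rfl, h.symm⟩ h1
      · exact Or.inl ⟨rfl, h⟩
      · exact Or.inr ⟨rfl, h⟩
    · rintro (⟨rfl, rfl⟩ | ⟨rfl, rfl⟩)
      · exact ⟨fun h => hwp h.2, Or.inl rfl⟩
      · exact ⟨fun h => hwq h.2, Or.inl rfl⟩

theorem sum_dart {V : Type*} (G : SimpleGraph V) (c : V → Bool)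
    (b w p q : V) (hb : c b = true) (hw : c w = false)
    (aw : G.Adj b w) (ap : G.Adj b p) (aq : G.Adj b q) (hN : G.neighborSet b = {w, p, q})
    (hwp : w ≠ p) (hwq : w ≠ q) (hpq : p ≠ q)
    (f : {v : V // c v = false} ⊕ {d : G.Dart // c d.toProd.1 = true} → ENNReal) :
    ∑' y : (fisherBlack G c).neighborSet (mkd G c b w aw hb), f y =
      f (Sum.inl ⟨w, hw⟩) + (f (mkd G c b p ap hb) + f (mkd G c b q aq hb)) := by
  refine tsum_three _ _ _ _ ?_ ?_ ?_ (nb_dart G c b w p q hb hw aw ap aq hN hwp hwq) f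
  · simp [mkd]
  · simp [mkd]
  · exact mkd_ne _ _ _ _ _ _ _ _ hpq

theorem nb_white {V : Type*} (G : SimpleGraph V) (c : V → Bool)
    (w : V) (hw : c w = false) (hB : ∀ b, G.Adj w b → c b = true) :
    (fisherBlack G c).neighborSet (Sum.inl ⟨w, hw⟩) =
      Set.range (fun b : G.neighborSet w => mkd G c b.1 w (G.adj_symm b.2) (hB _ b.2)) := by
  ext y
  rw [SimpleGraph.mem_neighborSet]
  rcases y with ⟨y, hy⟩ | ⟨⟨⟨y1, y2⟩, hy⟩, hy'⟩
  · simp [fisherBlack, mkd, SimpleGraph.fromRel_adj]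
  · simp only [fisherBlack, mkd, SimpleGraph.fromRel_adj, Set.mem_range, Sum.inr.injEq,
      Subtype.mk.injEq, SimpleGraph.Dart.mk.injEq, Prod.mk.injEq]
    constructor
    · rintro ⟨-, h | h⟩
      · exact h.elim
      · have h : y2 = w := h
        subst h
        exact ⟨⟨y1, G.adj_symm hy⟩, rfl, rfl⟩
    · rintro ⟨b, h1, h2⟩
      exact ⟨by simp, Or.inr h2.symm⟩

theorem sum_white {V : Type*} (G : SimpleGraph V) (c : V → Bool)
    (w : V) (hw : c w = false) (hB : ∀ b, G.Adj w b → c b = true)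
    (f : {v : V // c v = false} ⊕ {d : G.Dart // c d.toProd.1 = true} → ENNReal) :
    ∑' y : (fisherBlack G c).neighborSet (Sum.inl ⟨w, hw⟩), f y =
      ∑' b : G.neighborSet w, f (mkd G c b.1 w (G.adj_symm b.2) (hB _ b.2)) := by
  have hinj : Function.Injective
      (fun b : G.neighborSet w => mkd G c b.1 w (G.adj_symm b.2) (hB _ b.2)) := by
    intro b b' h
    simp only [mkd, Sum.inr.injEq, Subtype.mk.injEq, SimpleGraph.Dart.mk.injEq, Prod.mk.injEq] at h
    exact Subtype.ext h.1
  have hr := nb_white G c w hw hB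
  rw [tsum_congr_set_coe f hr, tsum_range f hinj]

theorem three_nb {V : Type*} (G : SimpleGraph V) (b w : V) (h : G.Adj b w)
    (h3 : (G.neighborSet b).ncard = 3) :
    ∃ p q, w ≠ p ∧ w ≠ q ∧ p ≠ q ∧ G.neighborSet b = {w, p, q} := by
  obtain ⟨x, y, z, hxy, hxz, hyz, hN⟩ := Set.ncard_eq_three.1 h3
  have hw : w ∈ G.neighborSet b := h
  rw [hN] at hw
  rcases hw with rfl | rfl | rfl
  · exact ⟨y, z, hxy, hxz, hyz, hN⟩
  · exact ⟨x, z, hxy.symm, hyz, hxz, by rw [hN, Set.insert_comm]⟩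
  · refine ⟨x, y, hxz.symm, hyz.symm, hxy, ?_⟩
    rw [hN]; ext; simp; tauto

/-- compatibility of visited sets -/
def Compat {V : Type*} (G : SimpleGraph V) (c : V → Bool)
    (Y : Set ({v : V // c v = false} ⊕ {d : G.Dart // c d.toProd.1 = true})) (X : Set V) : Prop :=
  (∀ y hy, Sum.inl ⟨y, hy⟩ ∈ Y ↔ y ∈ X) ∧
  (∀ b w h hb, b ∉ X → mkd G c b w h hb ∉ Y) ∧
  (∀ b w w' h h' hb, w ≠ w' → b ∈ X → mkd G c b w h hb ∈ Y ∨ mkd G c b w' h' hb ∈ Y)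

theorem Compat.white {V : Type*} {G : SimpleGraph V} {c : V → Bool}
    {Y : Set ({v : V // c v = false} ⊕ {d : G.Dart // c d.toProd.1 = true})} {X : Set V}
    (h : Compat G c Y X) (w : V) (hw : c w = false) :
    Compat G c (insert (Sum.inl ⟨w, hw⟩) Y) (insert w X) := by
  obtain ⟨h1, h2, h3⟩ := h
  refine ⟨?_, ?_, ?_⟩
  · intro y hy
    simp [h1]
  · intro b v h hb hX
    simp only [Set.mem_insert_iff, not_or] at hX ⊢
    exact ⟨by simp [mkd], h2 b v h hb hX.2⟩
  · intro b v v' h h' hb hv hX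
    have : b ∈ X := by
      rcases hX with rfl | hX
      · simp [hw] at hb
      · exact hX
    rcases h3 b v v' h h' hb hv this with h | h
    · exact Or.inl (Or.inr h)
    · exact Or.inr (Or.inr h)

theorem Compat.extra {V : Type*} {G : SimpleGraph V} {c : V → Bool}
    {Y : Set ({v : V // c v = false} ⊕ {d : G.Dart // c d.toProd.1 = true})} {X : Set V}
    (h : Compat G c Y X) (b w : V) (aw : G.Adj b w) (hb : c b = true) (hX : b ∈ X) :
    Compat G c (insert (mkd G c b w aw hb) Y) X := by
  obtain ⟨h1, h2, h3⟩ := h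
  refine ⟨?_, ?_, ?_⟩
  · intro y hy
    rw [← h1 y hy]
    simp [mkd]
  · intro b' v h hb' hX'
    simp only [Set.mem_insert_iff, not_or]
    refine ⟨?_, h2 b' v h hb' hX'⟩
    intro he
    simp only [mkd, Sum.inr.injEq, Subtype.mk.injEq, SimpleGraph.Dart.mk.injEq,
      Prod.mk.injEq] at he
    exact hX' (he.1 ▸ hX)
  · intro b' v v' h h' hb' hv hX'
    rcases h3 b' v v' h h' hb' hv hX' with h | h
    · exact Or.inl (Or.inr h)
    · exact Or.inr (Or.inr h)

theorem Compat.black {V : Type*} {G : SimpleGraph V} {c : V → Bool}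
    {Y : Set ({v : V // c v = false} ⊕ {d : G.Dart // c d.toProd.1 = true})} {X : Set V}
    (h : Compat G c Y X) (b w p q : V) (aw : G.Adj b w) (ap : G.Adj b p) (hb : c b = true)
    (hN : G.neighborSet b = {w, p, q}) :
    Compat G c (insert (mkd G c b p ap hb) (insert (mkd G c b w aw hb) Y)) (insert b X) := by
  obtain ⟨h1, h2, h3⟩ := h
  refine ⟨?_, ?_, ?_⟩
  · intro y hy
    have : y ≠ b := by rintro rfl; simp [hb] at hy
    simp [mkd, h1, this]
  · intro b' v h hb' hX'
    simp only [Set.mem_insert_iff, not_or] at hX' ⊢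
    refine ⟨?_, ?_, h2 b' v h hb' hX'.2⟩ <;>
    · intro he
      simp only [mkd, Sum.inr.injEq, Subtype.mk.injEq, SimpleGraph.Dart.mk.injEq,
        Prod.mk.injEq] at he
      exact hX'.1 he.1
  · intro b' v v' h h' hb' hv hX'
    by_cases hbb : b' = b
    · subst hbb
      have e1 : v ∈ G.neighborSet b' := h
      have e2 : v' ∈ G.neighborSet b' := h'
      rw [hN] at e1 e2
      rcases e1 with rfl | rfl | rfl
      · exact Or.inl (Or.inr (Or.inl rfl))
      · exact Or.inl (Or.inl rfl)
      · rcases e2 with rfl | rfl | rfl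
        · exact Or.inr (Or.inr (Or.inl rfl))
        · exact Or.inr (Or.inl rfl)
        · exact absurd rfl hv
    · have : b' ∈ X := by
        rcases hX' with h | h
        · exact absurd h hbb
        · exact h
      rcases h3 b' v v' h h' hb' hv this with h | h
      · exact Or.inl (Or.inr (Or.inr h))
      · exact Or.inr (Or.inr (Or.inr h))

theorem half_one {V : Type*} {G : SimpleGraph V} {c : V → Bool} {t : ENNReal} {n : ℕ∞}
    {φ : V → Set V → ENNReal}
    (ih : ∀ w hw X Y, Compat G c Y X → pw (fisherBlack G c) t n (Sum.inl ⟨w, hw⟩) Y ≤ φ w X)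
    (b w p q : V) (hb : c b = true) (hp : c p = false) (hq : c q = false)
    (aw : G.Adj b w) (ap : G.Adj b p) (aq : G.Adj b q) (hN : G.neighborSet b = {w, p, q})
    (hwp : w ≠ p) (hwq : w ≠ q) (hpq : p ≠ q)
    {Y : Set ({v : V // c v = false} ⊕ {d : G.Dart // c d.toProd.1 = true})} {X : Set V}
    (h : Compat G c Y X) :
    pw (fisherBlack G c) t n (mkd G c b p ap hb) (insert (mkd G c b w aw hb) Y) ≤
      1 + t * (φ p (insert b X) + (1 + t * φ q (insert b X))) := by
  have hN1 : G.neighborSet b = {p, w, q} := by rw [hN, Set.insert_comm]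
  have hN2 : G.neighborSet b = {q, w, p} := by rw [hN]; ext; simp; tauto
  refine (pw_succ_le _ _ _ _ _).trans ?_
  rw [sum_dart G c b p w q hb hp ap aw aq hN1 hwp.symm hpq hwq
    (fun y => pw (fisherBlack G c) t n y _)]
  have hc := h.black b w p q aw ap hb hN
  gcongr 1 + t * (?_ + ?_)
  · exact ih _ _ _ _ hc
  · rw [pw_mem _ _ _ (mkd G c b w aw hb) _ (by simp), zero_add]
    refine (pw_succ_le _ _ _ _ _).trans ?_
    rw [sum_dart G c b q w p hb hq aq aw ap hN2 hwq.symm hpq.symm hwp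
      (fun y => pw (fisherBlack G c) t n y _)]
    rw [pw_mem _ _ _ (mkd G c b w aw hb) _ (by simp), zero_add,
      pw_mem _ _ _ (mkd G c b p ap hb) _ (by simp), add_zero]
    gcongr
    exact ih _ _ _ _ (hc.extra b q aq hb (by simp))

theorem half_two {V : Type*} {G : SimpleGraph V} {c : V → Bool} {t : ENNReal}
    {φ : V → Set V → ENNReal} {K : ENNReal}
    (ih : ∀ w hw X Y, Compat G c Y X → φ w X ≤ K * pw (fisherBlack G c) t ⊤ (Sum.inl ⟨w, hw⟩) Y)
    (b w p q : V) (hb : c b = true) (hp : c p = false) (hq : c q = false)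
    (aw : G.Adj b w) (ap : G.Adj b p) (aq : G.Adj b q) (hN : G.neighborSet b = {w, p, q})
    (hwp : w ≠ p) (hwq : w ≠ q) (hpq : p ≠ q)
    {Y : Set ({v : V // c v = false} ⊕ {d : G.Dart // c d.toProd.1 = true})} {X : Set V}
    (h : Compat G c Y X) (hbX : b ∉ X) :
    t * (φ p (insert b X) + t * φ q (insert b X)) ≤
    K * pw (fisherBlack G c) t ⊤ (mkd G c b p ap hb) (insert (mkd G c b w aw hb) Y) := by
  have hN1 : G.neighborSet b = {p, w, q} := by rw [hN, Set.insert_comm]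
  have hN2 : G.neighborSet b = {q, w, p} := by rw [hN]; ext; simp; tauto
  have hc := h.black b w p q aw ap hb hN
  have hp1 : mkd G c b p ap hb ∉ insert (mkd G c b w aw hb) Y := by
    simp only [Set.mem_insert_iff, not_or]
    exact ⟨mkd_ne _ _ _ _ _ _ _ _ hwp.symm, h.2.1 _ _ _ _ hbX⟩
  have hq1 : mkd G c b q aq hb ∉ insert (mkd G c b p ap hb) (insert (mkd G c b w aw hb) Y) := by
    simp only [Set.mem_insert_iff, not_or]
    exact ⟨mkd_ne _ _ _ _ _ _ _ _ hpq.symm, mkd_ne _ _ _ _ _ _ _ _ hwq.symm,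
      h.2.1 _ _ _ _ hbX⟩
  rw [pw_top _ _ _ _ hp1, sum_dart G c b p w q hb hp ap aw aq hN1 hwp.symm hpq hwq
    (fun y => pw (fisherBlack G c) t ⊤ y _), pw_top _ _ _ _ hq1,
    sum_dart G c b q w p hb hq aq aw ap hN2 hwq.symm hpq.symm hwp
      (fun y => pw (fisherBlack G c) t ⊤ y _)]
  have i1 := ih _ hp _ _ hc
  have i2 := ih _ hq _ _ (hc.extra b q aq hb (by simp))
  set R := pw (fisherBlack G c) t ⊤ (Sum.inl ⟨p, hp⟩) _
  set S := pw (fisherBlack G c) t ⊤ (Sum.inl ⟨q, hq⟩) _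
  calc _ ≤ t * (K * R + t * (K * S)) := by gcongr
    _ = K * (t * (R + t * S)) := by ring
    _ ≤ _ := by
      gcongr K * ?_
      refine le_trans ?_ le_add_self
      gcongr t * (R + ?_)
      refine le_trans ?_ le_add_self
      refine le_trans ?_ le_add_self
      gcongr t * ?_
      exact le_self_add

theorem step_one {V : Type*} {G : SimpleGraph V} {c : V → Bool} {t z K : ENNReal} {n : ℕ∞}
    (hz : z * z = t ^ 3 + t ^ 4)
    (hbip : ∀ u w : V, G.Adj u w → c u ≠ c w)
    (hcubic : ∀ v : V, c v = true → (G.neighborSet v).ncard = 3)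
    (ih : ∀ w hw X Y, Compat G c Y X →
      pw (fisherBlack G c) t n (Sum.inl ⟨w, hw⟩) Y ≤ K * pw G z ⊤ w X)
    (b w : V) (hb : c b = true) (aw : G.Adj b w)
    {Y : Set ({v : V // c v = false} ⊕ {d : G.Dart // c d.toProd.1 = true})} {X : Set V}
    (h : Compat G c Y X) (hwX : w ∈ X) :
    t * pw (fisherBlack G c) t n (mkd G c b w aw hb) Y ≤
      t * (1 + 2 * t + 2 * t ^ 2) + K * (z * pw G z ⊤ b X) := by
  obtain ⟨p, q, hwp, hwq, hpq, hN⟩ := three_nb G b w aw (hcubic b hb)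
  have hN2 : G.neighborSet b = {w, q, p} := by rw [hN]; ext; simp; tauto
  have ap : G.Adj b p := by rw [← SimpleGraph.mem_neighborSet, hN]; simp
  have aq : G.Adj b q := by rw [← SimpleGraph.mem_neighborSet, hN]; simp
  have wh : ∀ y, G.Adj b y → c y = false := by
    intro y hy
    have := hbip _ _ hy
    rw [hb] at this
    simpa using this.symm
  have hw := wh _ aw
  have hp := wh _ ap
  have hq := wh _ aq
  have hwY : Sum.inl ⟨w, hw⟩ ∈ Y := (h.1 w hw).2 hwX
  by_cases hbX : b ∈ X
  · by_cases hbY : mkd G c b w aw hb ∈ Y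
    · rw [pw_mem _ _ _ _ _ hbY, mul_zero]; exact zero_le
    · have e1 := (h.2.2 b w p aw ap hb hwp hbX).resolve_left hbY
      have e2 := (h.2.2 b w q aw aq hb hwq hbX).resolve_left hbY
      have : pw (fisherBlack G c) t n (mkd G c b w aw hb) Y ≤ 1 := by
        refine (pw_succ_le _ _ _ _ _).trans ?_
        rw [sum_dart G c b w p q hb hw aw ap aq hN hwp hwq hpq
          (fun y => pw (fisherBlack G c) t n y _),
          pw_mem _ _ _ _ _ (Set.mem_insert_of_mem _ e1),
          pw_mem _ _ _ _ _ (Set.mem_insert_of_mem _ e2),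
          pw_mem _ _ _ _ _ (Set.mem_insert_of_mem _ hwY)]
        simp
      refine le_trans ?_ le_self_add
      gcongr t * ?_
      refine this.trans ?_
      rw [add_assoc]
      exact le_self_add
  · have a1 := half_one ih b w p q hb hp hq aw ap aq hN hwp hwq hpq h
    have a2 := half_one ih b w q p hb hq hp aw aq ap hN2 hwq hwp hpq.symm h
    have a3 := pw_succ_le (fisherBlack G c) t n (mkd G c b w aw hb) Y
    rw [sum_dart G c b w p q hb hw aw ap aq hN hwp hwq hpq
          (fun y => pw (fisherBlack G c) t n y _),
          pw_mem _ _ _ _ _ (Set.mem_insert_of_mem _ hwY), zero_add] at a3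
    rw [pw_top G z b X hbX, tsum_three _ w p q hwp hwq hpq hN
      (fun y => pw G z ⊤ y (insert b X)), pw_mem _ _ _ _ _ (Set.mem_insert_of_mem _ hwX), zero_add]
    set P := pw G z ⊤ p (insert b X)
    set Q := pw G z ⊤ q (insert b X)
    calc _ ≤ t * (1 + t * ((1 + t * (K * P + (1 + t * (K * Q)))) +
          (1 + t * (K * Q + (1 + t * (K * P)))))) := by
            gcongr
            refine a3.trans ?_
            gcongr
      _ = t * (1 + 2 * t + 2 * t ^ 2) + K * ((t ^ 3 + t ^ 4) * (P + Q)) := by ring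
      _ = t * (1 + 2 * t + 2 * t ^ 2) + K * (z * (z * (P + Q))) := by rw [← hz]; ring
      _ ≤ _ := by
        gcongr _ + K * (z * ?_)
        exact le_add_self

theorem step_two {V : Type*} {G : SimpleGraph V} {c : V → Bool} {t z K : ENNReal} {n : ℕ∞}
    (hz : z * z = t ^ 3 + t ^ 4)
    (hbip : ∀ u w : V, G.Adj u w → c u ≠ c w)
    (hcubic : ∀ v : V, c v = true → (G.neighborSet v).ncard = 3)
    (ih : ∀ w hw X Y, Compat G c Y X →
      pw G z n w X ≤ K * pw (fisherBlack G c) t ⊤ (Sum.inl ⟨w, hw⟩) Y)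
    (b w : V) (hb : c b = true) (aw : G.Adj b w)
    {Y : Set ({v : V // c v = false} ⊕ {d : G.Dart // c d.toProd.1 = true})} {X : Set V}
    (h : Compat G c Y X) (hwX : w ∈ X) :
    z * pw G z n b X ≤ z + K * (t * pw (fisherBlack G c) t ⊤ (mkd G c b w aw hb) Y) := by
  obtain ⟨p, q, hwp, hwq, hpq, hN⟩ := three_nb G b w aw (hcubic b hb)
  have hN2 : G.neighborSet b = {w, q, p} := by rw [hN]; ext; simp; tauto
  have ap : G.Adj b p := by rw [← SimpleGraph.mem_neighborSet, hN]; simp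
  have aq : G.Adj b q := by rw [← SimpleGraph.mem_neighborSet, hN]; simp
  have wh : ∀ y, G.Adj b y → c y = false := by
    intro y hy
    have := hbip _ _ hy
    rw [hb] at this
    simpa using this.symm
  have hw := wh _ aw
  have hp := wh _ ap
  have hq := wh _ aq
  by_cases hbX : b ∈ X
  · rw [pw_mem _ _ _ _ _ hbX, mul_zero]; exact zero_le
  · have a1 := half_two ih b w p q hb hp hq aw ap aq hN hwp hwq hpq h hbX
    have a2 := half_two ih b w q p hb hq hp aw aq ap hN2 hwq hwp hpq.symm h hbX
    have a3 := pw_succ_le G z n b X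
    rw [tsum_three _ w p q hwp hwq hpq hN
      (fun y => pw G z n y (insert b X)), pw_mem _ _ _ _ _ (Set.mem_insert_of_mem _ hwX),
      zero_add] at a3
    rw [pw_top (fisherBlack G c) t (mkd G c b w aw hb) Y (h.2.1 _ _ _ _ hbX),
      sum_dart G c b w p q hb hw aw ap aq hN hwp hwq hpq
          (fun y => pw (fisherBlack G c) t ⊤ y _)]
    set P := pw G z n p (insert b X)
    set Q := pw G z n q (insert b X)
    set P' := pw (fisherBlack G c) t ⊤ (mkd G c b p ap hb) (insert (mkd G c b w aw hb) Y)
    set Q' := pw (fisherBlack G c) t ⊤ (mkd G c b q aq hb) (insert (mkd G c b w aw hb) Y)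
    calc _ ≤ z * (1 + z * (P + Q)) := by gcongr
      _ = z + (z * z) * (P + Q) := by ring
      _ = z + t * t * (t * (P + t * Q) + t * (Q + t * P)) := by rw [hz]; ring
      _ ≤ z + t * t * (K * P' + K * Q') := by gcongr
      _ = z + K * (t * (t * (P' + Q'))) := by ring
      _ ≤ _ := by
        gcongr z + K * (t * ?_)
        refine le_trans ?_ le_add_self
        gcongr t * ?_
        exact le_add_self

theorem sum_const_le {V : Type*} (G : SimpleGraph V) (hlf : ∀ v : V, (G.neighborSet v).Finite)
    (D : ℕ) (w : V) (hD : (G.neighborSet w).ncard ≤ D) (C : ENNReal) :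
    ∑' _ : G.neighborSet w, C ≤ D * C := by
  rw [ENNReal.tsum_set_const, ← (hlf w).cast_ncard_eq]
  gcongr
  simpa using hD

theorem main_one {V : Type*} {G : SimpleGraph V} {c : V → Bool} {t z : ENNReal}
    (hz : z * z = t ^ 3 + t ^ 4) (hlf : ∀ v : V, (G.neighborSet v).Finite)
    (hbip : ∀ u w : V, G.Adj u w → c u ≠ c w)
    (hcubic : ∀ v : V, c v = true → (G.neighborSet v).ncard = 3)
    (D : ℕ) (hD : ∀ w, (G.neighborSet w).ncard ≤ D) (n : ℕ) :
    ∀ w hw X Y, Compat G c Y X →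
      pw (fisherBlack G c) t n (Sum.inl ⟨w, hw⟩) Y ≤
        (1 + D * (t * (1 + 2 * t + 2 * t ^ 2))) * pw G z ⊤ w X := by
  set K : ENNReal := (1 + D * (t * (1 + 2 * t + 2 * t ^ 2))) with hK
  induction n with
  | zero => intros; simp [pw_zero]
  | succ n ih =>
    intro w hw X Y h
    have hB : ∀ b, G.Adj w b → c b = true := by
      intro y hy
      have := hbip _ _ hy
      rw [hw] at this
      simpa using this.symm
    by_cases hwX : w ∈ X
    · rw [pw_mem _ _ _ _ _ ((h.1 w hw).2 hwX)]; exact zero_le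
    · rw [Nat.cast_succ, pw_succ _ _ _ _ _ (fun hh => hwX ((h.1 w hw).1 hh)),
        pw_top _ _ _ _ hwX, sum_white G c w hw hB (fun y => pw (fisherBlack G c) t n y _),
        ← ENNReal.tsum_mul_left]
      calc _ ≤ 1 + ∑' b : G.neighborSet w, (t * (1 + 2 * t + 2 * t ^ 2) +
            K * (z * pw G z ⊤ b (insert w X))) := by
            gcongr with b
            exact step_one hz hbip hcubic ih _ _ _ _ (h.white w hw) (by simp)
        _ ≤ 1 + (D * (t * (1 + 2 * t + 2 * t ^ 2)) +
            K * (z * ∑' b : G.neighborSet w, pw G z ⊤ b (insert w X))) := by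
            rw [ENNReal.tsum_add, ENNReal.tsum_mul_left (a := K), ENNReal.tsum_mul_left (a := z)]
            gcongr 1 + (?_ + _)
            exact sum_const_le G hlf D w (hD w) _
        _ = _ := by rw [← add_assoc, ← hK]; ring

theorem main_two {V : Type*} {G : SimpleGraph V} {c : V → Bool} {t z : ENNReal}
    (hz : z * z = t ^ 3 + t ^ 4) (hlf : ∀ v : V, (G.neighborSet v).Finite)
    (hbip : ∀ u w : V, G.Adj u w → c u ≠ c w)
    (hcubic : ∀ v : V, c v = true → (G.neighborSet v).ncard = 3)
    (D : ℕ) (hD : ∀ w, (G.neighborSet w).ncard ≤ D) (n : ℕ) :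
    ∀ w hw X Y, Compat G c Y X →
      pw G z n w X ≤ (1 + D * z) * pw (fisherBlack G c) t ⊤ (Sum.inl ⟨w, hw⟩) Y := by
  set K : ENNReal := (1 + D * z) with hK
  induction n with
  | zero => intros; simp [pw_zero]
  | succ n ih =>
    intro w hw X Y h
    have hB : ∀ b, G.Adj w b → c b = true := by
      intro y hy
      have := hbip _ _ hy
      rw [hw] at this
      simpa using this.symm
    by_cases hwX : w ∈ X
    · rw [pw_mem _ _ _ _ _ hwX]; exact zero_le
    · rw [Nat.cast_succ, pw_top _ _ _ _ (fun hh => hwX ((h.1 w hw).1 hh)),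
        pw_succ _ _ _ _ _ hwX, sum_white G c w hw hB (fun y => pw (fisherBlack G c) t ⊤ y _),
        ← ENNReal.tsum_mul_left]
      calc _ ≤ 1 + ∑' b : G.neighborSet w, (z +
            K * (t * pw (fisherBlack G c) t ⊤ (mkd G c b.1 w (G.adj_symm b.2) (hB _ b.2))
              (insert (Sum.inl ⟨w, hw⟩) Y))) := by
            gcongr with b
            exact step_two hz hbip hcubic ih _ _ _ _ (h.white w hw) (by simp)
        _ ≤ 1 + (D * z +
            K * (t * ∑' b : G.neighborSet w,
              pw (fisherBlack G c) t ⊤ (mkd G c b.1 w (G.adj_symm b.2) (hB _ b.2))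
              (insert (Sum.inl ⟨w, hw⟩) Y))) := by
            rw [ENNReal.tsum_add, ENNReal.tsum_mul_left, ENNReal.tsum_mul_left]
            gcongr 1 + (?_ + _)
            exact sum_const_le G hlf D w (hD w) _
        _ = _ := by rw [← add_assoc, ← hK]; ring

theorem root_conv (a : ℕ → ℕ) (μ z : ℝ) (hz : 0 < z)
    (hμ : Tendsto (fun n : ℕ => (a n : ℝ) ^ ((1 : ℝ) / n)) atTop (nhds μ)) (h : z * μ < 1) :
    ∑' n, (a n : ENNReal) * ENNReal.ofReal z ^ n ≠ ⊤ := by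
  have hμ0 : 0 ≤ μ := ge_of_tendsto' hμ fun n => by positivity
  obtain ⟨r, hr1, hr2⟩ := exists_between h
  have hr0 : 0 ≤ r := (mul_nonneg hz.le hμ0).trans hr1.le
  have hs : Summable fun n => (a n : ℝ) * z ^ n := by
    refine Summable.of_norm_bounded_eventually_nat (summable_geometric_of_lt_one hr0 hr2) ?_
    filter_upwards [(hμ.const_mul z).eventually_lt_const hr1, eventually_gt_atTop 0] with n hn hn0
    rw [Real.norm_of_nonneg (by positivity)]
    have e : (a n : ℝ) = ((a n : ℝ) ^ ((1 : ℝ) / n)) ^ n := by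
      rw [← Real.rpow_natCast, ← Real.rpow_mul (by positivity), one_div_mul_cancel (by positivity),
        Real.rpow_one]
    rw [e, ← mul_pow, mul_comm]
    exact pow_le_pow_left₀ (by positivity) hn.le n
  have := hs.tsum_ofReal_ne_top
  convert this using 3 with n
  rw [ENNReal.ofReal_mul (by positivity), ENNReal.ofReal_natCast, ENNReal.ofReal_pow hz.le]

theorem root_div (a : ℕ → ℕ) (μ z : ℝ) (hz : 0 < z)
    (hμ : Tendsto (fun n : ℕ => (a n : ℝ) ^ ((1 : ℝ) / n)) atTop (nhds μ)) (h : 1 < z * μ) :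
    ∑' n, (a n : ENNReal) * ENNReal.ofReal z ^ n = ⊤ := by
  by_contra hc
  have h1 := ENNReal.tendsto_atTop_zero_of_tsum_ne_top hc
  have h2 := h1.eventually_lt_const (u := 1) (by simp)
  obtain ⟨n, ⟨hn1, hn2⟩, hn0⟩ :=
    ((h2.and ((hμ.const_mul z).eventually_const_lt h)).and (eventually_gt_atTop 0)).exists
  have e : (a n : ℝ) = ((a n : ℝ) ^ ((1 : ℝ) / n)) ^ n := by
    rw [← Real.rpow_natCast, ← Real.rpow_mul (by positivity), one_div_mul_cancel (by positivity),
      Real.rpow_one]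
  have h3 : (1 : ℝ) ≤ (a n : ℝ) * z ^ n := by
    rw [e, ← mul_pow, mul_comm]
    exact one_le_pow₀ hn2.le
  have h4 := ENNReal.ofReal_le_ofReal h3
  rw [ENNReal.ofReal_mul (by positivity), ENNReal.ofReal_natCast, ENNReal.ofReal_pow hz.le,
    ENNReal.ofReal_one] at h4
  exact absurd hn1 (not_lt.2 h4)

theorem fisher_lf {V : Type*} (G : SimpleGraph V) 
    (hlf : ∀ v : V, (G.neighborSet v).Finite)
    (c : V → Bool)
    (hbip : ∀ u w : V, G.Adj u w → c u ≠ c w)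
    (hcubic : ∀ v : V, c v = true → (G.neighborSet v).ncard = 3) (x) :
    ((fisherBlack G c).neighborSet x).Finite := by
  rcases x with ⟨w, hw⟩ | ⟨⟨⟨b, w⟩, aw⟩, hb⟩
  · have hB : ∀ b, G.Adj w b → c b = true := by
      intro y hy
      have := hbip _ _ hy
      rw [hw] at this
      simpa using this.symm
    rw [nb_white G c w hw hB]
    have := (hlf w).to_subtype
    exact Set.finite_range _
  · obtain ⟨p, q, hwp, hwq, hpq, hN⟩ := three_nb G b w aw (hcubic b hb)
    have ap : G.Adj b p := by rw [← SimpleGraph.mem_neighborSet, hN]; simp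
    have aq : G.Adj b q := by rw [← SimpleGraph.mem_neighborSet, hN]; simp
    have hw : c w = false := by
      have := hbip _ _ aw
      have hb' : c b = true := hb
      rw [hb'] at this
      simpa using this.symm
    have := nb_dart G c b w p q hb hw aw ap aq hN hwp hwq
    unfold mkd at this
    rw [this]
    exact Set.toFinite _

theorem compat_empty {V : Type*} (G : SimpleGraph V) (c : V → Bool) :
    Compat G c ∅ ∅ := by
  refine ⟨?_, ?_, ?_⟩ <;> simp

theorem conv_iff {V : Type*} (G : SimpleGraph V)
    (hconn : G.Connected)
    (hlf : ∀ v : V, (G.neighborSet v).Finite)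
    (c : V → Bool)
    (hbip : ∀ u w : V, G.Adj u w → c u ≠ c w)
    (hcubic : ∀ v : V, c v = true → (G.neighborSet v).ncard = 3)
    (hqt : ∃ W : Finset V, ∀ v : V, ∃ w ∈ W, ∃ γ : G ≃g G,
      (∀ u : V, c (γ u) = c u) ∧ γ v = w)
    (v : V) (x : {v : V // c v = false} ⊕ {d : G.Dart // c d.toProd.1 = true})
    (z t : ENNReal) (hz0 : z ≠ 0) (hz1 : z ≠ ⊤) (ht0 : t ≠ 0) (ht1 : t ≠ ⊤)
    (hz : z * z = t ^ 3 + t ^ 4) :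
    pw G z ⊤ v ∅ ≠ ⊤ ↔ pw (fisherBlack G c) t ⊤ x ∅ ≠ ⊤ := by
  obtain ⟨D, hD⟩ : ∃ D : ℕ, ∀ w, (G.neighborSet w).ncard ≤ D := by
    obtain ⟨W, hW⟩ := hqt
    refine ⟨W.sup fun w => (G.neighborSet w).ncard, fun v => ?_⟩
    obtain ⟨w, hw, γ, -, h⟩ := hW v
    have : (G.neighborSet v).ncard = (G.neighborSet w).ncard := by
      rw [← h]
      exact Nat.card_congr (γ.mapNeighborSet v)
    rw [this]
    exact Finset.le_sup (f := fun w => (G.neighborSet w).ncard) hw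
  obtain ⟨w, hw, hx⟩ : ∃ w hw, (fisherBlack G c).Reachable x (Sum.inl ⟨w, hw⟩) := by
    rcases x with ⟨w, hw⟩ | ⟨⟨⟨b, w⟩, aw⟩, hb⟩
    · exact ⟨w, hw, SimpleGraph.Reachable.refl _⟩
    · have hw : c w = false := by
        have := hbip _ _ aw
        have hb' : c b = true := hb
        rw [hb'] at this
        simpa using this.symm
      refine ⟨w, hw, SimpleGraph.Adj.reachable ?_⟩
      simp [fisherBlack, SimpleGraph.fromRel_adj]
  have e1 : pw G z ⊤ v ∅ ≠ ⊤ ↔ pw G z ⊤ w ∅ ≠ ⊤ :=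
    ⟨pw_reach G z hz0 hz1 _ _ (hconn.preconnected v w),
      pw_reach G z hz0 hz1 _ _ (hconn.preconnected w v)⟩
  have e2 : pw (fisherBlack G c) t ⊤ x ∅ ≠ ⊤ ↔
      pw (fisherBlack G c) t ⊤ (Sum.inl ⟨w, hw⟩) ∅ ≠ ⊤ :=
    ⟨pw_reach _ t ht0 ht1 _ _ hx, pw_reach _ t ht0 ht1 _ _ hx.symm⟩
  rw [e1, e2]
  constructor
  · intro h
    refine ne_top_of_le_ne_top (ENNReal.mul_ne_top ?_ h) (pw_top_le _ _ _ _ _ fun n =>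
      main_one hz hlf hbip hcubic D hD n w hw ∅ ∅ (compat_empty G c))
    finiteness
  · intro h
    refine ne_top_of_le_ne_top (ENNReal.mul_ne_top ?_ h) (pw_top_le _ _ _ _ _ fun n =>
      main_two hz hlf hbip hcubic D hD n w hw ∅ ∅ (compat_empty G c))
    finiteness

theorem final_calc (μ μt : ℝ) (h0 : 0 ≤ μ) (h0t : 0 ≤ μt)
    (h1 : ∀ t, 0 < t → t * μt < 1 → Real.sqrt (t ^ 3 + t ^ 4) * μ ≤ 1)
    (h2 : ∀ t, 0 < t → 1 < t * μt → 1 ≤ Real.sqrt (t ^ 3 + t ^ 4) * μ) :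
    1 / μ ^ 2 = (1 / μt) ^ 3 + (1 / μt) ^ 4 := by
  have sq : ∀ t : ℝ, 0 < t → (Real.sqrt (t ^ 3 + t ^ 4) * μ) ^ 2 = (t ^ 3 + t ^ 4) * μ ^ 2 := by
    intro t ht
    rw [mul_pow, Real.sq_sqrt (by positivity)]
  have h1' : ∀ t, 0 < t → t * μt < 1 → (t ^ 3 + t ^ 4) * μ ^ 2 ≤ 1 := by
    intro t ht h
    rw [← sq t ht]
    exact pow_le_one₀ (by positivity) (h1 t ht h)
  have h2' : ∀ t, 0 < t → 1 < t * μt → 1 ≤ (t ^ 3 + t ^ 4) * μ ^ 2 := by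
    intro t ht h
    rw [← sq t ht]
    exact one_le_pow₀ (h2 t ht h)
  rcases h0t.eq_or_lt with h | h
  · subst h
    rcases h0.eq_or_lt with h | h
    · subst h; simp
    · exfalso
      have a := h1' (1 + 1 / μ ^ 2) (by positivity) (by simp)
      have hs : 0 < 1 / μ ^ 2 := by positivity
      have e : (1 / μ ^ 2) * μ ^ 2 = 1 := by field_simp
      have hm : 0 < μ ^ 2 := by positivity
      set s := 1 / μ ^ 2
      have : 1 + s < (1 + s) ^ 3 + (1 + s) ^ 4 := by nlinarith [pow_pos hs 2, pow_pos hs 3, pow_pos hs 4]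
      nlinarith
  · have hc : Continuous fun t : ℝ => (t ^ 3 + t ^ 4) * μ ^ 2 := by fun_prop
    have ht0 : 0 < 1 / μt := by positivity
    have u1 : ((1 / μt) ^ 3 + (1 / μt) ^ 4) * μ ^ 2 ≤ 1 := by
      refine le_of_tendsto (hc.continuousWithinAt (s := Set.Iio (1 / μt)) (x := 1 / μt)) ?_
      filter_upwards [Ioo_mem_nhdsLT ht0] with t ht
      exact h1' t ht.1 ((lt_div_iff₀ h).1 ht.2)
    have u2 : 1 ≤ ((1 / μt) ^ 3 + (1 / μt) ^ 4) * μ ^ 2 := by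
      refine ge_of_tendsto (hc.continuousWithinAt (s := Set.Ioi (1 / μt)) (x := 1 / μt)) ?_
      filter_upwards [self_mem_nhdsWithin] with t ht
      exact h2' t (ht0.trans ht) ((div_lt_iff₀ h).1 ht)
    have u := le_antisymm u1 u2
    have hm : μ ^ 2 ≠ 0 := by
      intro hm; rw [hm] at u; simp at u
    rw [div_eq_iff hm, u]

/-- The semi-cubic Fisher transformation: if every black vertex of the bipartite graph `G`
has degree 3, the connective constants of `G` and of its partial Fisher transform `G̃`
satisfy `1/μ² = (1/μ̃)³ + (1/μ̃)⁴`. -/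
theorem fisher_black_connective_constant {V : Type*} (G : SimpleGraph V) [Infinite V]
    (hconn : G.Connected)
    (hlf : ∀ v : V, (G.neighborSet v).Finite)
    (c : V → Bool)
    (hbip : ∀ u w : V, G.Adj u w → c u ≠ c w)
    (hcubic : ∀ v : V, c v = true → (G.neighborSet v).ncard = 3)
    (hqt : ∃ W : Finset V, ∀ v : V, ∃ w ∈ W, ∃ γ : G ≃g G,
      (∀ u : V, c (γ u) = c u) ∧ γ v = w)
    (v : V) (x : {v : V // c v = false} ⊕ {d : G.Dart // c d.toProd.1 = true})
    (μ μt : ℝ)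
    (hμ : Tendsto (fun n : ℕ => (sawCount G v n : ℝ) ^ ((1 : ℝ) / n)) atTop (nhds μ))
    (hμt : Tendsto (fun n : ℕ => (sawCount (fisherBlack G c) x n : ℝ) ^ ((1 : ℝ) / n))
      atTop (nhds μt)) :
    1 / μ ^ 2 = (1 / μt) ^ 3 + (1 / μt) ^ 4 := by
  have hlft := fisher_lf G hlf c hbip hcubic
  have key : ∀ t : ℝ, 0 < t →
      (∑' n : ℕ, (sawCount G v n : ENNReal) * ENNReal.ofReal (Real.sqrt (t ^ 3 + t ^ 4)) ^ n ≠ ⊤ ↔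
      ∑' n : ℕ, (sawCount (fisherBlack G c) x n : ENNReal) * ENNReal.ofReal t ^ n ≠ ⊤) := by
    intro t ht
    rw [← pw_eq_saw G hlf, ← pw_eq_saw _ hlft]
    have hs : 0 < Real.sqrt (t ^ 3 + t ^ 4) := Real.sqrt_pos.2 (by positivity)
    refine conv_iff G hconn hlf c hbip hcubic hqt v x _ _ (by simpa using hs) (by simp)
      (by simpa using ht) (by simp) ?_
    rw [← ENNReal.ofReal_mul hs.le, Real.mul_self_sqrt (by positivity),
      ENNReal.ofReal_add (by positivity) (by positivity), ENNReal.ofReal_pow ht.le,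
      ENNReal.ofReal_pow ht.le]
  refine final_calc μ μt (ge_of_tendsto' hμ fun n => by positivity)
    (ge_of_tendsto' hμt fun n => by positivity) ?_ ?_
  · intro t ht h
    have hs : 0 < Real.sqrt (t ^ 3 + t ^ 4) := Real.sqrt_pos.2 (by positivity)
    by_contra! hc
    exact (key t ht).2 (root_conv _ μt t ht hμt h) (root_div _ μ _ hs hμ hc)
  · intro t ht h
    have hs : 0 < Real.sqrt (t ^ 3 + t ^ 4) := Real.sqrt_pos.2 (by positivity)
    by_contra! hc
    exact (key t ht).1 (root_conv _ μ _ hs hμ hc) (root_div _ μt t ht hμt h)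
end

section
/- Let Δ ≥ 2 and let G be an infinite, connected, Δ-regular, vertex-transitive simple graph. If σ_n(v)^{1/n} → μ as n → ∞ for some vertex v, then μ ≥ √(Δ−1). -/
open Filter

namespace SawAux

variable {V : Type*}

open Classical in
/-- ordered adjacency count between two finite sets -/
noncomputable def e (N : V → Finset V) (A B : Finset V) : ℤ :=
  ∑ x ∈ A, ∑ y ∈ B, if y ∈ N x then 1 else 0

/-- edge boundary size -/
noncomputable def b (N : V → Finset V) (Δ : ℕ) (A : Finset V) : ℤ :=
  (Δ : ℤ) * A.card - e N A A

open Classical in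
lemma e_union_left (N : V → Finset V) {A B : Finset V} (C : Finset V) (h : Disjoint A B) :
    e N (A ∪ B) C = e N A C + e N B C := by
  unfold e; rw [Finset.sum_union h]

open Classical in
lemma e_union_right (N : V → Finset V) {A B : Finset V} (C : Finset V) (h : Disjoint A B) :
    e N C (A ∪ B) = e N C A + e N C B := by
  unfold e; rw [← Finset.sum_add_distrib]
  exact Finset.sum_congr rfl fun x _ => Finset.sum_union h

lemma e_symm (N : V → Finset V) (hs : ∀ x y, y ∈ N x → x ∈ N y) (A B : Finset V) :
    e N A B = e N B A := by
  unfold e; rw [Finset.sum_comm]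
  refine Finset.sum_congr rfl fun x _ => Finset.sum_congr rfl fun y _ => ?_
  by_cases h : x ∈ N y
  · rw [if_pos h, if_pos (hs _ _ h)]
  · rw [if_neg h, if_neg (fun h' => h (hs _ _ h'))]

lemma e_nonneg (N : V → Finset V) (A B : Finset V) : 0 ≤ e N A B := by
  unfold e
  refine Finset.sum_nonneg fun x _ => Finset.sum_nonneg fun y _ => ?_
  split_ifs <;> simp

open Classical in
lemma e_eq (N : V → Finset V) (A B : Finset V) :
    e N A B = ∑ x ∈ A, (((N x) ∩ B).card : ℤ) := by
  unfold e
  refine Finset.sum_congr rfl fun x _ => ?_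
  rw [Finset.sum_ite, Finset.sum_const_zero, add_zero, Finset.sum_const, Finset.inter_comm,
    ← Finset.filter_mem_eq_inter]
  simp

open Classical in
lemma b_submod (N : V → Finset V) (Δ : ℕ) (A B : Finset V) :
    b N Δ (A ∪ B) + b N Δ (A ∩ B) ≤ b N Δ A + b N Δ B := by
  have hc := Finset.card_union_add_card_inter A B
  set I := A ∩ B with hI
  have hA : A = (A \ B) ∪ I := (Finset.sdiff_union_inter A B).symm
  have hB : B = (B \ A) ∪ I := by
    rw [hI, Finset.inter_comm]; exact (Finset.sdiff_union_inter B A).symm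
  have d1 : Disjoint (A \ B) I := Finset.disjoint_sdiff_inter A B
  have d2 : Disjoint (B \ A) I := by
    rw [hI, Finset.inter_comm]; exact Finset.disjoint_sdiff_inter B A
  have d3 : Disjoint (A \ B) (B \ A) := disjoint_sdiff_sdiff
  have hU : A ∪ B = (A \ B) ∪ ((B \ A) ∪ I) := by
    ext x; simp only [hI, Finset.mem_union, Finset.mem_sdiff, Finset.mem_inter]; tauto
  have d4 : Disjoint (A \ B) ((B \ A) ∪ I) := Finset.disjoint_union_right.2 ⟨d3, d1⟩
  have eU : e N (A ∪ B) (A ∪ B) = e N (A \ B) (A \ B) + e N (A \ B) (B \ A) + e N (A \ B) I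
      + (e N (B \ A) (A \ B) + e N (B \ A) (B \ A) + e N (B \ A) I)
      + (e N I (A \ B) + e N I (B \ A) + e N I I) := by
    rw [hU, e_union_left N _ d4, e_union_left N _ d2]
    simp only [e_union_right N _ d4, e_union_right N _ d2]
    ring
  have eA : e N A A = e N (A \ B) (A \ B) + e N (A \ B) I + e N I (A \ B) + e N I I := by
    conv_lhs => rw [hA]
    rw [e_union_left N _ d1]; simp only [e_union_right N _ d1]; ring
  have eB : e N B B = e N (B \ A) (B \ A) + e N (B \ A) I + e N I (B \ A) + e N I I := by
    conv_lhs => rw [hB]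
    rw [e_union_left N _ d2]; simp only [e_union_right N _ d2]; ring
  have n1 := e_nonneg N (A \ B) (B \ A)
  have n2 := e_nonneg N (B \ A) (A \ B)
  unfold b
  have hc' : ((A ∪ B).card : ℤ) + I.card = A.card + B.card := by exact_mod_cast hc
  have : (Δ : ℤ) * (A ∪ B).card + Δ * I.card = Δ * A.card + Δ * B.card := by
    rw [← mul_add, ← mul_add, hc']
  linarith

open Classical in
lemma b_eq (N : V → Finset V) (Δ : ℕ) (hc : ∀ x, (N x).card = Δ) (A : Finset V) :
    b N Δ A = ∑ x ∈ A, (((N x) \ A).card : ℤ) := by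
  unfold b
  rw [e_eq, mul_comm, ← nsmul_eq_mul, ← Finset.sum_const, ← Finset.sum_sub_distrib]
  refine Finset.sum_congr rfl fun x _ => ?_
  have := Finset.card_sdiff_add_card_inter (N x) A
  rw [← hc x]; push_cast [← this]; ring

lemma b_nonneg (N : V → Finset V) (Δ : ℕ) (hc : ∀ x, (N x).card = Δ) (A : Finset V) :
    0 ≤ b N Δ A := by
  classical
  rw [b_eq N Δ hc]; exact Finset.sum_nonneg fun _ _ => by positivity

open Classical in
/-- edge connectivity -/
lemma b_ge (G : SimpleGraph V) [Infinite V] (Δ : ℕ) (hconn : G.Connected)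
    (htrans : ∀ v w : V, ∃ γ : G ≃g G, γ v = w)
    (N : V → Finset V) (hN : ∀ x y, y ∈ N x ↔ G.Adj x y) (hc : ∀ x, (N x).card = Δ)
    (A : Finset V) (hA : A.Nonempty) : (Δ : ℤ) ≤ b N Δ A := by
  -- choose an atom
  have hex : ∃ n : ℕ, ∃ B : Finset V, B.Nonempty ∧ (b N Δ B).toNat = n := ⟨_, A, hA, rfl⟩
  obtain ⟨B0, hB0, hB0n⟩ := Nat.find_spec hex
  have hmin0 : ∀ C : Finset V, C.Nonempty → b N Δ B0 ≤ b N Δ C := by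
    intro C hC
    have h1 := Nat.find_min' hex ⟨C, hC, rfl⟩
    have := b_nonneg N Δ hc C
    have := b_nonneg N Δ hc B0
    omega
  have hex2 : ∃ n : ℕ, ∃ B : Finset V, B.Nonempty ∧ b N Δ B = b N Δ B0 ∧ B.card = n :=
    ⟨_, B0, hB0, rfl, rfl⟩
  obtain ⟨B, hB, hBb, hBn⟩ := Nat.find_spec hex2
  have hmin : ∀ C : Finset V, C.Nonempty → b N Δ B ≤ b N Δ C := fun C hC => hBb ▸ hmin0 C hC
  have hmin2 : ∀ C : Finset V, C.Nonempty → b N Δ C = b N Δ B → B.card ≤ C.card := by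
    intro C hC h
    rw [hBn]; exact Nat.find_min' hex2 ⟨C, hC, h.trans hBb, rfl⟩
  refine le_trans ?_ (hmin A hA)
  have hNγ : ∀ (γ : G ≃g G) x, N (γ x) = (N x).image γ := by
    intro γ x; ext y
    rw [hN, Finset.mem_image]
    constructor
    · intro h
      refine ⟨γ.symm y, ?_, by simp⟩
      rw [hN, ← γ.map_adj_iff]; simpa using h
    · rintro ⟨z, hz, rfl⟩
      rw [hN] at hz; exact γ.map_adj_iff.2 hz
  have hbγ : ∀ (γ : G ≃g G) C, b N Δ (C.image γ) = b N Δ C := by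
    intro γ C
    rw [b_eq N Δ hc, b_eq N Δ hc, Finset.sum_image fun _ _ _ _ h => γ.injective h]
    refine Finset.sum_congr rfl fun x _ => ?_
    rw [hNγ, ← Finset.image_sdiff _ _ γ.injective, Finset.card_image_of_injective _ γ.injective]
  have hinv : ∀ (γ : G ≃g G), (B ∩ B.image γ).Nonempty → B.image γ = B := by
    intro γ hne
    have h1 := b_submod N Δ B (B.image γ)
    rw [hbγ] at h1
    have h2 := hmin _ hne
    have h3 := hmin (B ∪ B.image γ) (hB.mono Finset.subset_union_left)
    have h4 := hmin2 _ hne (by linarith)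
    have h5 : B ∩ B.image γ = B := Finset.eq_of_subset_of_card_le Finset.inter_subset_left h4
    have h6 : B ⊆ B.image γ := Finset.inter_eq_left.1 h5
    exact (Finset.eq_of_subset_of_card_le h6
      (by rw [Finset.card_image_of_injective _ γ.injective])).symm
  obtain ⟨u, hu⟩ := hB
  have hk : ∀ w ∈ B, (N w ∩ B).card = (N u ∩ B).card := by
    intro w hw
    obtain ⟨γ, hγ⟩ := htrans u w
    have h1 := hinv γ ⟨w, Finset.mem_inter.2 ⟨hw, Finset.mem_image.2 ⟨u, hu, hγ⟩⟩⟩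
    rw [← hγ, hNγ]
    conv_lhs => rw [← h1]
    rw [← Finset.image_inter _ _ γ.injective, Finset.card_image_of_injective _ γ.injective]
  have hbB : b N Δ B = B.card * ((Δ : ℤ) - (N u ∩ B).card) := by
    unfold b
    rw [e_eq, Finset.sum_congr rfl (fun w hw => by rw [hk w hw]), Finset.sum_const]
    simp; ring
  set k := (N u ∩ B).card with hkdef
  have hk1 : k + 1 ≤ B.card := by
    have : N u ∩ B ⊆ B.erase u := by
      intro y hy
      rw [Finset.mem_inter, hN] at hy
      exact Finset.mem_erase.2 ⟨hy.1.ne', hy.2⟩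
    have := Finset.card_le_card this
    rw [Finset.card_erase_of_mem hu] at this
    have := Finset.card_pos.2 ⟨u, hu⟩
    omega
  have hk2 : k < Δ := by
    by_contra hlt
    push Not at hlt
    have hcl : ∀ w ∈ B, ∀ y, G.Adj w y → y ∈ B := by
      intro w hw y hy
      have h1 : N w ∩ B = N w := Finset.eq_of_subset_of_card_le Finset.inter_subset_left
        (by rw [hk w hw, hc]; exact hlt)
      have : y ∈ N w ∩ B := by rw [h1, hN]; exact hy
      exact (Finset.mem_inter.1 this).2
    have hall : ∀ x y, G.Walk x y → x ∈ B → y ∈ B := by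
      intro x y p
      induction p with
      | nil => exact id
      | cons h p ih => exact fun hx => ih (hcl _ hx _ h)
    obtain ⟨z, hz⟩ := Infinite.exists_notMem_finset B
    obtain ⟨p⟩ := hconn.preconnected u z
    exact hz (hall _ _ p hu)
  rw [hbB]
  have : (k : ℤ) + 1 ≤ B.card := by exact_mod_cast hk1
  have : (k : ℤ) + 1 ≤ Δ := by exact_mod_cast hk2
  have : (0 : ℤ) ≤ k := by positivity
  nlinarith [mul_nonneg (sub_nonneg.2 ‹(k : ℤ) + 1 ≤ B.card›) (by linarith : (0:ℤ) ≤ (Δ:ℤ) - k),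
    mul_nonneg ‹(0 : ℤ) ≤ k› (sub_nonneg.2 ‹(k : ℤ) + 1 ≤ Δ›)]

/-- no finite component outside `T` -/
def Full (N : V → Finset V) (T : Finset V) : Prop :=
  ∀ A : Finset V, A.Nonempty → Disjoint A T → ∃ a ∈ A, ∃ y ∈ N a, y ∉ A ∧ y ∉ T

open Classical in
lemma b_union (N : V → Finset V) (hs : ∀ x y, y ∈ N x → x ∈ N y) (Δ : ℕ)
    {A B : Finset V} (h : Disjoint A B) :
    b N Δ (A ∪ B) = b N Δ A + b N Δ B - 2 * e N B A := by
  unfold b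
  rw [e_union_left N _ h, e_union_right N _ h, e_union_right N _ h, e_symm N hs A B,
    Finset.card_union_of_disjoint h]
  push_cast; ring

open Classical in
/-- edges out of `X` split as those to `T` and those outside. -/
lemma b_split (N : V → Finset V) (Δ : ℕ) (hc : ∀ x, (N x).card = Δ)
    {T X : Finset V} (h : Disjoint T X) :
    b N Δ X = e N X T + ∑ x ∈ X, ((N x \ (T ∪ X)).card : ℤ) := by
  rw [b_eq N Δ hc, e_eq, ← Finset.sum_add_distrib]
  refine Finset.sum_congr rfl fun x _ => ?_
  have h1 : N x \ X = (N x ∩ T) ∪ (N x \ (T ∪ X)) := by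
    ext y
    have : y ∈ T → y ∉ X := fun h1 h2 => Finset.disjoint_left.1 h h1 h2
    simp only [Finset.mem_sdiff, Finset.mem_union, Finset.mem_inter]; tauto
  rw [h1, Finset.card_union_of_disjoint]
  · push_cast; rfl
  · rw [Finset.disjoint_left]; intro y; simp only [Finset.mem_sdiff, Finset.mem_union, Finset.mem_inter]; tauto

open Classical in
lemma exists_fill (N : V → Finset V) (hs : ∀ x y, y ∈ N x → x ∈ N y) (Δ : ℕ) (hΔ : 2 ≤ Δ)
    (hc : ∀ x, (N x).card = Δ) (hb : ∀ A : Finset V, A.Nonempty → (Δ : ℤ) ≤ b N Δ A)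
    (T : Finset V) :
    ∃ T', T ⊆ T' ∧ Full N T' ∧ ∀ x ∈ T', x ∉ T → ∀ y ∈ N x, y ∈ T' := by
  have hex : ∃ n : ℕ, ∃ T' : Finset V, (T ⊆ T' ∧ ∀ x ∈ T', x ∉ T → ∀ y ∈ N x, y ∈ T') ∧
    (b N Δ T').toNat = n := ⟨_, T, ⟨subset_rfl, fun x h h' => absurd h h'⟩, rfl⟩
  obtain ⟨T', ⟨hT, hcl⟩, hn⟩ := Nat.find_spec hex
  refine ⟨T', hT, ?_, hcl⟩
  intro A hA hd
  by_contra hcon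
  push Not at hcon
  have h1 := Nat.find_min' hex ⟨T' ∪ A, ⟨hT.trans Finset.subset_union_left, ?_⟩, rfl⟩
  · have h2 := b_union N hs Δ hd.symm
    have h3 := b_split N Δ hc hd.symm
    have h4 : ∑ x ∈ A, ((N x \ (T' ∪ A)).card : ℤ) = 0 := by
      refine Finset.sum_eq_zero fun x hx => ?_
      rw [Nat.cast_eq_zero, Finset.card_eq_zero, Finset.sdiff_eq_empty_iff_subset]
      intro y hy
      rw [Finset.mem_union]
      by_cases hyA : y ∈ A
      · exact Or.inr hyA
      · exact Or.inl (hcon x hx y hy hyA)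
    have h5 := hb A hA
    have := b_nonneg N Δ hc T'
    have := b_nonneg N Δ hc (T' ∪ A)
    omega
  · intro x hx hxT y hy
    rw [Finset.mem_union] at hx ⊢
    rcases hx with hx | hx
    · exact Or.inl (hcl x hx hxT y hy)
    · by_cases hyA : y ∈ A
      · exact Or.inr hyA
      · exact Or.inl (hcon x hx y hy hyA)

open Classical in
/-- the one-step estimate -/
lemma step (N : V → Finset V) (hs : ∀ x y, y ∈ N x → x ∈ N y) (Δ : ℕ) (hΔ : 2 ≤ Δ)
    (hc : ∀ x, (N x).card = Δ) (hb : ∀ A : Finset V, A.Nonempty → (Δ : ℤ) ≤ b N Δ A)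
    (T : Finset V) (hT : Full N T) (x : V) (hx : x ∉ T) :
    ∃ T', T ⊆ T' ∧ x ∈ T' ∧ Full N T' ∧ 1 ≤ (N x \ T').card ∧
      b N Δ T' ≤ b N Δ T + 2 * (N x \ T').card - Δ := by
  obtain ⟨T', h1, h2, h3⟩ := exists_fill N hs Δ hΔ hc hb (insert x T)
  have hxT' : x ∈ T' := h1 (Finset.mem_insert_self _ _)
  have hTT' : T ⊆ T' := (Finset.subset_insert _ _).trans h1
  refine ⟨T', hTT', hxT', h2, ?_, ?_⟩
  all_goals
    have hxX : x ∈ T' \ T := Finset.mem_sdiff.2 ⟨hxT', hx⟩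
    have hcl : ∀ a ∈ T' \ T, a ≠ x → ∀ y ∈ N a, y ∈ T' := by
      intro a ha hax
      rw [Finset.mem_sdiff] at ha
      exact h3 a ha.1 (by simp [hax, ha.2])
  · obtain ⟨a, ha, y, hy, hyA, hyT⟩ := hT (T' \ T) ⟨x, hxX⟩ Finset.sdiff_disjoint
    have hyT' : y ∉ T' := fun h => hyA (Finset.mem_sdiff.2 ⟨h, hyT⟩)
    have : a = x := by
      by_contra hax
      exact hyT' (hcl a ha hax y hy)
    subst this
    exact Finset.card_pos.2 ⟨y, Finset.mem_sdiff.2 ⟨hy, hyT'⟩⟩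
  · have hd : Disjoint T (T' \ T) := Finset.disjoint_sdiff
    have hu : T ∪ (T' \ T) = T' := Finset.union_sdiff_of_subset hTT'
    have e1 := b_union N hs Δ hd
    have e2 := b_split N Δ hc hd
    rw [hu] at e1 e2
    rw [Finset.sum_eq_single_of_mem x hxX] at e2
    · have := hb (T' \ T) ⟨x, hxX⟩
      linarith
    · intro a ha hax
      rw [Nat.cast_eq_zero, Finset.card_eq_zero, Finset.sdiff_eq_empty_iff_subset]
      exact hcl a ha hax

open Classical in
/-- gluing walks -/
lemma glue (G : SimpleGraph V) (T T' D : Finset V) (x : V) (hTT' : T ⊆ T') (hx : x ∈ T')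
    (hxT : x ∉ T) (hD : ∀ y ∈ D, G.Adj x y) (n : ℕ) (c : ℝ)
    (H : ∀ y ∈ D, ∃ F : Finset (Σ w : V, G.Walk y w), c ≤ F.card ∧
      ∀ p ∈ F, p.2.IsPath ∧ p.2.length = n ∧ ∀ u ∈ p.2.support, u ∉ T') :
    ∃ F : Finset (Σ w : V, G.Walk x w), D.card * c ≤ F.card ∧
      ∀ p ∈ F, p.2.IsPath ∧ p.2.length = n + 1 ∧ ∀ u ∈ p.2.support, u ∉ T := by
  choose! F hF1 hF2 using H
  let f : (Σ y : {y // y ∈ D}, Σ w : V, G.Walk y.1 w) → Σ w : V, G.Walk x w :=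
    fun q => ⟨q.2.1, SimpleGraph.Walk.cons (hD q.1.1 q.1.2) q.2.2⟩
  have hf : Function.Injective f := by
    rintro ⟨⟨y, hy⟩, w, p⟩ ⟨⟨y', hy'⟩, w', p'⟩ h
    simp only [f, Sigma.mk.injEq] at h
    obtain ⟨rfl, h⟩ := h
    have h := eq_of_heq h
    rw [SimpleGraph.Walk.cons.injEq] at h
    obtain ⟨rfl, h⟩ := h
    have h := eq_of_heq h
    subst h
    rfl
  refine ⟨(D.attach.sigma fun y => F y.1).image f, ?_, ?_⟩
  · rw [Finset.card_image_of_injective _ hf, Finset.card_sigma]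
    push_cast
    have : (D.card : ℝ) * c = ∑ y ∈ D.attach, c := by simp
    rw [this]
    exact Finset.sum_le_sum fun y _ => hF1 y.1 y.2
  · intro p hp
    rw [Finset.mem_image] at hp
    obtain ⟨⟨⟨y, hy⟩, w, q⟩, hq, rfl⟩ := hp
    rw [Finset.mem_sigma] at hq
    obtain ⟨h1, h2, h3⟩ := hF2 y hy _ hq.2
    simp only [f] at *
    refine ⟨?_, ?_, ?_⟩
    · rw [SimpleGraph.Walk.cons_isPath_iff]
      exact ⟨h1, fun h => h3 x h hx⟩
    · simpa using h2
    · intro u hu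
      rw [SimpleGraph.Walk.support_cons, List.mem_cons] at hu
      rcases hu with rfl | hu
      · exact hxT
      · exact fun h => h3 u hu (hTT' h)

lemma count (G : SimpleGraph V) (N : V → Finset V) (hN : ∀ x y, y ∈ N x ↔ G.Adj x y)
    (Δ : ℕ) (hΔ : 2 ≤ Δ)
    (hc : ∀ x, (N x).card = Δ) (hb : ∀ A : Finset V, A.Nonempty → (Δ : ℤ) ≤ b N Δ A)
    (r : ℝ) (hr : 1 ≤ r) (hr2 : ∀ k : ℕ, k ≤ Δ - 2 → r ^ (2 * k) ≤ k + 1) (n : ℕ) :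
    ∀ (T : Finset V) (x : V), Full N T → x ∉ T → (∃ z ∈ T, z ∈ N x) →
    ∃ F : Finset (Σ w : V, G.Walk x w), r ^ ((n : ℤ) * (Δ - 2) - b N Δ T) ≤ F.card ∧
      ∀ p ∈ F, p.2.IsPath ∧ p.2.length = n ∧ ∀ u ∈ p.2.support, u ∉ T := by
  classical
  have hs : ∀ x y, y ∈ N x → x ∈ N y := fun x y h => by
    rw [hN] at h ⊢; exact h.symm
  have hr0 : (0 : ℝ) < r := by linarith
  induction n with
  | zero =>
    intro T x _ hx _
    refine ⟨{⟨x, SimpleGraph.Walk.nil⟩}, ?_, ?_⟩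
    · have := b_nonneg N Δ hc T
      have := zpow_le_one_of_nonpos₀ hr (n := -b N Δ T) (by linarith)
      simpa using this
    · simp [hx]
  | succ n ih =>
    intro T x hT hx ⟨z, hzT, hzx⟩
    obtain ⟨T', h1, h2, h3, h4, h5⟩ := step N hs Δ hΔ hc hb T hT x hx
    obtain ⟨F, hF1, hF2⟩ := glue G T T' (N x \ T') x h1 h2 hx
      (fun y hy => (hN x y).1 (Finset.mem_sdiff.1 hy).1) n _
      (fun y hy => ih T' y h3 (Finset.mem_sdiff.1 hy).2
        ⟨x, h2, hs _ _ (Finset.mem_sdiff.1 hy).1⟩)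
    refine ⟨F, le_trans ?_ hF1, hF2⟩
    set d := (N x \ T').card with hd
    have hd2 : d + 1 ≤ Δ := by
      have : N x \ T' ⊆ (N x).erase z := by
        intro y hy
        rw [Finset.mem_sdiff] at hy
        refine Finset.mem_erase.2 ⟨?_, hy.1⟩
        rintro rfl
        exact hy.2 (h1 hzT)
      have := Finset.card_le_card this
      rw [Finset.card_erase_of_mem hzx, hc] at this
      omega
    have hdr := hr2 (d - 1) (by omega)
    have hdc : ((d - 1 : ℕ) : ℝ) + 1 = d := by
      rw [Nat.cast_sub h4]; simp
    rw [hdc] at hdr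
    refine le_trans ?_ (mul_le_mul_of_nonneg_right hdr (by positivity))
    rw [← zpow_natCast, ← zpow_add₀ hr0.ne']
    refine zpow_le_zpow_right₀ hr ?_
    have : ((2 * (d - 1) : ℕ) : ℤ) = 2 * d - 2 := by omega
    rw [this]
    push_cast
    linarith

lemma exists_r (Δ : ℕ) (hΔ : 2 ≤ Δ) : ∃ r : ℝ, 1 ≤ r ∧ r ^ (Δ - 2) = Real.sqrt ((Δ : ℝ) - 1) ∧
    ∀ k : ℕ, k ≤ Δ - 2 → r ^ (2 * k) ≤ k + 1 := by
  obtain ⟨m, rfl⟩ := Nat.exists_eq_add_of_le hΔ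
  have e1 : 2 + m - 2 = m := by omega
  rw [e1]
  have e2 : ((2 + m : ℕ) : ℝ) - 1 = 1 + m := by push_cast; ring
  rw [e2]
  rcases Nat.eq_zero_or_pos m with rfl | hm
  · exact ⟨1, le_rfl, by simp, fun k hk => by simp⟩
  have hm' : (0 : ℝ) < m := by exact_mod_cast hm
  refine ⟨(1 + m : ℝ) ^ ((1 : ℝ) / (2 * m)), ?_, ?_, ?_⟩
  · exact Real.one_le_rpow (by linarith) (by positivity)
  · rw [← Real.rpow_natCast, ← Real.rpow_mul (by positivity), Real.sqrt_eq_rpow]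
    congr 1; field_simp
  · intro k hk
    have hk' : (k : ℝ) ≤ m := by exact_mod_cast hk
    rw [← Real.rpow_natCast, ← Real.rpow_mul (by positivity)]
    have := rpow_one_add_le_one_add_mul_self (s := (m : ℝ)) (p := (k : ℝ) / m) (by linarith)
      (by positivity) (by rw [div_le_one hm']; exact hk')
    have e3 : (1 : ℝ) / (2 * m) * ((2 * k : ℕ) : ℝ) = k / m := by push_cast; field_simp
    rw [e3]
    have e4 : (k : ℝ) / m * m = k := by field_simp
    linarith

lemma finite_walks (G : SimpleGraph V) (N : V → Finset V) (hN : ∀ x y, y ∈ N x ↔ G.Adj x y)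
    (n : ℕ) : ∀ x, Set.Finite {p : Σ w : V, G.Walk x w | p.2.length = n} := by
  classical
  induction n with
  | zero =>
    intro x
    refine (Set.finite_singleton (⟨x, SimpleGraph.Walk.nil⟩ : Σ w : V, G.Walk x w)).subset ?_
    rintro ⟨w, p⟩ hp
    cases p with
    | nil => simp
    | cons h p => simp at hp
  | succ n ih =>
    intro x
    have : Set.Finite (⋃ y : {y // y ∈ N x},
        (fun q : Σ w : V, G.Walk y.1 w => (⟨q.1, SimpleGraph.Walk.cons ((hN x y.1).1 y.2) q.2⟩ :
          Σ w : V, G.Walk x w)) '' {p | p.2.length = n}) :=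
      Set.finite_iUnion fun y => (ih y.1).image _
    refine this.subset ?_
    rintro ⟨w, p⟩ hp
    cases p with
    | nil => simp at hp
    | @cons _ y _ h p =>
      rw [Set.mem_iUnion]
      exact ⟨⟨y, (hN x y).2 h⟩, ⟨w, p⟩, by simpa using hp, rfl⟩

end SawAux

/-- For an infinite, connected, `Δ`-regular, vertex-transitive simple graph with `Δ ≥ 2`,
the connective constant satisfies `μ ≥ √(Δ−1)`. -/
theorem connective_constant_lower_bound {V : Type*} (G : SimpleGraph V) [Infinite V]
    (Δ : ℕ) (hΔ : 2 ≤ Δ)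
    (hconn : G.Connected)
    (hreg : ∀ v : V, (G.neighborSet v).ncard = Δ)
    (htrans : ∀ v w : V, ∃ γ : G ≃g G, γ v = w)
    (v : V) (μ : ℝ)
    (hμ : Tendsto (fun n : ℕ => (sawCount G v n : ℝ) ^ ((1 : ℝ) / n)) atTop (nhds μ)) :
    Real.sqrt ((Δ : ℝ) - 1) ≤ μ := by
  classical
  have hfin : ∀ x, (G.neighborSet x).Finite := fun x =>
    Set.finite_of_ncard_pos (by rw [hreg x]; omega)
  let N : V → Finset V := fun x => (hfin x).toFinset
  have hN : ∀ x y, y ∈ N x ↔ G.Adj x y := fun x y => by simp [N]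
  have hc : ∀ x, (N x).card = Δ := fun x => by
    rw [← hreg x, Set.ncard_eq_toFinset_card _ (hfin x)]
  have hs : ∀ x y, y ∈ N x → x ∈ N y := fun x y h => by
    rw [hN] at h ⊢; exact h.symm
  have hb := fun A hA => SawAux.b_ge G Δ hconn htrans N hN hc A hA
  obtain ⟨r, hr, hrs, hr2⟩ := SawAux.exists_r Δ hΔ
  have hr0 : (0 : ℝ) < r := by linarith
  have hfull : SawAux.Full N ∅ := by
    intro A hA _
    have h := hb A hA
    rw [SawAux.b_eq N Δ hc] at h
    obtain ⟨a, ha, h'⟩ := Finset.exists_ne_zero_of_sum_ne_zero (by omega :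
      ∑ x ∈ A, (((N x) \ A).card : ℤ) ≠ 0)
    have : (N a \ A).card ≠ 0 := by exact_mod_cast h'
    obtain ⟨y, hy⟩ := Finset.card_pos.1 (Nat.pos_of_ne_zero this)
    rw [Finset.mem_sdiff] at hy
    exact ⟨a, ha, y, hy.1, hy.2, by simp⟩
  obtain ⟨T', h1, h2, h3, h4, h5⟩ := SawAux.step N hs Δ hΔ hc hb ∅ hfull v (by simp)
  set K : ℝ := r ^ (-((Δ : ℤ) - 2) - SawAux.b N Δ T') with hK
  have hK0 : 0 < K := by positivity
  have hlow : ∀ n : ℕ, 1 ≤ n → K * (Real.sqrt ((Δ : ℝ) - 1)) ^ n ≤ sawCount G v n := by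
    intro n hn
    obtain ⟨n, rfl⟩ := Nat.exists_eq_add_of_le' hn
    obtain ⟨F, hF1, hF2⟩ := SawAux.glue G ∅ T' (N v \ T') v h1 h2 (by simp)
      (fun y hy => (hN v y).1 (Finset.mem_sdiff.1 hy).1) n _
      (fun y hy => SawAux.count G N hN Δ hΔ hc hb r hr hr2 n T' y h3 (Finset.mem_sdiff.1 hy).2
        ⟨v, h2, hs _ _ (Finset.mem_sdiff.1 hy).1⟩)
    have hle : (F.card : ℝ) ≤ sawCount G v (n + 1) := by
      have hset : Set.Finite {p : Σ w : V, G.Walk v w | p.2.IsPath ∧ p.2.length = n + 1} :=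
        (SawAux.finite_walks G N hN (n + 1) v).subset fun p hp => hp.2
      have h6 : (F : Set (Σ w : V, G.Walk v w)).ncard ≤
          {p : Σ w : V, G.Walk v w | p.2.IsPath ∧ p.2.length = n + 1}.ncard :=
        Set.ncard_le_ncard (fun p hp => ⟨(hF2 p hp).1, (hF2 p hp).2.1⟩) hset
      rw [Set.ncard_coe_finset] at h6
      exact_mod_cast h6
    refine le_trans ?_ (hF1.trans hle)
    have h7 : (1 : ℝ) ≤ (N v \ T').card := by exact_mod_cast h4
    refine le_trans ?_ (le_mul_of_one_le_left (by positivity) h7)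
    rw [← hrs, hK, ← pow_mul, ← zpow_natCast, ← zpow_add₀ hr0.ne']
    refine zpow_le_zpow_right₀ hr ?_
    have : (((Δ - 2) * (n + 1) : ℕ) : ℤ) = ((Δ : ℤ) - 2) * (n + 1) := by
      push_cast [Nat.cast_sub hΔ]; ring
    rw [this]
    linarith
  have hs0 : 0 ≤ Real.sqrt ((Δ : ℝ) - 1) := Real.sqrt_nonneg _
  have hlim : Tendsto (fun n : ℕ => K ^ ((1 : ℝ) / n) * Real.sqrt ((Δ : ℝ) - 1)) atTop
      (nhds (Real.sqrt ((Δ : ℝ) - 1))) := by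
    have h8 : Tendsto (fun n : ℕ => K ^ ((1 : ℝ) / n)) atTop (nhds (K ^ (0 : ℝ))) :=
      ((Real.continuous_const_rpow hK0.ne').tendsto 0).comp tendsto_one_div_atTop_nhds_zero_nat
    rw [Real.rpow_zero] at h8
    simpa using h8.mul_const (Real.sqrt ((Δ : ℝ) - 1))
  refine le_of_tendsto_of_tendsto hlim hμ ?_
  filter_upwards [eventually_ge_atTop 1] with n hn
  have h9 := Real.rpow_le_rpow (by positivity) (hlow n hn) (by positivity : (0 : ℝ) ≤ 1 / n)
  rw [Real.mul_rpow hK0.le (by positivity), one_div, Real.pow_rpow_inv_natCast hs0 (by omega)] at h9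
  rw [one_div]; exact h9
end

section
/- Let Δ ≥ 2 and let G be an infinite, connected, Δ-regular, vertex-transitive simple graph. Then for every vertex v and every n ≥ 0, the number of forward-extendable 2n-step SAWs from v satisfies σ^F_{2n}(v) ≥ (Δ−1)^n. -/
open Filter

/-- The number of forward-extendable `n`-step self-avoiding walks in `G` starting at `v`:
`n`-step self-avoiding walks from `v` whose vertex sequence is an initial segment of some
infinite self-avoiding walk from `v`. -/
noncomputable def fwdSawCount {V : Type*} (G : SimpleGraph V) (v : V) (n : ℕ) : ℕ :=
  Nat.card {p : Σ w : V, G.Walk v w // p.2.IsPath ∧ p.2.length = n ∧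
    ∃ f : ℕ → V, Function.Injective f ∧ (∀ i : ℕ, G.Adj (f i) (f (i + 1))) ∧
      ∀ i : ℕ, i ≤ n → f i = p.2.getVert i}

section Aux
open scoped Classical
universe u
variable {V : Type u} (G : SimpleGraph V) [G.LocallyFinite]

namespace FwdSaw

noncomputable def bd (S : Finset V) : ℕ :=
  ∑ x ∈ S, ((G.neighborFinset x).filter (fun y => y ∉ S)).card

lemma bd_eq (S W : Finset V) (h : S ⊆ W) :
    bd G S = ∑ x ∈ W, ∑ y ∈ G.neighborFinset x, if (x ∈ S ∧ y ∉ S) then 1 else 0 := by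
  unfold bd
  rw [← Finset.sum_subset h]
  · refine Finset.sum_congr rfl fun x hx => ?_
    simp [hx, Finset.card_filter]
  · intro x _ hx
    simp [hx]

lemma bd_submod (X Y : Finset V) : bd G (X ∩ Y) + bd G (X ∪ Y) ≤ bd G X + bd G Y := by
  rw [bd_eq G (X ∩ Y) (X ∪ Y) (by intro a; simp; tauto), bd_eq G (X ∪ Y) (X ∪ Y) (by simp),
    bd_eq G X (X ∪ Y) (by intro a; simp; tauto), bd_eq G Y (X ∪ Y) (by intro a; simp; tauto)]
  simp only [← Finset.sum_add_distrib]
  refine Finset.sum_le_sum fun x _ => Finset.sum_le_sum fun y _ => ?_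
  by_cases h1 : x ∈ X <;> by_cases h2 : x ∈ Y <;> by_cases h3 : y ∈ X <;> by_cases h4 : y ∈ Y <;>
    simp [h1, h2, h3, h4]

lemma bd_map (γ : G ≃g G) (S : Finset V) : bd G (S.image γ) = bd G S := by
  unfold bd
  rw [Finset.sum_image (by intro a _ b _ h; exact γ.injective h)]
  refine Finset.sum_congr rfl fun x _ => ?_
  symm
  refine Finset.card_bij (fun y _ => γ y) ?_ ?_ ?_
  · intro y hy
    simp only [Finset.mem_filter, SimpleGraph.mem_neighborFinset] at hy ⊢
    refine ⟨γ.map_adj_iff.2 hy.1, ?_⟩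
    simpa using hy.2
  · intro a _ b _ h; exact γ.injective h
  · intro b hb
    obtain ⟨a, rfl⟩ := γ.surjective b
    simp only [Finset.mem_filter, SimpleGraph.mem_neighborFinset] at hb
    refine ⟨a, ?_, rfl⟩
    simp only [Finset.mem_filter, SimpleGraph.mem_neighborFinset]
    exact ⟨γ.map_adj_iff.1 hb.1, by simpa using hb.2⟩

lemma indeg_map (γ : G ≃g G) (S : Finset V) (hS : S.image γ = S) (x : V) :
    ((G.neighborFinset (γ x)).filter (fun y => y ∉ S)).card =
      ((G.neighborFinset x).filter (fun y => y ∉ S)).card := by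
  have hm : ∀ y, γ y ∈ S ↔ y ∈ S := by
    intro y
    conv_lhs => rw [← hS]
    simp
  symm
  refine Finset.card_bij (fun y _ => γ y) ?_ ?_ ?_
  · intro y hy
    simp only [Finset.mem_filter, SimpleGraph.mem_neighborFinset] at hy ⊢
    exact ⟨γ.map_adj_iff.2 hy.1, by rw [hm]; exact hy.2⟩
  · intro a _ b _ h; exact γ.injective h
  · intro b hb
    obtain ⟨a, rfl⟩ := γ.surjective b
    simp only [Finset.mem_filter, SimpleGraph.mem_neighborFinset] at hb
    refine ⟨a, ?_, rfl⟩
    simp only [Finset.mem_filter, SimpleGraph.mem_neighborFinset]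
    exact ⟨γ.map_adj_iff.1 hb.1, by rw [← hm]; exact hb.2⟩

lemma bd_pos [Infinite V] (hconn : G.Connected) (S : Finset V) (hS : S.Nonempty) :
    0 < bd G S := by
  by_contra h0
  have h0 : bd G S = 0 := by omega
  unfold bd at h0
  rw [Finset.sum_eq_zero_iff] at h0
  have hcl : ∀ x ∈ S, ∀ y, G.Adj x y → y ∈ S := by
    intro x hx y hxy
    by_contra hy
    have := h0 x hx
    rw [Finset.card_eq_zero] at this
    have h2 : y ∈ (G.neighborFinset x).filter (fun y => y ∉ S) := by simp [hxy, hy]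
    rw [this] at h2
    simp at h2
  obtain ⟨a, ha⟩ := hS
  have hall : ∀ b, b ∈ S := by
    intro b
    obtain ⟨p⟩ := hconn.preconnected a b
    induction p with
    | nil => exact ha
    | cons h p ih => exact ih (hcl _ ha _ h)
  exact Set.infinite_univ (Set.Finite.subset S.finite_toSet (fun b _ => hall b))

lemma bd_ge [Infinite V] (hconn : G.Connected) (Δ : ℕ) (hreg : ∀ v, G.degree v = Δ)
    (htrans : ∀ v w : V, ∃ γ : G ≃g G, γ v = w) (S : Finset V) (hS : S.Nonempty) :
    Δ ≤ bd G S := by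
  -- minimal boundary value
  have hex : ∃ k, ∃ A : Finset V, A.Nonempty ∧ bd G A = k := ⟨_, S, hS, rfl⟩
  set lam := Nat.find hex with hlam
  have hmin : ∀ A : Finset V, A.Nonempty → lam ≤ bd G A := fun A hA =>
    Nat.find_min' hex ⟨A, hA, rfl⟩
  have hex2 : ∃ k, ∃ A : Finset V, A.Nonempty ∧ bd G A = lam ∧ A.card = k := by
    obtain ⟨A, hA, h⟩ := Nat.find_spec hex
    exact ⟨_, A, hA, h, rfl⟩
  obtain ⟨A, hA, hbd, hcard⟩ := Nat.find_spec hex2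
  have hmin2 : ∀ B : Finset V, B.Nonempty → bd G B = lam → A.card ≤ B.card := fun B hB h => by
    rw [hcard]; exact Nat.find_min' hex2 ⟨B, hB, h, rfl⟩
  refine le_trans ?_ (hmin S hS)
  rw [← hbd]
  obtain ⟨a, ha⟩ := hA
  have key : ∀ x ∈ A, ((G.neighborFinset x).filter (fun y => y ∉ A)).card =
      ((G.neighborFinset a).filter (fun y => y ∉ A)).card := by
    intro x hx
    obtain ⟨γ, hγ⟩ := htrans a x
    have him : A.image γ = A := by
      have hne : (A ∩ A.image γ).Nonempty :=
        ⟨x, Finset.mem_inter.2 ⟨hx, Finset.mem_image.2 ⟨a, ha, hγ⟩⟩⟩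
      have h1 := bd_submod G A (A.image γ)
      rw [bd_map G γ A, hbd] at h1
      have h2 := hmin _ hne
      have h3 := hmin (A ∪ A.image γ) ⟨a, Finset.mem_union_left _ ha⟩
      have h4 := hmin2 _ hne (by omega)
      have h5 : A ∩ A.image γ = A := Finset.eq_of_subset_of_card_le Finset.inter_subset_left h4
      have h6 : A ⊆ A.image γ := Finset.inter_eq_left.1 h5
      exact (Finset.eq_of_subset_of_card_le h6 Finset.card_image_le).symm
    rw [← hγ]
    exact indeg_map G γ A him a
  have hb : bd G A = A.card * ((G.neighborFinset a).filter (fun y => y ∉ A)).card := by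
    unfold bd
    rw [Finset.sum_congr rfl key]; simp
  have hpos := bd_pos G hconn A ⟨a, ha⟩
  have hsplit := Finset.card_filter_add_card_filter_not (s := G.neighborFinset a) (fun y => y ∈ A)
  rw [SimpleGraph.card_neighborFinset_eq_degree, hreg] at hsplit
  have hin : ((G.neighborFinset a).filter (fun y => y ∈ A)).card + 1 ≤ A.card := by
    have : (G.neighborFinset a).filter (fun y => y ∈ A) ⊆ A.erase a := by
      intro y hy
      simp only [Finset.mem_filter, SimpleGraph.mem_neighborFinset] at hy
      exact Finset.mem_erase.2 ⟨hy.1.ne', hy.2⟩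
    have h1 := Finset.card_le_card this
    rw [Finset.card_erase_of_mem ha] at h1
    have := Finset.card_pos.2 ⟨a, ha⟩
    omega
  rw [hb] at hpos ⊢
  set e := ((G.neighborFinset a).filter (fun y => y ∉ A)).card
  set d := ((G.neighborFinset a).filter (fun y => y ∈ A)).card
  have he : 0 < e := Nat.pos_of_mul_pos_left hpos
  calc Δ = d + e := hsplit.symm
    _ ≤ (d + 1) * e := by nlinarith
    _ ≤ _ := Nat.mul_le_mul_right _ hin

/-! Reachability avoiding a finite set. -/

def R (F : Finset V) (u : V) : Set V :=
  {x | Relation.ReflTransGen (fun a b => G.Adj a b ∧ b ∉ F) u x}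

def Good (F : Finset V) (u : V) : Prop := u ∉ F ∧ (R G F u).Infinite

omit [G.LocallyFinite] in
lemma R_notMem {F : Finset V} {u x : V} (hu : u ∉ F) (hx : x ∈ R G F u) : x ∉ F := by
  unfold R at hx
  cases hx with
  | refl => exact hu
  | tail _ h => exact h.2

omit [G.LocallyFinite] in
lemma R_self (F : Finset V) (u : V) : u ∈ R G F u := Relation.ReflTransGen.refl

omit [G.LocallyFinite] in
lemma R_trans {F : Finset V} {u x y : V} (h : x ∈ R G F u) (h' : y ∈ R G F x) : y ∈ R G F u :=
  Relation.ReflTransGen.trans h h'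

omit [G.LocallyFinite] in
lemma R_step {F : Finset V} {u x y : V} (h : x ∈ R G F u) (h' : G.Adj x y) (hy : y ∉ F) :
    y ∈ R G F u :=
  Relation.ReflTransGen.tail h ⟨h', hy⟩

omit [G.LocallyFinite] in
lemma R_symm {F : Finset V} {u x : V} (hu : u ∉ F) (hx : x ∈ R G F u) : u ∈ R G F x := by
  have hx' : Relation.ReflTransGen (fun a b => G.Adj a b ∧ b ∉ F) u x := hx
  induction hx' with
  | refl => exact R_self G F u
  | @tail b c hb h ih =>
    exact R_trans G (R_step G (R_self G F c) h.1.symm (R_notMem G hu hb)) (ih hb)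

omit [G.LocallyFinite] in
lemma R_mono {F F' : Finset V} (h : F ⊆ F') (u : V) : R G F' u ⊆ R G F u := by
  intro x hx
  exact Relation.ReflTransGen.mono (fun a b hab => ⟨hab.1, fun hb => hab.2 (h hb)⟩) _ _ hx

noncomputable def ch (F : Finset V) (u : V) : Finset V :=
  (G.neighborFinset u).filter (fun w => Good G (insert u F) w)

lemma mem_ch {F : Finset V} {u w : V} : w ∈ ch G F u ↔ G.Adj u w ∧ Good G (insert u F) w := by
  simp [ch]

lemma exists_A (F : Finset V) (u : V) : ∃ A : Finset V, ∀ x, x ∈ A ↔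
    (x = u ∨ ∃ w, G.Adj u w ∧ w ∉ insert u F ∧ (R G (insert u F) w).Finite ∧
      x ∈ R G (insert u F) w) := by
  have hfin : ({x | x = u ∨ ∃ w, G.Adj u w ∧ w ∉ insert u F ∧ (R G (insert u F) w).Finite ∧
      x ∈ R G (insert u F) w} : Set V).Finite := by
    have : ({u} ∪ ⋃ w ∈ {w | w ∈ G.neighborFinset u ∧ (R G (insert u F) w).Finite},
        R G (insert u F) w : Set V).Finite := by
      refine (Set.finite_singleton u).union (Set.Finite.biUnion ?_ ?_)
      · exact (G.neighborFinset u).finite_toSet.subset (fun w hw => hw.1)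
      · intro w hw; exact hw.2
    refine this.subset ?_
    rintro x (rfl | ⟨w, h1, h2, h3, h4⟩)
    · simp
    · right
      simp only [Set.mem_iUnion]
      exact ⟨w, ⟨by simpa using h1, h3⟩, h4⟩
  exact ⟨hfin.toFinset, by intro x; simp⟩

lemma A_out {F : Finset V} {u : V} {A : Finset V} (hA : ∀ x, x ∈ A ↔
    (x = u ∨ ∃ w, G.Adj u w ∧ w ∉ insert u F ∧ (R G (insert u F) w).Finite ∧
      x ∈ R G (insert u F) w)) {x y : V} (hx : x ∈ A) (hxy : G.Adj x y) (hy : y ∉ A) :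
    y ∈ F ∨ (x = u ∧ y ∈ ch G F u) := by
  by_cases hyF : y ∈ F
  · exact Or.inl hyF
  have hyu : y ≠ u := fun h => hy ((hA y).2 (Or.inl h))
  have hyF' : y ∉ insert u F := by simp [hyF, hyu]
  rcases (hA x).1 hx with rfl | ⟨w, h1, h2, h3, h4⟩
  · refine Or.inr ⟨rfl, (mem_ch G).2 ⟨hxy, hyF', ?_⟩⟩
    intro hfin
    exact hy ((hA y).2 (Or.inr ⟨y, hxy, hyF', hfin, R_self G _ _⟩))
  · exact absurd ((hA y).2 (Or.inr ⟨w, h1, h2, h3, R_step G h4 hxy hyF'⟩)) hy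

lemma A_sub {F : Finset V} {u : V} {A : Finset V} (hA : ∀ x, x ∈ A ↔
    (x = u ∨ ∃ w, G.Adj u w ∧ w ∉ insert u F ∧ (R G (insert u F) w).Finite ∧
      x ∈ R G (insert u F) w)) {x : V} (hx : x ∈ A) : x ∈ R G F u := by
  rcases (hA x).1 hx with rfl | ⟨w, h1, h2, h3, h4⟩
  · exact R_self G _ _
  · refine R_trans G (R_step G (R_self G F u) h1 ?_) (R_mono G (Finset.subset_insert u F) w h4)
    intro h; exact h2 (Finset.mem_insert_of_mem h)

lemma exists_ch {F : Finset V} {u : V} (h : Good G F u) : (ch G F u).Nonempty := by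
  by_contra hne
  rw [Finset.not_nonempty_iff_eq_empty] at hne
  obtain ⟨A, hA⟩ := exists_A G F u
  refine h.2 (A.finite_toSet.subset ?_)
  intro x hx
  have hx' : Relation.ReflTransGen (fun a b => G.Adj a b ∧ b ∉ F) u x := hx
  induction hx' with
  | refl => exact (hA u).2 (Or.inl rfl)
  | @tail b c hb h ih =>
    by_contra hc
    rcases A_out G hA (ih hb) h.1 hc with h1 | h1
    · exact h.2 h1
    · rw [hne] at h1; simp at h1

noncomputable def Phi (F : Finset V) (u : V) : ℕ :=
  ∑ x ∈ F, ((G.neighborFinset x).filter (fun a => a ∈ R G F u)).card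

lemma Phi_step {Δ : ℕ} (hbd : ∀ S : Finset V, S.Nonempty → Δ ≤ bd G S)
    {F : Finset V} {u w : V} (h : Good G F u) (hw : w ∈ ch G F u) :
    Phi G (insert u F) w + Δ ≤ Phi G F u + 2 * (ch G F u).card := by
  obtain ⟨A, hA⟩ := exists_A G F u
  obtain ⟨huw, hwg⟩ := (mem_ch G).1 hw
  have huA : u ∈ A := (hA u).2 (Or.inl rfl)
  have hAF : ∀ x ∈ A, x ∉ F := fun x hx => R_notMem G h.1 (A_sub G hA hx)
  -- boundary of A
  have h1 : bd G A ≤ (ch G F u).card +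
      ∑ x ∈ A, ((G.neighborFinset x).filter (fun y => y ∈ F)).card := by
    unfold bd
    calc _ ≤ ∑ x ∈ A, ((if x = u then (ch G F u).card else 0) +
        ((G.neighborFinset x).filter (fun y => y ∈ F)).card) := by
          refine Finset.sum_le_sum fun x hx => ?_
          split_ifs with hxu
          · refine le_trans (Finset.card_le_card ?_) (Finset.card_union_le _ _)
            intro y hy
            simp only [Finset.mem_filter, SimpleGraph.mem_neighborFinset] at hy
            rcases A_out G hA hx hy.1 hy.2 with h2 | h2
            · simp [hy.1, h2]
            · simp [h2.2]
          · rw [zero_add]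
            refine Finset.card_le_card ?_
            intro y hy
            simp only [Finset.mem_filter, SimpleGraph.mem_neighborFinset] at hy
            rcases A_out G hA hx hy.1 hy.2 with h2 | h2
            · simp [hy.1, h2]
            · exact absurd h2.1 hxu
      _ = _ := by
          rw [Finset.sum_add_distrib, Finset.sum_ite_eq' A u]
          simp [huA]
  have h2 : ∑ x ∈ A, ((G.neighborFinset x).filter (fun y => y ∈ F)).card =
      ∑ x ∈ F, ((G.neighborFinset x).filter (fun y => y ∈ A)).card := by
    have e1 : ∀ x (S : Finset V), (G.neighborFinset x).filter (fun y => y ∈ S) =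
        S.filter (fun y => G.Adj x y) := by
      intro x S; ext y; simp [and_comm]
    simp only [e1]
    refine (Finset.sum_card_bipartiteAbove_eq_sum_card_bipartiteBelow (fun x y => G.Adj x y)
      (s := A) (t := F)).trans ?_
    refine Finset.sum_congr rfl fun x _ => ?_
    unfold Finset.bipartiteBelow
    congr 1
    ext y; simp [G.adj_comm]
  have h3 := hbd A ⟨u, huA⟩
  have hdisj : ∀ x ∈ A, x ∉ R G (insert u F) w := by
    intro x hx hxR
    rcases (hA x).1 hx with rfl | ⟨w', g1, g2, g3, g4⟩
    · exact R_notMem G hwg.1 hxR (by simp)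
    · refine hwg.2 (g3.subset ?_)
      intro y hy
      exact R_trans G g4 (R_trans G (R_symm G hwg.1 hxR) hy)
  have hsub : R G (insert u F) w ⊆ R G F u := by
    intro x hx
    refine R_trans G (R_step G (R_self G F u) huw ?_) (R_mono G (Finset.subset_insert u F) w hx)
    intro h; exact hwg.1 (Finset.mem_insert_of_mem h)
  have h4 : ((G.neighborFinset u).filter (fun a => a ∈ R G (insert u F) w)).card ≤
      (ch G F u).card := by
    refine Finset.card_le_card ?_
    intro a ha
    simp only [Finset.mem_filter, SimpleGraph.mem_neighborFinset] at ha
    refine (mem_ch G).2 ⟨ha.1, R_notMem G hwg.1 ha.2, ?_⟩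
    refine hwg.2.mono ?_
    intro y hy
    exact R_trans G (R_symm G hwg.1 ha.2) hy
  have h5 : ∑ x ∈ F, ((G.neighborFinset x).filter (fun a => a ∈ R G (insert u F) w)).card +
      ∑ x ∈ F, ((G.neighborFinset x).filter (fun y => y ∈ A)).card ≤ Phi G F u := by
    unfold Phi
    rw [← Finset.sum_add_distrib]
    refine Finset.sum_le_sum fun x _ => ?_
    rw [← Finset.card_union_of_disjoint]
    · refine Finset.card_le_card ?_
      intro y hy
      simp only [Finset.mem_union, Finset.mem_filter] at hy ⊢
      rcases hy with hy | hy
      · exact ⟨hy.1, hsub hy.2⟩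
      · exact ⟨hy.1, A_sub G hA hy.2⟩
    · rw [Finset.disjoint_left]
      intro y hy hy'
      simp only [Finset.mem_filter] at hy hy'
      exact hdisj y hy'.2 hy.2
  have h6 : Phi G (insert u F) w =
      ((G.neighborFinset u).filter (fun a => a ∈ R G (insert u F) w)).card +
      ∑ x ∈ F, ((G.neighborFinset x).filter (fun a => a ∈ R G (insert u F) w)).card := by
    unfold Phi
    rw [Finset.sum_insert h.1]
  omega

lemma Phi_pos {F : Finset V} {u w : V} (hw : w ∈ ch G F u) : 1 ≤ Phi G (insert u F) w := by
  obtain ⟨huw, hwg⟩ := (mem_ch G).1 hw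
  unfold Phi
  refine le_trans ?_ (Finset.single_le_sum (f := fun x =>
    ((G.neighborFinset x).filter (fun a => a ∈ R G (insert u F) w)).card)
    (fun _ _ => Nat.zero_le _) (Finset.mem_insert_self u F))
  refine Finset.card_pos.2 ⟨w, ?_⟩
  simp [huw, R_self]

/-! Rays. -/

lemma exists_ray {F : Finset V} {u : V} (h : Good G F u) :
    ∃ f : ℕ → V, f 0 = u ∧ Function.Injective f ∧ (∀ i, G.Adj (f i) (f (i + 1))) ∧
      ∀ i, f i ∉ F := by
  have hnext : ∀ p : {p : Finset V × V // Good G p.1 p.2}, ∃ q : {p : Finset V × V // Good G p.1 p.2},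
      q.1.1 = insert p.1.2 p.1.1 ∧ G.Adj p.1.2 q.1.2 := by
    rintro ⟨⟨F, u⟩, h⟩
    obtain ⟨w, hw⟩ := exists_ch G h
    obtain ⟨h1, h2⟩ := (mem_ch G).1 hw
    exact ⟨⟨(insert u F, w), h2⟩, rfl, h1⟩
  choose nx hnx1 hnx2 using hnext
  let s : ℕ → {p : Finset V × V // Good G p.1 p.2} := fun n => Nat.rec ⟨(F, u), h⟩ (fun _ p => nx p) n
  have hs : ∀ n, s (n + 1) = nx (s n) := fun n => rfl
  have hmono : Monotone (fun n => (s n).1.1) := by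
    refine monotone_nat_of_le_succ fun n => ?_
    rw [hs, hnx1]
    exact Finset.subset_insert _ _
  have hlt : ∀ i j, i < j → (s i).1.2 ∈ (s j).1.1 := by
    intro i j hij
    refine hmono (Nat.succ_le_of_lt hij) ?_
    show _ ∈ (s (i + 1)).1.1
    rw [hs, hnx1]
    exact Finset.mem_insert_self _ _
  have hne : ∀ i j, i < j → (s i).1.2 ≠ (s j).1.2 := by
    intro i j hij he
    have := hlt i j hij
    rw [he] at this
    exact (s j).2.1 this
  refine ⟨fun n => (s n).1.2, rfl, ?_, ?_, ?_⟩
  · intro i j hij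
    rcases lt_trichotomy i j with h | h | h
    · exact absurd hij (hne i j h)
    · exact h
    · exact absurd hij.symm (hne j i h)
  · intro i
    show G.Adj (s i).1.2 (s (i + 1)).1.2
    rw [hs]; exact hnx2 _
  · intro i hi
    exact (s i).2.1 (hmono (Nat.zero_le i) hi)

/-! Good paths, as reversed lists. -/

inductive GP (v : V) : List V → Prop
  | base : GP v [v]
  | step (u w : V) (t : List V) : GP v (u :: t) → w ∈ ch G t.toFinset u → GP v (w :: u :: t)

noncomputable def chl : List V → Finset V
  | [] => ∅
  | u :: t => ch G t.toFinset u

noncomputable def T : ℕ → List V → Finset (List V)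
  | 0, l => {l}
  | m + 1, l => (chl G l).biUnion (fun w => T m (w :: l))

noncomputable def P : List V → ℕ
  | [] => 1
  | [_] => 1
  | _ :: u :: t => P (u :: t) * (chl G (u :: t)).card

lemma R_empty [Infinite V] (hconn : G.Connected) (v : V) : Good G ∅ v := by
  refine ⟨by simp, ?_⟩
  have : R G ∅ v = Set.univ := by
    ext x
    simp only [Set.mem_univ, iff_true]
    obtain ⟨p⟩ := hconn.preconnected v x
    induction p with
    | nil => exact R_self G _ _
    | cons h p ih => exact R_trans G (R_step G (R_self G _ _) h (by simp)) ih
  rw [this]; exact Set.infinite_univ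

lemma GP_good [Infinite V] (hconn : G.Connected) {v u : V} {t : List V} (h : GP G v (u :: t)) :
    Good G t.toFinset u := by
  cases h with
  | base => simpa using R_empty G hconn v
  | step u w t h hw =>
    rw [List.toFinset_cons]
    exact ((mem_ch G).1 hw).2

lemma GP_ne {v : V} {l : List V} (h : GP G v l) : l ≠ [] := by
  cases h <;> simp

lemma GP_cons {v w : V} {l : List V} (h : GP G v l) (hw : w ∈ chl G l) : GP G v (w :: l) := by
  cases l with
  | nil => exact absurd rfl (GP_ne G h)
  | cons u t => exact GP.step u w t h hw

lemma T_suffix (m : ℕ) : ∀ l : List V, ∀ x ∈ T G m l, l <:+ x ∧ x.length = m + l.length := by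
  induction m with
  | zero => intro l x hx; simp [T] at hx; subst hx; simp
  | succ m ih =>
    intro l x hx
    simp only [T, Finset.mem_biUnion] at hx
    obtain ⟨w, hw, hx⟩ := hx
    obtain ⟨h1, h2⟩ := ih _ x hx
    refine ⟨(List.suffix_cons w l).trans h1, ?_⟩
    rw [h2]; simp; omega

lemma T_GP {v : V} (m : ℕ) : ∀ l : List V, GP G v l → ∀ x ∈ T G m l, GP G v x := by
  induction m with
  | zero => intro l hl x hx; simp [T] at hx; subst hx; exact hl
  | succ m ih =>
    intro l hl x hx
    simp only [T, Finset.mem_biUnion] at hx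
    obtain ⟨w, hw, hx⟩ := hx
    exact ih _ (GP_cons G hl hw) x hx

lemma T_card (m : ℕ) (l : List V) :
    (T G (m + 1) l).card = ∑ w ∈ chl G l, (T G m (w :: l)).card := by
  simp only [T]
  refine Finset.card_biUnion ?_
  intro a _ b _ hab
  rw [Function.onFun, Finset.disjoint_left]
  intro x hx hx'
  have h1 := (T_suffix G m _ x hx).1
  have h2 := (T_suffix G m _ x hx').1
  have h3 := (List.suffix_of_suffix_length_le h1 h2 (by simp)).eq_of_length (by simp)
  simp at h3
  exact hab h3

lemma chl_nonempty [Infinite V] (hconn : G.Connected) {v : V} {l : List V} (h : GP G v l) :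
    (chl G l).Nonempty := by
  cases l with
  | nil => exact absurd rfl (GP_ne G h)
  | cons u t => exact exists_ch G (GP_good G hconn h)

lemma tree [Infinite V] (hconn : G.Connected) {v : V} (K m : ℕ) : ∀ l : List V, GP G v l →
    (∀ x ∈ T G m l, K ≤ P G x) → K ≤ P G l * (T G m l).card := by
  induction m with
  | zero =>
    intro l _ h
    have := h l (by simp [T])
    simpa [T] using this
  | succ m ih =>
    intro l hl h
    have hc : 0 < (chl G l).card := Finset.card_pos.2 (chl_nonempty G hconn hl)
    have hP : ∀ w, P G (w :: l) = P G l * (chl G l).card := by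
      intro w
      cases l with
      | nil => exact absurd rfl (GP_ne G hl)
      | cons u t => rfl
    have h1 : ∀ w ∈ chl G l, K ≤ (P G l * (chl G l).card) * (T G m (w :: l)).card := by
      intro w hw
      rw [← hP w]
      refine ih _ (GP_cons G hl hw) fun x hx => h x ?_
      simp only [T, Finset.mem_biUnion]
      exact ⟨w, hw, hx⟩
    have h2 := Finset.sum_le_sum h1
    rw [← Finset.mul_sum, ← T_card] at h2
    simp only [Finset.sum_const, smul_eq_mul] at h2
    refine Nat.le_of_mul_le_mul_left (c := (chl G l).card) ?_ hc
    calc _ ≤ _ := h2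
      _ = _ := by ring

lemma bern (c d : ℕ) (hc : 1 ≤ c) (hcd : c ≤ d) : d ^ (c - 1) ≤ c ^ (d - 1) := by
  obtain ⟨x, rfl⟩ := Nat.exists_eq_add_of_le hc
  obtain ⟨y, rfl⟩ := Nat.exists_eq_add_of_le (hc.trans hcd)
  simp only [Nat.add_sub_cancel_left]
  have hxy : x ≤ y := by omega
  rcases Nat.eq_zero_or_pos y with rfl | hy
  · have : x = 0 := by omega
    subst this; simp
  have hy' : (0 : ℝ) < y := by exact_mod_cast hy
  have h1 := rpow_one_add_le_one_add_mul_self (s := (y : ℝ)) (by linarith)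
    (p := (x : ℝ) / y) (by positivity) (by rw [div_le_one hy']; exact_mod_cast hxy)
  rw [div_mul_cancel₀ _ hy'.ne'] at h1
  have h2 := pow_le_pow_left₀ (by positivity) h1 y
  rw [← Real.rpow_natCast ((1 + (y : ℝ)) ^ ((x : ℝ) / y)) y, ← Real.rpow_mul (by positivity),
    div_mul_cancel₀ _ hy'.ne', Real.rpow_natCast] at h2
  exact_mod_cast h2

lemma ch_card_le_of_mem {F : Finset V} {u a : V} (ha : a ∈ F) (hau : G.Adj u a) :
    (ch G F u).card + 1 ≤ G.degree u := by
  have : ch G F u ⊆ (G.neighborFinset u).erase a := by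
    intro y hy
    obtain ⟨h1, h2⟩ := (mem_ch G).1 hy
    refine Finset.mem_erase.2 ⟨?_, by simpa using h1⟩
    rintro rfl
    exact h2.1 (Finset.mem_insert_of_mem ha)
  have h := Finset.card_le_card this
  have hm : a ∈ G.neighborFinset u := by simpa using hau
  rw [Finset.card_erase_of_mem hm, SimpleGraph.card_neighborFinset_eq_degree] at h
  have : 0 < G.degree u := by
    rw [← SimpleGraph.card_neighborFinset_eq_degree]; exact Finset.card_pos.2 ⟨a, hm⟩
  omega

lemma ch_card_le (F : Finset V) (u : V) : (ch G F u).card ≤ G.degree u := by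
  rw [← SimpleGraph.card_neighborFinset_eq_degree]
  exact Finset.card_le_card (Finset.filter_subset _ _)

lemma invariant [Infinite V] (hconn : G.Connected) {Δ : ℕ} (hΔ : 2 ≤ Δ)
    (hreg : ∀ v, G.degree v = Δ)
    (hbd : ∀ S : Finset V, S.Nonempty → Δ ≤ bd G S) {v : V} {l : List V} (h : GP G v l) :
    ∀ u t, l = u :: t → ∃ s, (Δ - 1) ^ s ≤ P G l ^ (Δ - 2) ∧
      Phi G t.toFinset u + t.length * Δ ≤ 2 * (s + t.length) + (if t = [] then 0 else 2) := by
  induction h with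
  | base =>
    intro u t he
    simp only [List.cons.injEq] at he
    obtain ⟨rfl, rfl⟩ := he
    exact ⟨0, by simp [P], by simp [Phi]⟩
  | step u w t hg hw ih =>
    intro u' t' he
    simp only [List.cons.injEq] at he
    obtain ⟨rfl, rfl⟩ := he
    obtain ⟨s, hs1, hs2⟩ := ih u t rfl
    have hstep := Phi_step G hbd (GP_good G hconn hg) hw
    have hcpos : 0 < (ch G t.toFinset u).card := Finset.card_pos.2 ⟨w, hw⟩
    have hPP : P G (w :: u :: t) = P G (u :: t) * (ch G t.toFinset u).card := rfl
    rw [hPP, List.toFinset_cons]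
    set c := (ch G t.toFinset u).card with hcdef
    have hd : Δ - 2 = Δ - 1 - 1 := by omega
    cases hg with
    | base =>
      have hc : c ≤ Δ := by rw [← hreg v]; exact ch_card_le G _ _
      simp only [List.length_nil, if_true] at hs2
      by_cases hc' : c = Δ
      · refine ⟨s + (Δ - 2), ?_, ?_⟩
        · rw [pow_add, mul_pow]
          refine Nat.mul_le_mul hs1 ?_
          exact Nat.pow_le_pow_left (by omega) _
        · simp only [reduceCtorEq, if_false, List.length_cons, List.length_nil]
          omega
      · refine ⟨s + (c - 1), ?_, ?_⟩
        · rw [pow_add, mul_pow]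
          refine Nat.mul_le_mul hs1 ?_
          rw [hd]
          exact bern c (Δ - 1) hcpos (by omega)
        · simp only [reduceCtorEq, if_false, List.length_cons, List.length_nil]
          omega
    | step a _ t0 hg0 hu0 =>
      have hc : c + 1 ≤ Δ := by
        rw [← hreg u]
        exact ch_card_le_of_mem G (a := a) (by simp) ((mem_ch G).1 hu0).1.symm
      refine ⟨s + (c - 1), ?_, ?_⟩
      · rw [pow_add, mul_pow]
        refine Nat.mul_le_mul hs1 ?_
        rw [hd]
        exact bern c (Δ - 1) hcpos (by omega)
      · simp only [reduceCtorEq, if_false, List.length_cons] at hs2 ⊢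
        have : (t0.length + 1 + 1) * Δ = (t0.length + 1) * Δ + Δ := by ring
        omega

lemma P_pos {v : V} {l : List V} (h : GP G v l) : 0 < P G l := by
  induction h with
  | base => simp [P]
  | step u w t hg hw ih => exact Nat.mul_pos ih (Finset.card_pos.2 ⟨w, hw⟩)

lemma P_ge [Infinite V] (hconn : G.Connected) {Δ : ℕ} (hΔ : 2 ≤ Δ)
    (hreg : ∀ v, G.degree v = Δ)
    (hbd : ∀ S : Finset V, S.Nonempty → Δ ≤ bd G S) {v : V} {l : List V} (h : GP G v l)
    (n : ℕ) (hn : l.length = 2 * n + 1) : (Δ - 1) ^ n ≤ P G l := by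
  have hpos := P_pos G h
  rcases Nat.eq_zero_or_pos n with rfl | hn0
  · simpa using Nat.succ_le_of_lt hpos
  rcases Nat.eq_or_lt_of_le hΔ with rfl | hΔ'
  · simpa using Nat.succ_le_of_lt hpos
  have hinv := invariant G hconn hΔ hreg hbd h
  cases h with
  | base => simp at hn; omega
  | step u w t hg hw =>
    obtain ⟨s, h1, h2⟩ := hinv w (u :: t) rfl
    have h3 := Phi_pos G hw
    rw [← List.toFinset_cons] at h3
    have hlen : (u :: t).length = 2 * n := by simpa using hn
    rw [hlen] at h2
    simp only [reduceCtorEq, if_false] at h2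
    obtain ⟨e, rfl⟩ := Nat.exists_eq_add_of_le hΔ
    have h4 : n * e ≤ s := by
      have : 2 * n * (2 + e) = 4 * n + 2 * (n * e) := by ring
      omega
    have he : (2 + e - 2) = e := by omega
    rw [he] at h1
    refine (Nat.pow_le_pow_iff_left (n := e) (by omega)).1 ?_
    rw [← pow_mul]
    exact le_trans (Nat.pow_le_pow_right (by omega) h4) h1

/-! From lists to walks. -/

lemma GP_ray [Infinite V] (hconn : G.Connected) {v : V} {l : List V} (h : GP G v l) :
    ∀ u t, l = u :: t → ∀ f : ℕ → V, f 0 = u → Function.Injective f →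
      (∀ i, G.Adj (f i) (f (i + 1))) → (∀ i, f i ∉ t) →
      ∃ g : ℕ → V, g 0 = v ∧ Function.Injective g ∧ (∀ i, G.Adj (g i) (g (i + 1))) ∧
        (∀ i, g (i + t.length) = f i) ∧ ((List.range l.length).map g).reverse = l := by
  induction h with
  | base =>
    intro u t he f h0 h1 h2 h3
    simp only [List.cons.injEq] at he
    obtain ⟨rfl, rfl⟩ := he
    exact ⟨f, h0, h1, h2, fun i => rfl, by simp [h0]⟩
  | step u w t hg hw ih =>
    intro u' t' he f h0 h1 h2 h3
    simp only [List.cons.injEq] at he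
    obtain ⟨rfl, rfl⟩ := he
    have hgood := GP_good G hconn hg
    obtain ⟨g, g0, g1, g2, g3, g4⟩ := ih u t rfl (fun n => Nat.casesOn n u f) rfl
      (by
        rintro (_ | i) (_ | j) hij
        · rfl
        · exact absurd (by simp at hij; rw [← hij]; simp) (h3 j)
        · exact absurd (by simp at hij; rw [hij]; simp) (h3 i)
        · exact congrArg _ (h1 hij))
      (by
        rintro (_ | i)
        · show G.Adj u (f 0)
          rw [h0]; exact ((mem_ch G).1 hw).1
        · exact h2 i)
      (by
        rintro (_ | i)
        · have := hgood.1; simpa using this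
        · intro hi; exact h3 i (List.mem_cons_of_mem _ hi))
    refine ⟨g, g0, g1, g2, ?_, ?_⟩
    · intro i
      have := g3 (i + 1)
      simp only [List.length_cons]
      rw [← add_assoc, add_right_comm]
      exact this
    · rw [List.length_cons, List.range_succ, List.map_append, List.reverse_append, g4]
      have := g3 1
      simp only [List.length_cons, List.map_cons, List.map_nil, List.reverse_cons,
        List.reverse_nil, List.nil_append, List.singleton_append, List.cons.injEq, and_true]
      rw [add_comm]
      exact this.trans h0

omit [G.LocallyFinite] in
lemma ray_walk (m : ℕ) : ∀ g : ℕ → V, Function.Injective g → (∀ i, G.Adj (g i) (g (i + 1))) →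
    ∃ p : G.Walk (g 0) (g m), p.IsPath ∧ p.length = m ∧ ∀ i, i ≤ m → g i = p.getVert i := by
  induction m with
  | zero => intro g _ _; exact ⟨SimpleGraph.Walk.nil, by simp⟩
  | succ m ih =>
    intro g h1 h2
    obtain ⟨p, p1, p2, p3⟩ := ih (fun i => g (i + 1)) (fun a b h => by simpa using h1 h)
      (fun i => h2 (i + 1))
    refine ⟨SimpleGraph.Walk.cons (h2 0) p, ?_, ?_, ?_⟩
    · rw [SimpleGraph.Walk.cons_isPath_iff]
      refine ⟨p1, ?_⟩
      intro hmem
      rw [SimpleGraph.Walk.mem_support_iff_exists_getVert] at hmem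
      obtain ⟨i, hi, hi'⟩ := hmem
      rw [← p3 i (by omega)] at hi
      have := h1 hi
      omega
    · simp [p2]
    · rintro (_ | i) hi
      · simp
      · simpa using p3 i (by omega)

lemma walks_finite (m : ℕ) : ∀ v : V, {p : Σ w : V, G.Walk v w | p.2.length = m}.Finite := by
  induction m with
  | zero =>
    intro v
    refine (Set.finite_singleton (⟨v, SimpleGraph.Walk.nil⟩ : Σ w : V, G.Walk v w)).subset ?_
    rintro ⟨w, p⟩ hp
    cases p with
    | nil => rfl
    | cons h p => simp at hp
  | succ m ih =>
    intro v
    have : (⋃ u : G.neighborSet v, (fun p : Σ w : V, G.Walk u.1 w =>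
        (⟨p.1, SimpleGraph.Walk.cons u.2 p.2⟩ : Σ w : V, G.Walk v w)) ''
        {p : Σ w : V, G.Walk u.1 w | p.2.length = m}).Finite :=
      Set.finite_iUnion fun u => (ih u.1).image _
    refine this.subset ?_
    rintro ⟨w, p⟩ hp
    cases p with
    | nil => simp at hp
    | @cons _ u _ h p =>
      simp only [Set.mem_iUnion]
      exact ⟨⟨u, h⟩, ⟨w, p⟩, by simpa using hp, rfl⟩

lemma main [Infinite V] (Δ : ℕ) (hΔ : 2 ≤ Δ) (hconn : G.Connected)
    (hreg : ∀ v : V, G.degree v = Δ)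
    (htrans : ∀ v w : V, ∃ γ : G ≃g G, γ v = w) (v : V) (n : ℕ) :
    (Δ - 1) ^ n ≤ fwdSawCount G v (2 * n) := by
  have hbd := bd_ge G hconn Δ hreg htrans
  have h1 := tree G hconn (v := v) ((Δ - 1) ^ n) (2 * n) [v] GP.base (by
    intro x hx
    exact P_ge G hconn hΔ hreg hbd (T_GP G _ _ GP.base x hx) n (by
      simpa using (T_suffix G _ _ x hx).2))
  simp only [P, one_mul] at h1
  refine h1.trans ?_
  unfold fwdSawCount
  set X := {p : Σ w : V, G.Walk v w // p.2.IsPath ∧ p.2.length = 2 * n ∧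
    ∃ f : ℕ → V, Function.Injective f ∧ (∀ i : ℕ, G.Adj (f i) (f (i + 1))) ∧
      ∀ i : ℕ, i ≤ 2 * n → f i = p.2.getVert i} with hX
  haveI : Finite X := ((walks_finite G (2 * n) v).subset (fun p hp => hp.2.1) :
    {p : Σ w : V, G.Walk v w | p.2.IsPath ∧ p.2.length = 2 * n ∧
    ∃ f : ℕ → V, Function.Injective f ∧ (∀ i : ℕ, G.Adj (f i) (f (i + 1))) ∧
      ∀ i : ℕ, i ≤ 2 * n → f i = p.2.getVert i}.Finite).to_subtype
  have hex : ∀ l : T G (2 * n) [v], ∃ p : X,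
      ((List.range (2 * n + 1)).map p.1.2.getVert).reverse = l.1 := by
    rintro ⟨l, hl⟩
    have hgp := T_GP G _ _ GP.base l hl
    have hlen := (T_suffix G _ _ l hl).2
    obtain ⟨u, t, rfl⟩ := List.exists_cons_of_ne_nil (GP_ne G hgp)
    obtain ⟨f, f0, f1, f2, f3⟩ := exists_ray G (GP_good G hconn hgp)
    obtain ⟨g, rfl, g1, g2, g3, g4⟩ := GP_ray G hconn hgp u t rfl f f0 f1 f2
      (fun i => by simpa using f3 i)
    obtain ⟨p, p1, p2, p3⟩ := ray_walk G (2 * n) g g1 g2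
    refine ⟨⟨⟨_, p⟩, p1, p2, g, g1, g2, p3⟩, ?_⟩
    show ((List.range (2 * n + 1)).map p.getVert).reverse = u :: t
    rw [← g4]
    rw [show (u :: t).length = 2 * n + 1 by simpa using hlen]
    congr 1
    refine List.map_congr_left fun i hi => ?_
    rw [List.mem_range] at hi
    exact (p3 i (by omega)).symm
  choose φ hφ using hex
  have hinj : Function.Injective φ := by
    intro a b hab
    apply Subtype.ext
    rw [← hφ a, ← hφ b, hab]
  have := Nat.card_le_card_of_injective φ hinj
  simpa using this

end FwdSaw
end Aux

/-- For an infinite, connected, `Δ`-regular, vertex-transitive simple graph with `Δ ≥ 2`,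
the number of forward-extendable `2n`-step SAWs from any vertex is at least `(Δ−1)ⁿ`. -/
theorem fwd_saw_count_lower_bound {V : Type*} (G : SimpleGraph V) [Infinite V]
    (Δ : ℕ) (hΔ : 2 ≤ Δ)
    (hconn : G.Connected)
    (hreg : ∀ v : V, (G.neighborSet v).ncard = Δ)
    (htrans : ∀ v w : V, ∃ γ : G ≃g G, γ v = w) :
    ∀ (v : V) (n : ℕ), (Δ - 1) ^ n ≤ fwdSawCount G v (2 * n) := by
  intro v n
  have hfin : ∀ v, (G.neighborSet v).Finite := fun v =>
    Set.finite_of_ncard_pos (by rw [hreg v]; omega)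
  letI : G.LocallyFinite := fun v => (hfin v).fintype
  refine FwdSaw.main G Δ hΔ hconn (fun v => ?_) htrans v n
  rw [← hreg v, ← SimpleGraph.card_neighborSet_eq_degree, Set.ncard_eq_toFinset_card',
    Set.toFinset_card]
end
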